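/- arXiv:2108.09321 — 7 statements merged into one kernel-verified Lean document; each statement's English description precedes it below -/
import Mathlib

section
/- Let f be monostable: f ∈ C²([0,1]), f(0) = f(1) = 0, and f''(u) < 0 for all u ∈ [0,1]. Then there exists a number c* < 0 such that for every speed c ≤ c* there exists a monotone increasing traveling profile, i.e. a C² function U : ℝ → [0,1] solving U''(x) + c·U'(x) + f(U(x)) = 0 for all x ∈ ℝ, with U(x) → 0 as x → −∞ and U(x) → 1 as x → +∞. -/
open Set Filter

namespace TW

/-- clamp to the unit interval -/
noncomputable def cl (a : ℝ) : ℝ := max 0 (min a 1)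

lemma cl_nonneg (a : ℝ) : 0 ≤ cl a := le_max_left _ _
lemma cl_le_one (a : ℝ) : cl a ≤ 1 := by unfold cl; simp
lemma cl_of_mem {a : ℝ} (h0 : 0 ≤ a) (h1 : a ≤ 1) : cl a = a := by
  unfold cl; rw [min_eq_left h1, max_eq_right h0]
lemma cl_of_neg {a : ℝ} (h0 : a ≤ 0) : cl a = 0 := by
  unfold cl; rw [min_eq_left (by linarith), max_eq_left h0]
lemma cl_mono {a b : ℝ} (h : a ≤ b) : cl a ≤ cl b := by
  unfold cl; gcongr
lemma cl_lip (a b : ℝ) : |cl a - cl b| ≤ |a - b| := by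
  unfold cl
  calc _ ≤ |min a 1 - min b 1| := by
        have := abs_max_sub_max_le_max 0 (min a 1) 0 (min b 1)
        simpa using this
    _ ≤ _ := by
        have := abs_min_sub_min_le_max a 1 b 1
        simpa using this

lemma glob {E : Type*} [NormedAddCommGroup E] [NormedSpace ℝ E] [CompleteSpace E]
    (F : E → E) (K M : NNReal) (hK : LipschitzWith K F) (hM : ∀ x, ‖F x‖ ≤ M) (x0 : E) :
    ∃ α : ℝ → E, α 0 = x0 ∧ ∀ t, HasDerivAt α (F (α t)) t := by
  have key : ∀ n : ℕ, ∃ α : ℝ → E, α 0 = x0 ∧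
      ∀ t ∈ Ioo (-((n:ℝ)+1)) ((n:ℝ)+1), HasDerivAt α (F (α t)) t := by
    intro n
    have hn : (0:ℝ) ≤ (n:ℝ) + 1 := by positivity
    have hPL : IsPicardLindelof (fun _ : ℝ => F)
        (tmin := -((n:ℝ)+1)) (tmax := (n:ℝ)+1) ⟨0, by constructor <;> linarith⟩ x0
        (M * (n + 1)) 0 M K := by
      apply IsPicardLindelof.of_time_independent
      · intro x _; exact hM x
      · exact hK.lipschitzOnWith
      · simp
    obtain ⟨α, h0, h⟩ := hPL.exists_eq_forall_mem_Icc_hasDerivWithinAt₀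
    refine ⟨α, h0, fun t ht => ?_⟩
    exact (h t (Ioo_subset_Icc_self ht)).hasDerivAt (Icc_mem_nhds ht.1 ht.2)
  choose α h0 h using key
  have agree : ∀ n m : ℕ, n ≤ m → ∀ t ∈ Ioo (-((n:ℝ)+1)) ((n:ℝ)+1), α n t = α m t := by
    intro n m hnm t ht
    have hnm' : (n:ℝ) ≤ m := by exact_mod_cast hnm
    have hn : (0:ℝ) ≤ (n:ℝ) := by positivity
    refine ODE_solution_unique_of_mem_Ioo (v := fun _ => F) (s := fun _ => univ) (K := K)
      (t₀ := 0)
      (fun _ _ => hK.lipschitzOnWith) (by constructor <;> linarith)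
      (fun t ht => ⟨h n t ht, trivial⟩) (fun t ht => ⟨h m t ?_, trivial⟩) ?_ ht
    · exact ⟨by linarith [ht.1], by linarith [ht.2]⟩
    · rw [h0, h0]
  have loc : ∀ (n : ℕ), ∀ t ∈ Ioo (-((n:ℝ)+1)) ((n:ℝ)+1), α (⌈|t|⌉₊) t = α n t := by
    intro n t ht
    have ht' : |t| < (n:ℝ) + 1 := abs_lt.2 ht
    have h1 : |t| ≤ ⌈|t|⌉₊ := Nat.le_ceil _
    have hc : t ∈ Ioo (-(((⌈|t|⌉₊:ℕ):ℝ)+1)) (((⌈|t|⌉₊:ℕ):ℝ)+1) := abs_lt.1 (by linarith)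
    rcases le_total (⌈|t|⌉₊) n with hh | hh
    · exact agree _ _ hh t hc
    · exact (agree _ _ hh t ht).symm
  refine ⟨fun t => α (⌈|t|⌉₊) t, by simp [h0], fun t => ?_⟩
  set n := ⌈|t|⌉₊ with hn
  have h1 : |t| ≤ n := Nat.le_ceil _
  have hc : t ∈ Ioo (-((n:ℝ)+1)) ((n:ℝ)+1) := abs_lt.1 (by linarith)
  have hd := h n t hc
  show HasDerivAt _ (F (α n t)) t
  refine hd.congr_of_eventuallyEq ?_
  filter_upwards [Ioo_mem_nhds hc.1 hc.2] with r hr using loc n r hr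

lemma gron {E : Type*} [NormedAddCommGroup E] [NormedSpace ℝ E]
    (F : E → E) (K : NNReal) (hK : LipschitzWith K F) (α β : ℝ → E)
    (hα : ∀ t, HasDerivAt α (F (α t)) t) (hβ : ∀ t, HasDerivAt β (F (β t)) t) (t : ℝ)
    (ht : 0 ≤ t) : dist (α t) (β t) ≤ dist (α 0) (β 0) * Real.exp (K * t) := by
  have := dist_le_of_trajectories_ODE (v := fun _ => F) (a := 0) (b := t) (fun _ => hK)
    (fun t _ => (hα t).continuousAt.continuousWithinAt) (fun t _ => (hα t).hasDerivWithinAt)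
    (fun t _ => (hβ t).continuousAt.continuousWithinAt) (fun t _ => (hβ t).hasDerivWithinAt)
    le_rfl t ⟨ht, le_rfl⟩
  simpa using this

lemma gron' {E : Type*} [NormedAddCommGroup E] [NormedSpace ℝ E]
    (F : E → E) (K : NNReal) (hK : LipschitzWith K F) (α β : ℝ → E)
    (hα : ∀ t, HasDerivAt α (F (α t)) t) (hβ : ∀ t, HasDerivAt β (F (β t)) t) (t : ℝ) :
    dist (α t) (β t) ≤ dist (α 0) (β 0) * Real.exp (K * |t|) := by
  rcases le_total 0 t with ht | ht
  · rw [abs_of_nonneg ht]; exact gron F K hK α β hα hβ t ht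
  · rw [abs_of_nonpos ht]
    have hrev : ∀ γ : ℝ → E, (∀ t, HasDerivAt γ (F (γ t)) t) →
        ∀ t, HasDerivAt (fun t => γ (-t)) ((fun x => - F x) (γ (-t))) t := by
      intro γ hγ t
      have := (hγ (-t)).scomp t (hasDerivAt_neg t)
      simpa [Function.comp_def] using this
    have := gron (fun x => - F x) K hK.neg (fun t => α (-t)) (fun t => β (-t)) (hrev α hα)
      (hrev β hβ) (-t) (by linarith)
    simpa using this

/-- a function which is nondecreasing wherever it is negative stays nonnegative -/
lemma stay (g g' : ℝ → ℝ) (hg : ∀ t, HasDerivAt g (g' t) t) (h0 : 0 ≤ g 0)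
    (h : ∀ t, g t < 0 → 0 ≤ g' t) : ∀ t, 0 ≤ t → 0 ≤ g t := by
  intro t ht
  by_contra hlt
  push Not at hlt
  have hcont : Continuous g := continuous_iff_continuousAt.2 fun t => (hg t).continuousAt
  set S : Set ℝ := Icc 0 t ∩ g ⁻¹' Ici 0 with hS
  have hSc : IsCompact S := isCompact_Icc.inter_right (isClosed_Ici.preimage hcont)
  have hSn : S.Nonempty := ⟨0, ⟨le_rfl, ht⟩, h0⟩
  obtain ⟨a, haS, hamax⟩ := hSc.exists_isGreatest hSn
  have haS1 : 0 ≤ a ∧ a ≤ t := haS.1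
  have haS2 : 0 ≤ g a := haS.2
  have hmono : MonotoneOn g (Icc a t) := by
    apply monotoneOn_of_deriv_nonneg (convex_Icc a t) hcont.continuousOn
    · intro x _; exact (hg x).differentiableAt.differentiableWithinAt
    · intro x hx
      rw [interior_Icc] at hx
      rw [(hg x).deriv]
      apply h
      by_contra hx0
      push Not at hx0
      have : x ≤ a := hamax ⟨⟨by linarith [hx.1], hx.2.le⟩, hx0⟩
      linarith [hx.1]
  have := hmono ⟨le_rfl, haS1.2⟩ ⟨haS1.2, le_rfl⟩ haS1.2
  linarith


/-- the truncated vector field, in reversed time -/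
noncomputable def Fl (s : ℝ) (g : ℝ → ℝ) (p : ℝ × ℝ) : ℝ × ℝ :=
  (-cl p.2, -s * cl p.2 + g p.1)

/-- the trapping triangle -/
def D (p : ℝ × ℝ) : Prop := 0 ≤ p.2 ∧ p.2 ≤ p.1 ∧ p.1 ≤ 1

/-- hypotheses on the truncated nonlinearity -/
structure Hyp (s L : ℝ) (g : ℝ → ℝ) : Prop where
  L0 : 0 ≤ L
  sL : L + 1 ≤ s
  lip : ∀ a b, |g a - g b| ≤ L * |a - b|
  nn : ∀ u, 0 ≤ g u
  le : ∀ u, g u ≤ L * cl u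
  pos : ∀ u, 0 < u → u < 1 → 0 < g u
  one : g 1 = 0

variable {s L : ℝ} {g : ℝ → ℝ}

lemma Fl_lip (H : Hyp s L g) : LipschitzWith (Real.toNNReal (s + L)) (Fl s g) := by
  have h1 := H.L0
  have h2 := H.sL
  apply LipschitzWith.of_dist_le_mul
  intro p q
  rw [Real.coe_toNNReal _ (by linarith)]
  have hu : |p.1 - q.1| ≤ dist p q := by
    rw [Prod.dist_eq, ← Real.dist_eq]; exact le_max_left _ _
  have hv : |p.2 - q.2| ≤ dist p q := by
    rw [Prod.dist_eq, ← Real.dist_eq]; exact le_max_right _ _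
  have hc := cl_lip p.2 q.2
  have hd : 0 ≤ dist p q := dist_nonneg
  have hg := H.lip p.1 q.1
  rw [Prod.dist_eq]
  simp only [Fl, Real.dist_eq]
  apply max_le
  · rw [show -cl p.2 - -cl q.2 = -(cl p.2 - cl q.2) by ring, abs_neg]
    nlinarith
  · rw [show -s * cl p.2 + g p.1 - (-s * cl q.2 + g q.1)
      = (-s) * (cl p.2 - cl q.2) + (g p.1 - g q.1) by ring]
    refine (abs_add_le _ _).trans ?_
    rw [abs_mul, abs_neg, abs_of_nonneg (by linarith : 0 ≤ s)]
    nlinarith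

lemma Fl_bd (H : Hyp s L g) (p : ℝ × ℝ) : ‖Fl s g p‖ ≤ Real.toNNReal (s + L) := by
  have h1 := H.L0
  have h2 := H.sL
  rw [Real.coe_toNNReal _ (by linarith)]
  have a := cl_nonneg p.2
  have b := cl_le_one p.2
  have c := cl_le_one p.1
  have d := H.le p.1
  have e := H.nn p.1
  rw [Prod.norm_def]
  simp only [Fl, Real.norm_eq_abs]
  apply max_le
  · rw [abs_neg, abs_of_nonneg a]; linarith
  · rw [abs_le]; constructor <;> nlinarith

/-- solution of the truncated system -/
def Sol (s : ℝ) (g : ℝ → ℝ) (α : ℝ → ℝ × ℝ) : Prop := ∀ t, HasDerivAt α (Fl s g (α t)) t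

lemma Sol.shift {α : ℝ → ℝ × ℝ} (h : Sol s g α) (a : ℝ) : Sol s g (fun t => α (t + a)) := by
  intro t
  exact (h (t + a)).comp_add_const t a

lemma Sol.u {α : ℝ → ℝ × ℝ} (h : Sol s g α) (t : ℝ) :
    HasDerivAt (fun t => (α t).1) (-cl (α t).2) t := (h t).fst

lemma Sol.v {α : ℝ → ℝ × ℝ} (h : Sol s g α) (t : ℝ) :
    HasDerivAt (fun t => (α t).2) (-s * cl (α t).2 + g (α t).1) t := (h t).snd

lemma Sol.anti {α : ℝ → ℝ × ℝ} (h : Sol s g α) : Antitone (fun t => (α t).1) := by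
  apply antitone_of_deriv_nonpos (fun t => (h.u t).differentiableAt)
  intro t
  rw [(h.u t).deriv]
  linarith [cl_nonneg (α t).2]

lemma Sol.inv0 (H : Hyp s L g) {α : ℝ → ℝ × ℝ} (h : Sol s g α) (h0 : D (α 0)) (t : ℝ)
    (ht : 0 ≤ t) : D (α t) := by
  have h1 := H.L0
  have h2 := H.sL
  refine ⟨?_, ?_, ?_⟩
  · refine stay (fun t => (α t).2) _ h.v h0.1 (fun t ht => ?_) t ht
    rw [cl_of_neg ht.le]
    have := H.nn (α t).1
    linarith
  · have := stay (fun t => (α t).1 - (α t).2) _ (fun t => (h.u t).sub (h.v t))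
      (by have := h0.2.1; linarith) (fun t ht => ?_) t ht
    · linarith
    · have a := cl_mono (by linarith : (α t).1 ≤ (α t).2)
      have b := H.le (α t).1
      have c := cl_nonneg (α t).1
      nlinarith
  · exact (h.anti ht).trans h0.2.2

lemma Sol.inv (H : Hyp s L g) {α : ℝ → ℝ × ℝ} (h : Sol s g α) (a : ℝ) (h0 : D (α a)) (t : ℝ)
    (ht : a ≤ t) : D (α t) := by
  have := (h.shift a).inv0 H (by simpa using h0) (t - a) (by linarith)
  simpa using this

/-- If `u` stays in a compact part of `(0,1)`, then the time spent there is bounded. -/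
lemma Sol.time (H : Hyp s L g) {α : ℝ → ℝ × ℝ} (h : Sol s g α) {p q : ℝ} (hp : 0 < p)
    (hq : q < 1) : ∃ T : ℝ, ∀ a b, a ≤ b → D (α a) → D (α b) → (α a).1 ≤ q → p ≤ (α b).1 →
      b - a ≤ T := by
  have hgc : Continuous g := by
    have : LipschitzWith (Real.toNNReal L) g := LipschitzWith.of_dist_le_mul fun a b => by
      rw [Real.coe_toNNReal _ H.L0]; exact H.lip a b
    exact this.continuous
  by_cases hpq : p ≤ q
  · obtain ⟨x, hx, hmin⟩ := isCompact_Icc.exists_isMinOn (nonempty_Icc.2 hpq) hgc.continuousOn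
    have hδ : 0 < g x := H.pos x (by linarith [hx.1]) (by linarith [hx.2])
    refine ⟨(s + 1) / g x, fun a b hab ha hb haq hbp => ?_⟩
    rw [le_div_iff₀ hδ]
    have hd : ∀ t, HasDerivAt (fun t => s * (α t).1 - (α t).2 + g x * t)
        (s * (-cl (α t).2) - (-s * cl (α t).2 + g (α t).1) + g x * 1) t := fun t =>
      (((h.u t).const_mul s).sub (h.v t)).add ((hasDerivAt_id t).const_mul (g x))
    have hanti : AntitoneOn (fun t => s * (α t).1 - (α t).2 + g x * t) (Icc a b) := by
      apply antitoneOn_of_deriv_nonpos (convex_Icc a b)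
      · intro t _; exact (hd t).continuousAt.continuousWithinAt
      · intro t _; exact (hd t).differentiableAt.differentiableWithinAt
      · intro t ht
        rw [interior_Icc] at ht
        rw [(hd t).deriv]
        have h3 : (α t).1 ∈ Icc p q :=
          ⟨hbp.trans (h.anti ht.2.le), (h.anti ht.1.le).trans haq⟩
        have := hmin h3
        simp only [mem_ofPred_eq] at this
        linarith
    have h4 := hanti ⟨le_rfl, hab⟩ ⟨hab, le_rfl⟩ hab
    simp only at h4
    have h1 := H.L0
    have h2 := H.sL
    obtain ⟨a1, a2, a3⟩ := ha
    obtain ⟨b1, b2, b3⟩ := hb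
    nlinarith
  · refine ⟨0, fun a b hab ha hb haq hbp => ?_⟩
    exact absurd (hbp.trans ((h.anti hab).trans haq)) hpq

lemma exists_sol (H : Hyp s L g) (x : ℝ × ℝ) : ∃ α, α 0 = x ∧ Sol s g α :=
  glob _ _ _ (Fl_lip H) (Fl_bd H) x

lemma Fl_one (H : Hyp s L g) : Sol s g (fun _ => (1, 0)) := by
  intro t
  have : Fl s g (1, 0) = 0 := by
    simp [Fl, cl_of_neg le_rfl, H.one]
  rw [this]
  exact hasDerivAt_const _ _

lemma Fl_zero (H : Hyp s L g) : Sol s g (fun _ => (0, 0)) := by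
  intro t
  have h0 : g 0 = 0 := le_antisymm (by simpa [cl_of_neg le_rfl] using H.le 0) (H.nn 0)
  have : Fl s g (0, 0) = 0 := by
    simp [Fl, cl_of_neg le_rfl, h0]
  rw [this]
  exact hasDerivAt_const _ _

lemma approx (H : Hyp s L g) (n : ℕ) :
    ∃ α, Sol s g α ∧ (α 0).1 = 1 / 2 ∧ ∀ t, -(n:ℝ) ≤ t → D (α t) := by
  have h1 := H.L0
  have h2 := H.sL
  set K : ℝ := s + L with hKdef
  set ε : ℝ := Real.exp (-(K * n)) / 2 with hε
  have hε0 : 0 < ε := by positivity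
  have hε1 : ε ≤ 1 := by
    have : Real.exp (-(K * n)) ≤ 1 := by
      rw [Real.exp_le_one_iff]
      have : 0 ≤ K * n := mul_nonneg (by linarith) n.cast_nonneg
      linarith
    linarith
  obtain ⟨α, h0, h⟩ := exists_sol H (1, ε)
  have hD0 : D (α 0) := by rw [h0]; exact ⟨hε0.le, hε1, le_rfl⟩
  have hDt : ∀ t, 0 ≤ t → D (α t) := h.inv0 H hD0
  -- u drops below 1
  have hdrop : (α 1).1 < 1 := by
    by_contra hc
    push Not at hc
    have hu : ∀ t ∈ Icc (0:ℝ) 1, (α t).1 = 1 := fun t ht =>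
      le_antisymm (hDt t ht.1).2.2 (hc.trans (h.anti ht.2))
    have hd : HasDerivWithinAt (fun t => (α t).1) (-cl (α 0).2) (Icc 0 1) 0 :=
      (h.u 0).hasDerivWithinAt
    have hd2 : HasDerivWithinAt (fun t => (α t).1) 0 (Icc 0 1) 0 :=
      (hasDerivWithinAt_const (0:ℝ) (Icc (0:ℝ) 1) (1:ℝ)).congr hu (hu 0 (by simp))
    have := (uniqueDiffOn_Icc zero_lt_one 0 (by simp)).eq_deriv _ hd hd2
    rw [h0] at this
    simp only [cl_of_mem hε0.le hε1] at this
    linarith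
  have hreach : ∃ T, 0 ≤ T ∧ (α T).1 ≤ 1 / 2 := by
    by_contra hc
    push Not at hc
    obtain ⟨T, hT⟩ := h.time H (p := 1 / 2) (by norm_num) hdrop
    have hm : 1 ≤ max T 0 + 2 := by have := le_max_right T 0; linarith
    have := hT 1 (max T 0 + 2) hm (hDt _ (by norm_num)) (hDt _ (by linarith)) le_rfl
      (hc _ (by linarith)).le
    have := le_max_left T 0
    linarith
  obtain ⟨T, hT0, hT⟩ := hreach
  have hcont : ContinuousOn (fun t => (α t).1) (Icc 0 T) := fun t _ =>
    (h.u t).continuousAt.continuousWithinAt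
  obtain ⟨τ, hτ, hτe⟩ := intermediate_value_Icc' hT0 hcont
    (show (1/2:ℝ) ∈ Icc _ _ from ⟨hT, by rw [h0]; norm_num⟩)
  have hτn : (n:ℝ) ≤ τ := by
    have hg := gron _ _ (Fl_lip H) α _ h (Fl_one H) τ hτ.1
    rw [Real.coe_toNNReal _ (by linarith), h0] at hg
    have e1 : dist ((1:ℝ), ε) ((1:ℝ), (0:ℝ)) = ε := by
      simp [Prod.dist_eq, Real.dist_eq, abs_of_pos hε0, hε0.le]
    rw [e1] at hg
    have e2 : 1 / 2 ≤ dist (α τ) ((1:ℝ), (0:ℝ)) := by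
      refine le_trans ?_ (le_max_left _ _)
      simp only at hτe
      rw [hτe, Real.dist_eq]
      norm_num [abs_of_neg]
    have e3 : 1 ≤ Real.exp (-(K * n) + K * τ) := by
      rw [Real.exp_add]
      have := e2.trans hg
      rw [hε] at this
      nlinarith
    rw [Real.one_le_exp_iff] at e3
    have : 0 < K := by linarith
    nlinarith
  refine ⟨fun t => α (t + τ), h.shift τ, by simpa using hτe, fun t ht => hDt _ (by linarith)⟩

lemma entire (H : Hyp s L g) :
    ∃ α, Sol s g α ∧ (α 0).1 = 1 / 2 ∧ ∀ t, D (α t) := by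
  choose β hβ hβ0 hβD using approx H
  have hc : IsCompact (Icc (0:ℝ) 1) := isCompact_Icc
  have hm : ∀ n, (β n 0).2 ∈ Icc (0:ℝ) 1 := fun n => by
    obtain ⟨a, b, c⟩ := hβD n 0 (by simp)
    exact ⟨a, b.trans c⟩
  obtain ⟨v, hv, φ, hφ, hlim⟩ := hc.tendsto_subseq hm
  obtain ⟨α, h0, h⟩ := exists_sol H (1 / 2, v)
  refine ⟨α, h, by rw [h0], fun t => ?_⟩
  have hconv0 : Tendsto (fun n => β (φ n) 0) atTop (nhds (α 0)) := by
    rw [h0]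
    have h3 : Tendsto (fun n => (β (φ n) 0).1) atTop (nhds (1 / 2)) := by
      simp only [hβ0]
      exact tendsto_const_nhds
    exact Tendsto.prodMk_nhds h3 hlim
  have hconv : Tendsto (fun n => β (φ n) t) atTop (nhds (α t)) := by
    rw [tendsto_iff_dist_tendsto_zero] at hconv0 ⊢
    refine squeeze_zero (fun _ => dist_nonneg)
      (fun n => gron' _ _ (Fl_lip H) (β (φ n)) α (hβ _) h t) ?_
    simpa using hconv0.mul_const (Real.exp ((Real.toNNReal (s + L) : ℝ) * |t|))
  have hclosed : IsClosed {p : ℝ × ℝ | D p} := by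
    refine IsClosed.inter (isClosed_le continuous_const continuous_snd) (IsClosed.inter
      (isClosed_le continuous_snd continuous_fst) (isClosed_le continuous_fst continuous_const))
  refine hclosed.mem_of_tendsto hconv ?_
  obtain ⟨N, hN⟩ := exists_nat_ge (-t)
  filter_upwards [eventually_ge_atTop N] with n hn
  apply hβD
  have : (N:ℝ) ≤ φ n := by exact_mod_cast hn.trans (hφ.id_le n)
  linarith

lemma Sol.vpos (H : Hyp s L g) {α : ℝ → ℝ × ℝ} (h : Sol s g α) (h0 : (α 0).1 = 1 / 2)
    (hD : ∀ t, D (α t)) (t : ℝ) : 0 < (α t).2 := by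
  rcases (hD t).1.lt_or_eq with h1 | h1
  · exact h1
  exfalso
  have hmin : IsLocalMin (fun t => (α t).2) t := Eventually.of_forall fun r => by
    simp only; rw [← h1]; exact (hD r).1
  have hz := hmin.hasDerivAt_eq_zero (h.v t)
  rw [← h1, cl_of_neg le_rfl] at hz
  have key : ∀ x : ℝ, x ≠ 1 / 2 → Sol s g (fun _ => (x, 0)) → (α t).1 ≠ x := by
    intro x hx hs hxe
    have := gron' _ _ (Fl_lip H) _ _ (h.shift t) hs (-t)
    have e : α t = (x, 0) := Prod.ext hxe h1.symm
    simp only [zero_add, e, dist_self, zero_mul, neg_add_cancel] at this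
    have := dist_le_zero.1 this
    rw [this] at h0
    exact hx h0
  have k1 := key 1 (by norm_num) (Fl_one H)
  have k0 := key 0 (by norm_num) (Fl_zero H)
  obtain ⟨a, b, c⟩ := hD t
  have := H.pos (α t).1 (lt_of_le_of_ne (a.trans b) k0.symm) (lt_of_le_of_ne c k1)
  linarith

lemma Sol.lim_top (H : Hyp s L g) {α : ℝ → ℝ × ℝ} (h : Sol s g α) (h0 : (α 0).1 = 1 / 2)
    (hD : ∀ t, D (α t)) : Tendsto (fun t => (α t).1) atTop (nhds 0) := by
  rw [tendsto_order]
  refine ⟨fun a ha => Eventually.of_forall fun t => ?_, fun a ha => ?_⟩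
  · exact lt_of_lt_of_le ha ((hD t).1.trans (hD t).2.1)
  · obtain ⟨T, hT⟩ := h.time H ha (q := 1 / 2) (by norm_num)
    filter_upwards [eventually_gt_atTop T, eventually_ge_atTop 0] with t h1 h2
    by_contra hc
    push Not at hc
    have := hT 0 t h2 (hD _) (hD _) h0.le hc
    linarith

lemma Sol.lim_bot (H : Hyp s L g) {α : ℝ → ℝ × ℝ} (h : Sol s g α) (h0 : (α 0).1 = 1 / 2)
    (hD : ∀ t, D (α t)) : Tendsto (fun t => (α t).1) atBot (nhds 1) := by
  rw [tendsto_order]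
  refine ⟨fun a ha => ?_, fun a ha => Eventually.of_forall fun t => ?_⟩
  · obtain ⟨T, hT⟩ := h.time H (p := 1 / 2) (by norm_num) ha
    filter_upwards [eventually_lt_atBot (-T), eventually_le_atBot 0] with t h1 h2
    by_contra hc
    push Not at hc
    have := hT t 0 h2 (hD _) (hD _) hc h0.ge
    linarith
  · exact lt_of_le_of_lt (hD t).2.2 ha

end TW

/-- In the monostable case (A1), there is a threshold speed `c* < 0` such
that for every `c ≤ c*` a monotone increasing traveling profile of speed `c` exists. -/
theorem monostable_traveling_profiles_exist
    (f : ℝ → ℝ) (hf : ContDiff ℝ 2 f)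
    (hf0 : f 0 = 0) (hf1 : f 1 = 0)
    (hf'' : ∀ u ∈ Icc (0:ℝ) 1, deriv (deriv f) u < 0) :
    ∃ cstar : ℝ, cstar < 0 ∧
      ∀ c ≤ cstar, ∃ U : ℝ → ℝ,
        ContDiff ℝ 2 U ∧ (∀ x, U x ∈ Icc (0:ℝ) 1) ∧ StrictMono U ∧
        (∀ x, deriv (deriv U) x + c * deriv U x + f (U x) = 0) ∧
        Tendsto U atBot (nhds 0) ∧ Tendsto U atTop (nhds 1) := by
  have hfd : Differentiable ℝ f := hf.differentiable (by norm_num)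
  have hfd' : Continuous (deriv f) := hf.continuous_deriv (by norm_num)
  obtain ⟨L, hL⟩ := (isCompact_Icc (a := (0:ℝ)) (b := 1)).exists_bound_of_continuousOn
    hfd'.continuousOn
  have hL0 : 0 ≤ L := (norm_nonneg _).trans (hL 0 (by simp))
  have hlip : ∀ a ∈ Icc (0:ℝ) 1, ∀ b ∈ Icc (0:ℝ) 1, |f a - f b| ≤ L * |a - b| := by
    intro a ha b hb
    exact (convex_Icc (0:ℝ) 1).norm_image_sub_le_of_norm_deriv_le
      (fun x _ => hfd x) hL hb ha
  have hconc : StrictConcaveOn ℝ (Icc (0:ℝ) 1) f :=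
    strictConcaveOn_of_deriv2_neg' (convex_Icc 0 1) hf.continuous.continuousOn hf''
  have hpos : ∀ u, 0 < u → u < 1 → 0 < f u := by
    intro u h0 h1
    have := hconc.2 (show (0:ℝ) ∈ Icc (0:ℝ) 1 by simp) (show (1:ℝ) ∈ Icc (0:ℝ) 1 by simp)
      (by norm_num) (show 0 < 1 - u by linarith) h0 (by ring)
    simpa [hf0, hf1] using this
  have hnn : ∀ u ∈ Icc (0:ℝ) 1, 0 ≤ f u := by
    intro u hu
    rcases hu.1.eq_or_lt with h | h
    · rw [← h, hf0]
    rcases hu.2.eq_or_lt with h' | h'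
    · rw [h', hf1]
    exact (hpos u h h').le
  have hcl : ∀ u, TW.cl u ∈ Icc (0:ℝ) 1 := fun u => ⟨TW.cl_nonneg u, TW.cl_le_one u⟩
  refine ⟨-(L + 1), by linarith, fun c hc => ?_⟩
  have H : TW.Hyp (-c) L (fun u => f (TW.cl u)) :=
    { L0 := hL0
      sL := by linarith
      lip := fun a b => (hlip _ (hcl a) _ (hcl b)).trans
        (mul_le_mul_of_nonneg_left (TW.cl_lip a b) hL0)
      nn := fun u => hnn _ (hcl u)
      le := fun u => by
        have := hlip _ (hcl u) 0 (by simp)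
        rw [hf0, sub_zero, sub_zero, abs_of_nonneg (TW.cl_nonneg u)] at this
        exact (le_abs_self _).trans this
      pos := fun u h0 h1 => by rw [TW.cl_of_mem h0.le h1.le]; exact hpos u h0 h1
      one := by rw [TW.cl_of_mem zero_le_one le_rfl, hf1] }
  obtain ⟨α, h, h0, hD⟩ := TW.entire H
  have hvp := h.vpos H h0 hD
  have hu : ∀ x, HasDerivAt (fun x => (α (-x)).1) (α (-x)).2 x := by
    intro x
    have := (h.u (-x)).scomp x (hasDerivAt_neg x)
    obtain ⟨a, b, e⟩ := hD (-x)
    rw [TW.cl_of_mem a (b.trans e)] at this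
    simpa [Function.comp_def] using this
  have hv : ∀ x, HasDerivAt (fun x => (α (-x)).2)
      (-c * (α (-x)).2 - f (α (-x)).1) x := by
    intro x
    have := (h.v (-x)).scomp x (hasDerivAt_neg x)
    obtain ⟨a, b, e⟩ := hD (-x)
    simp only [TW.cl_of_mem a (b.trans e), TW.cl_of_mem (a.trans b) e] at this
    have e2 : (-1:ℝ) • (-(-c) * (α (-x)).2 + f (α (-x)).1)
        = -c * (α (-x)).2 - f (α (-x)).1 := by
      rw [smul_eq_mul]; ring
    rw [e2] at this
    exact this
  have du : deriv (fun x => (α (-x)).1) = fun x => (α (-x)).2 := funext fun x => (hu x).deriv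
  have dv : deriv (fun x => (α (-x)).2) = fun x => -c * (α (-x)).2 - f (α (-x)).1 :=
    funext fun x => (hv x).deriv
  have cu : Continuous (fun x => (α (-x)).1) :=
    continuous_iff_continuousAt.2 fun x => (hu x).continuousAt
  have cv : Continuous (fun x => (α (-x)).2) :=
    continuous_iff_continuousAt.2 fun x => (hv x).continuousAt
  refine ⟨fun x => (α (-x)).1, ?_, ?_, ?_, ?_, ?_, ?_⟩
  · rw [show (2 : WithTop ℕ∞) = 1 + 1 by norm_num, contDiff_succ_iff_deriv]
    refine ⟨fun x => (hu x).differentiableAt, by simp, ?_⟩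
    rw [du, contDiff_one_iff_deriv]
    refine ⟨fun x => (hv x).differentiableAt, ?_⟩
    rw [dv]
    exact (continuous_const.mul cv).sub (hf.continuous.comp cu)
  · intro x
    obtain ⟨a, b, e⟩ := hD (-x)
    exact ⟨a.trans b, e⟩
  · apply strictMono_of_deriv_pos
    intro x
    rw [du]
    exact hvp _
  · intro x
    rw [du, dv]
    ring
  · exact (h.lim_top H h0 hD).comp tendsto_neg_atBot_atTop
  · exact (h.lim_bot H h0 hD).comp tendsto_neg_atTop_atBot
end

section
/- Let f be bistable: f ∈ C²([0,1]), f(0) = f(1) = 0, f'(0) < 0, f'(1) < 0, and f vanishes at exactly one interior point u* ∈ (0,1), where f'(u*) > 0. Then there exists a unique speed c* ∈ ℝ for which a traveling profile exists, i.e. a C² function U : ℝ → [0,1] solving U'' + c*·U' + f(U) = 0 with U(−∞) = 0 and U(+∞) = 1; moreover this profile is monotone increasing and is unique up to translation, and for no other speed c ≠ c* does such a profile exist. -/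
open Set Filter

/-- A traveling profile of speed `c` for `u_t = f(u) + u_xx`:
a C² function `U : ℝ → [0,1]` with `U'' + cU' + f(U) = 0`, `U(-∞) = 0`, `U(+∞) = 1`. -/
def IsTravelingProfile (f : ℝ → ℝ) (c : ℝ) (U : ℝ → ℝ) : Prop :=
  ContDiff ℝ 2 U ∧ (∀ x, U x ∈ Icc (0:ℝ) 1) ∧
  (∀ x, deriv (deriv U) x + c * deriv U x + f (U x) = 0) ∧
  Tendsto U atBot (nhds 0) ∧ Tendsto U atTop (nhds 1)

section
open Set Filter Topology NNReal
namespace TW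

structure Sol_s1 (g : ℝ → ℝ) (c : ℝ) (U V : ℝ → ℝ) : Prop where
  dU : ∀ x, HasDerivAt U (V x) x
  dV : ∀ x, HasDerivAt V (-c * V x - g (U x)) x

def fld (g : ℝ → ℝ) (c : ℝ) (z : ℝ × ℝ) : ℝ × ℝ := (z.2, -c * z.2 - g z.1)

lemma fld_lip {g : ℝ → ℝ} {K : ℝ≥0} (hg : LipschitzWith K g) (c : ℝ) {L : ℝ≥0}
    (hL : 1 + |c| + K ≤ L) : LipschitzWith L (fld g c) := by
  apply LipschitzWith.of_dist_le_mul
  intro z w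
  have h1 : |z.1 - w.1| ≤ dist z w := by
    rw [Prod.dist_eq, Real.dist_eq, Real.dist_eq]; exact le_max_left _ _
  have h2 : |z.2 - w.2| ≤ dist z w := by
    rw [Prod.dist_eq, Real.dist_eq, Real.dist_eq]; exact le_max_right _ _
  have h3 := hg.dist_le_mul z.1 w.1
  rw [Real.dist_eq, Real.dist_eq] at h3
  have hd : 0 ≤ dist z w := dist_nonneg
  have hK : (0:ℝ) ≤ K := K.2
  have hc := abs_nonneg c
  rw [Prod.dist_eq, Real.dist_eq, Real.dist_eq]
  apply max_le
  · simp only [fld]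
    nlinarith
  · simp only [fld]
    have : -c * z.2 - g z.1 - (-c * w.2 - g w.1) = -c * (z.2 - w.2) - (g z.1 - g w.1) := by ring
    rw [this]
    calc |-c * (z.2 - w.2) - (g z.1 - g w.1)| ≤ |-c * (z.2 - w.2)| + |g z.1 - g w.1| := abs_sub _ _
      _ = |c| * |z.2 - w.2| + |g z.1 - g w.1| := by rw [abs_mul, abs_neg]
      _ ≤ |c| * dist z w + K * dist z w := by
        have := mul_le_mul_of_nonneg_left h2 hc
        have := mul_le_mul_of_nonneg_left h1 hK
        linarith
      _ ≤ L * dist z w := by nlinarith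

namespace Sol_s1
variable {g : ℝ → ℝ} {K : ℝ≥0} {c : ℝ} {U V U' V' : ℝ → ℝ}

lemma pair (h : Sol_s1 g c U V) (x : ℝ) :
    HasDerivAt (fun x => (U x, V x)) (fld g c (U x, V x)) x := (h.dU x).prodMk (h.dV x)

lemma contU (h : Sol_s1 g c U V) : Continuous U :=
  continuous_iff_continuousAt.2 fun x => (h.dU x).continuousAt
lemma contV (h : Sol_s1 g c U V) : Continuous V :=
  continuous_iff_continuousAt.2 fun x => (h.dV x).continuousAt

lemma unique (hg : LipschitzWith K g) (h : Sol_s1 g c U V) (h' : Sol_s1 g c U' V') {x₀ : ℝ}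
    (hU : U x₀ = U' x₀) (hV : V x₀ = V' x₀) : U = U' ∧ V = V' := by
  have hl := fld_lip hg c (L := ⟨1 + |c| + K, by positivity⟩) le_rfl
  have := ODE_solution_unique_univ (v := fun _ => fld g c) (s := fun _ => univ) (t₀ := x₀)
    (fun t => hl.lipschitzOnWith) (fun t => ⟨h.pair t, trivial⟩) (fun t => ⟨h'.pair t, trivial⟩)
    (by simp [hU, hV])
  constructor
  · ext x; exact congrArg Prod.fst (congrFun this x)
  · ext x; exact congrArg Prod.snd (congrFun this x)

lemma shift_s1 (h : Sol_s1 g c U V) (s : ℝ) : Sol_s1 g c (fun x => U (x + s)) (fun x => V (x + s)) :=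
  ⟨fun x => (h.dU (x + s)).comp_add_const x s, fun x => (h.dV (x + s)).comp_add_const x s⟩

lemma reflect (h : Sol_s1 g c U V) :
    Sol_s1 (fun w => -g (1 - w)) (-c) (fun x => 1 - U (-x)) (fun x => V (-x)) := by
  constructor
  · intro x
    have := ((h.dU (-x)).scomp x (hasDerivAt_neg x)).const_sub 1
    convert! this using 1
    simp
  · intro x
    have := ((h.dV (-x)).scomp x (hasDerivAt_neg x))
    convert! this using 1
    simp; ring

lemma const (c : ℝ) {u : ℝ} (hu : g u = 0) : Sol_s1 g c (fun _ => u) (fun _ => 0) :=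
  ⟨fun x => hasDerivAt_const x u, fun x => by simpa [hu] using hasDerivAt_const x (0:ℝ)⟩

lemma dep (hg : LipschitzWith K g) (h : Sol_s1 g c U V) {T ε : ℝ} (hT : 0 ≤ T) (hε : 0 < ε) :
    ∃ δ > 0, ∀ c' U' V', Sol_s1 g c' U' V' → U' 0 = U 0 → |c' - c| < δ → |V' 0 - V 0| < δ →
      ∀ x ∈ Icc 0 T, |U' x - U x| < ε ∧ |V' x - V x| < ε := by
  obtain ⟨R, hR⟩ := (isCompact_Icc (a := (0:ℝ)) (b := T)).exists_bound_of_continuousOn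
    h.contV.continuousOn
  have hR0 : 0 ≤ R := (norm_nonneg _).trans (hR 0 ⟨le_rfl, hT⟩)
  set L : ℝ≥0 := ⟨1 + (|c| + 1) + K, by positivity⟩ with hLdef
  have hLpos : (0:ℝ) < L := by
    change (0:ℝ) < 1 + (|c| + 1) + K
    positivity
  set C : ℝ := Real.exp (L * T) + R / L * Real.exp (L * T) with hC
  have hCpos : 0 < C := by positivity
  refine ⟨min 1 (ε / (2 * C)), by positivity, ?_⟩
  intro c' U' V' h' h0 hc hp
  set δ := min 1 (ε / (2 * C)) with hδ
  have hδ1 : δ ≤ 1 := min_le_left _ _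
  have hδ2 : δ * C ≤ ε / 2 := by
    have : δ ≤ ε / (2 * C) := min_le_right _ _
    calc δ * C ≤ ε / (2 * C) * C := by gcongr
      _ = ε / 2 := by field_simp
  have hδ0 : 0 < δ := by positivity
  have hl := fld_lip hg c' (L := L) (by
    have : |c'| ≤ |c| + 1 := by
      have := abs_sub_abs_le_abs_sub c' c
      linarith
    change 1 + |c'| + (K:ℝ) ≤ 1 + (|c| + 1) + K
    linarith)
  have key := dist_le_of_approx_trajectories_ODE (v := fun _ => fld g c') (fun _ => hl)
    (f := fun x => (U' x, V' x)) (g := fun x => (U x, V x)) (a := 0) (b := T)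
    (f' := fun x => fld g c' (U' x, V' x)) (g' := fun x => fld g c (U x, V x))
    (εf := 0) (εg := δ * R) (δ := δ)
    (h'.contU.prodMk h'.contV).continuousOn
    (fun t _ => (h'.pair t).hasDerivWithinAt) (fun t _ => by simp)
    (h.contU.prodMk h.contV).continuousOn
    (fun t _ => (h.pair t).hasDerivWithinAt) (fun t ht => by
      have h1 : dist (fld g c (U t, V t)) (fld g c' (U t, V t)) = |c' - c| * |V t| := by
        simp only [fld, Prod.dist_eq, dist_self, Real.dist_eq]
        rw [← abs_mul, max_eq_right (abs_nonneg _)]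
        congr 1; ring
      rw [h1]
      have := hR t ⟨ht.1, ht.2.le⟩
      rw [Real.norm_eq_abs] at this
      gcongr)
    (by
      simp only [Prod.dist_eq, Real.dist_eq, h0, sub_self, abs_zero]
      exact max_le hδ0.le hp.le)
  intro x hx
  have hk := key x hx
  have hb : gronwallBound δ L (0 + δ * R) (x - 0) ≤ δ * C := by
    rw [gronwallBound_of_K_ne_0 hLpos.ne']
    have hexp : Real.exp (L * (x - 0)) ≤ Real.exp (L * T) := by
      apply Real.exp_le_exp.2
      have := hx.2
      rw [sub_zero]
      gcongr
    have h2 : (0 + δ * R) / L * (Real.exp (L * (x - 0)) - 1) ≤ δ * R / L * Real.exp (L * T) := by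
      rw [zero_add]
      gcongr
      linarith
    calc δ * Real.exp (L * (x - 0)) + (0 + δ * R) / L * (Real.exp (L * (x - 0)) - 1)
        ≤ δ * Real.exp (L * T) + δ * R / L * Real.exp (L * T) := by gcongr
      _ = δ * C := by rw [hC]; ring
  have hd : dist ((U' x, V' x) : ℝ × ℝ) (U x, V x) < ε := by linarith
  rw [Prod.dist_eq, max_lt_iff, Real.dist_eq, Real.dist_eq] at hd
  exact hd

end Sol_s1
end TW

end

section
open Set Filter Topology NNReal
namespace TW

lemma clamp_lip (R : ℝ) (x y : ℝ) : |max (-R) (min R x) - max (-R) (min R y)| ≤ |x - y| := by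
  have h1 := abs_max_sub_max_le_abs (min R x) (min R y) (-R)
  have h2 := abs_min_sub_min_le_max R x R y
  rw [max_comm (-R), max_comm (-R)]
  refine h1.trans (h2.trans ?_)
  simp

lemma clamp_abs {R : ℝ} (hR : 0 ≤ R) (x : ℝ) : |max (-R) (min R x)| ≤ R := by
  rw [abs_le]
  exact ⟨le_max_left _ _, max_le (by linarith) (min_le_left _ _)⟩

lemma clamp_eq {R : ℝ} {x : ℝ} (h : |x| ≤ R) : max (-R) (min R x) = x := by
  rw [abs_le] at h
  rw [min_eq_right h.2, max_eq_right h.1]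

lemma exists_local {g : ℝ → ℝ} {K : ℝ≥0} {M : ℝ} (hg : LipschitzWith K g) (hM : ∀ u, |g u| ≤ M)
    (c a p : ℝ) {T : ℝ} (hT : 0 < T) :
    ∃ U V : ℝ → ℝ, U 0 = a ∧ V 0 = p ∧ ∀ x ∈ Ioo (-T) T,
      HasDerivAt U (V x) x ∧ HasDerivAt V (-c * V x - g (U x)) x := by
  have hM0 : 0 ≤ M := (abs_nonneg _).trans (hM 0)
  set E := Real.exp (|c| * T) with hE
  have hE0 : 0 < E := Real.exp_pos _
  have hexp : ∀ t ∈ Icc (-T) T, Real.exp (c * t) ≤ E ∧ Real.exp (-c * t) ≤ E := by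
    intro t ht
    have h1 : |t| ≤ T := abs_le.2 ht
    have h2 : |c * t| ≤ |c| * T := by rw [abs_mul]; gcongr
    have h3 := abs_le.1 h2
    constructor <;> apply Real.exp_le_exp.2 <;> linarith
  set R := |p| + E * M * T with hR
  have hR0 : 0 ≤ R := by positivity
  set F : ℝ → ℝ × ℝ → ℝ × ℝ := fun t z =>
    (Real.exp (-c * t) * max (-R) (min R z.2), -(Real.exp (c * t) * g z.1)) with hF
  have hPL : IsPicardLindelof F (tmin := -T) (tmax := T) ⟨0, by constructor <;> linarith⟩ (a, p)
      ⟨E * (R + M) * T, by positivity⟩ 0 ⟨E * (R + M), by positivity⟩ ⟨E * (1 + K), by positivity⟩ := by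
    constructor
    · intro t ht
      obtain ⟨e1, e2⟩ := hexp t ht
      apply LipschitzWith.lipschitzOnWith
      apply LipschitzWith.of_dist_le_mul
      intro z w
      have h1 : |z.1 - w.1| ≤ dist z w := by
        rw [Prod.dist_eq, Real.dist_eq, Real.dist_eq]; exact le_max_left _ _
      have h2 : |z.2 - w.2| ≤ dist z w := by
        rw [Prod.dist_eq, Real.dist_eq, Real.dist_eq]; exact le_max_right _ _
      have h3 := hg.dist_le_mul z.1 w.1
      rw [Real.dist_eq, Real.dist_eq] at h3
      have hd : 0 ≤ dist z w := dist_nonneg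
      have hK : (0:ℝ) ≤ K := K.2
      change _ ≤ (E * (1 + K)) * dist z w
      rw [Prod.dist_eq, Real.dist_eq, Real.dist_eq]
      apply max_le
      · simp only [hF]
        rw [← mul_sub, abs_mul, abs_of_pos (Real.exp_pos _)]
        calc _ ≤ E * dist z w := by
              gcongr
              exact (clamp_lip R _ _).trans h2
          _ ≤ _ := by
            have : 0 ≤ E * K * dist z w := by positivity
            nlinarith
      · simp only [hF]
        rw [neg_sub_neg, ← mul_sub, abs_mul, abs_of_pos (Real.exp_pos _), abs_sub_comm]
        calc _ ≤ E * (K * dist z w) := by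
              gcongr
              exact h3.trans (by gcongr)
          _ ≤ _ := by
            have : 0 ≤ E * dist z w := by positivity
            nlinarith
    · intro z _
      apply Continuous.continuousOn
      simp only [hF]
      fun_prop
    · intro t ht z _
      obtain ⟨e1, e2⟩ := hexp t ht
      change _ ≤ E * (R + M)
      rw [Prod.norm_def, Real.norm_eq_abs, Real.norm_eq_abs]
      apply max_le
      · simp only [hF]
        rw [abs_mul, abs_of_pos (Real.exp_pos _)]
        have := clamp_abs hR0 z.2
        calc _ ≤ E * R := by gcongr
          _ ≤ _ := by nlinarith
      · simp only [hF]
        rw [abs_neg, abs_mul, abs_of_pos (Real.exp_pos _)]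
        have := hM z.1
        calc _ ≤ E * M := by gcongr
          _ ≤ _ := by nlinarith
    · change E * (R + M) * max (T - 0) (0 - -T) ≤ E * (R + M) * T - 0
      simp
  obtain ⟨α, hα0, hα⟩ := hPL.exists_eq_forall_mem_Icc_hasDerivWithinAt₀
  change α 0 = _ at hα0
  have hw : ∀ t ∈ Icc (-T) T, |(α t).2| ≤ R := by
    intro t ht
    have h0 : (0:ℝ) ∈ Icc (-T) T := by constructor <;> linarith
    have := (convex_Icc (-T) T).norm_image_sub_le_of_norm_hasDerivWithin_le (f := fun t => (α t).2)
      (C := E * M)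
      (fun x hx => (hα x hx).snd) (fun x hx => by
        rw [Real.norm_eq_abs]
        simp only [hF]
        rw [abs_neg, abs_mul, abs_of_pos (Real.exp_pos _)]
        have := hM (α x).1
        have := (hexp x hx).1
        gcongr) h0 ht
    simp only [hα0, Real.norm_eq_abs, sub_zero] at this
    have h1 : |t| ≤ T := abs_le.2 ht
    have h2 := abs_sub_abs_le_abs_sub (α t).2 p
    have h3 : E * M * |t| ≤ E * M * T := by gcongr
    linarith
  refine ⟨fun x => (α x).1, fun x => Real.exp (-c * x) * (α x).2, by simp [hα0], by simp [hα0], ?_⟩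
  intro x hx
  have hx' := Ioo_subset_Icc_self hx
  have hd := (hα x hx').hasDerivAt (Icc_mem_nhds hx.1 hx.2)
  have h1 := hd.fst
  have h2 := hd.snd
  simp only [hF] at h1 h2
  rw [clamp_eq (hw x hx')] at h1
  refine ⟨h1, ?_⟩
  have h3 : HasDerivAt (fun x => Real.exp (-c * x)) (Real.exp (-c * x) * (-c)) x := by
    have := ((hasDerivAt_id x).const_mul (-c)).exp
    simpa using this
  convert! h3.mul h2 using 1
  have : Real.exp (-c * x) * Real.exp (c * x) = 1 := by rw [← Real.exp_add]; simp
  linear_combination (g (α x).1) * this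

lemma Sol_s1.exists {g : ℝ → ℝ} {K : ℝ≥0} {M : ℝ} (hg : LipschitzWith K g) (hM : ∀ u, |g u| ≤ M)
    (c a p : ℝ) : ∃ U V : ℝ → ℝ, Sol_s1 g c U V ∧ U 0 = a ∧ V 0 = p := by
  have := fun T : ℝ => fun hT : 0 < T => exists_local hg hM c a p hT
  choose! U V hU hV hd using this
  have hl := fld_lip hg c (L := ⟨1 + |c| + K, by positivity⟩) le_rfl
  have huniq : ∀ S T, 0 < S → S ≤ T → ∀ x ∈ Ioo (-S) S, U T x = U S x ∧ V T x = V S x := by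
    intro S T hS hST x hx
    have hT : 0 < T := by linarith
    have := ODE_solution_unique_of_mem_Ioo (v := fun _ => fld g c) (s := fun _ => univ) (t₀ := 0)
      (a := -S) (b := S) (f := fun x => (U T x, V T x)) (g := fun x => (U S x, V S x))
      (fun t _ => hl.lipschitzOnWith) (by constructor <;> linarith)
      (fun t ht => ⟨(hd T hT t ⟨by linarith [ht.1], by linarith [ht.2]⟩).1.prodMk
        (hd T hT t ⟨by linarith [ht.1], by linarith [ht.2]⟩).2, trivial⟩)
      (fun t ht => ⟨(hd S hS t ht).1.prodMk (hd S hS t ht).2, trivial⟩)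
      (by simp [hU T hT, hU S hS, hV T hT, hV S hS]) hx
    simpa using this
  have hev : ∀ x : ℝ, ∀ᶠ y in 𝓝 x, U (|y| + 1) y = U (|x| + 2) y ∧ V (|y| + 1) y = V (|x| + 2) y := by
    intro x
    filter_upwards [Metric.ball_mem_nhds x one_pos] with y hy
    rw [Metric.mem_ball, Real.dist_eq] at hy
    have h1 : |y| - |x| ≤ |y - x| := abs_sub_abs_le_abs_sub y x
    have h2 := huniq (|y| + 1) (|x| + 2) (by positivity) (by linarith) y
      (abs_lt.1 (by linarith))
    exact ⟨h2.1.symm, h2.2.symm⟩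
  refine ⟨fun x => U (|x| + 1) x, fun x => V (|x| + 1) x, ⟨?_, ?_⟩, ?_, ?_⟩
  · intro x
    have h := (hd (|x| + 2) (by positivity) x (abs_lt.1 (by linarith))).1
    rw [(hev x).self_of_nhds.2]
    exact h.congr_of_eventuallyEq ((hev x).mono fun y hy => hy.1)
  · intro x
    have h := (hd (|x| + 2) (by positivity) x (abs_lt.1 (by linarith))).2
    have e := (hev x).self_of_nhds
    simp only [e.1, e.2]
    exact h.congr_of_eventuallyEq ((hev x).mono fun y hy => hy.2)
  · exact hU _ (by positivity)
  · exact hV _ (by positivity)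
end TW

end

section
open Set Filter Topology NNReal
namespace TW

structure Half (g : ℝ → ℝ) (a b : ℝ) (K : ℝ≥0) (M : ℝ) : Prop where
  lip : LipschitzWith K g
  bd : ∀ u, |g u| ≤ M
  ab : a < b
  ga : g a = 0
  gb : g b = 0
  pos : ∀ u ∈ Ioo a b, 0 < g u

def EscA (b : ℝ) (U V : ℝ → ℝ) : Prop := ∃ T > 0, b < U T ∧ ∀ x ∈ Icc 0 T, 0 < V x
def EscB (b : ℝ) (U V : ℝ → ℝ) : Prop := ∃ T > 0, V T < 0 ∧ ∀ x ∈ Icc 0 T, U x < b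
def Stay (b : ℝ) (U V : ℝ → ℝ) : Prop := ∀ x ≥ 0, 0 < V x ∧ U x < b

lemma EscA.not_B {b : ℝ} {U V : ℝ → ℝ} (h : EscA b U V) : ¬ EscB b U V := by
  rintro ⟨T, hT, h1, h2⟩
  obtain ⟨S, hS, h3, h4⟩ := h
  rcases le_total S T with h | h
  · linarith [h2 S ⟨hS.le, h⟩]
  · linarith [h4 T ⟨hT.le, h⟩]

lemma EscA.not_stay {b : ℝ} {U V : ℝ → ℝ} (h : EscA b U V) : ¬ Stay b U V := by
  obtain ⟨S, hS, h3, h4⟩ := h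
  intro h
  linarith [(h S hS.le).2]

section
variable {g : ℝ → ℝ} {a b : ℝ} {K : ℝ≥0} {M c : ℝ} {U V : ℝ → ℝ}

/-- monotone from V -/
lemma Sol_s1.mono (h : Sol_s1 g c U V) {s t : ℝ} (hst : s < t) (hV : ∀ x ∈ Ico s t, 0 < V x) :
    StrictMonoOn U (Icc s t) := by
  apply strictMonoOn_of_deriv_pos (convex_Icc _ _) h.contU.continuousOn
  intro x hx
  rw [interior_Icc] at hx
  rw [(h.dU x).deriv]
  exact hV x ⟨hx.1.le, hx.2⟩

lemma neg_after {φ : ℝ → ℝ} {d x : ℝ} (h : HasDerivAt φ d x) (hd : d < 0) {S : Set ℝ}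
    (hS : S ∈ 𝓝 x) : ∃ y > x, φ y < φ x ∧ Icc x y ⊆ S := by
  have h1 := (hasDerivAt_iff_tendsto_slope.1 h).eventually_lt_const hd
  have h2 : ∀ᶠ y in 𝓝[>] x, slope φ x y < 0 :=
    h1.filter_mono (nhdsWithin_mono _ fun y hy => ne_of_gt hy)
  obtain ⟨ε, hε, hball⟩ := Metric.mem_nhds_iff.1 hS
  have h3 : ∀ᶠ y in 𝓝[>] x, y < x + ε := 
    (eventually_lt_nhds (by linarith)).filter_mono nhdsWithin_le_nhds
  obtain ⟨y, hy1, hy2, hy3⟩ := (h2.and (h3.and self_mem_nhdsWithin)).exists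
  have hy3 : x < y := hy3
  refine ⟨y, hy3, ?_, ?_⟩
  · rw [slope_def_field, div_neg_iff] at hy1
    rcases hy1 with h | h
    · linarith
    · linarith
  · intro z hz
    apply hball
    rw [Metric.mem_ball, Real.dist_eq, abs_lt]
    constructor <;> linarith [hz.1, hz.2]

lemma Sol_s1.exit (h : Sol_s1 g c U V) (hU0 : U 0 < b) (hV0 : 0 < V 0) :
    Stay b U V ∨ EscA b U V ∨
      ∃ τ > 0, (∀ x ∈ Ico 0 τ, 0 < V x ∧ U x < b) ∧ V τ = 0 ∧ U τ ≤ b := by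
  by_cases hs : Stay b U V
  · exact Or.inl hs
  right
  set C : Set ℝ := {x | 0 ≤ x ∧ (V x ≤ 0 ∨ b ≤ U x)} with hC
  have hCc : IsClosed C := by
    apply isClosed_le continuous_const continuous_id |>.inter
    exact (isClosed_le h.contV continuous_const).union (isClosed_le continuous_const h.contU)
  have hCne : C.Nonempty := by
    simp only [Stay, not_forall] at hs
    obtain ⟨x, hx, hx2⟩ := hs
    refine ⟨x, hx, ?_⟩
    by_contra hcon
    push Not at hcon
    exact hx2 hcon
  have hCb : BddBelow C := ⟨0, fun x hx => hx.1⟩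
  set τ := sInf C with hτ
  have hτC : τ ∈ C := hCc.csInf_mem hCne hCb
  have hbef : ∀ x ∈ Ico 0 τ, 0 < V x ∧ U x < b := by
    intro x hx
    by_contra hcon
    have : x ∈ C := ⟨hx.1, by
      by_contra h2
      push Not at h2
      exact hcon h2⟩
    linarith [csInf_le hCb this, hx.2]
  have hτ0 : 0 < τ := by
    rcases hτC.1.eq_or_lt with h0 | h0
    · exfalso
      have h2 := hτC.2
      rw [← h0] at h2
      rcases h2 with h2 | h2 <;> linarith
    · exact h0
  have hlim : V τ ∈ Ici (0:ℝ) ∧ U τ ∈ Iic b := by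
    have hcl : τ ∈ closure (Ico 0 τ) := by rw [closure_Ico hτ0.ne]; exact ⟨hτ0.le, le_rfl⟩
    constructor
    · exact isClosed_Ici.closure_subset_iff.2 (by rintro _ ⟨x, hx, rfl⟩; exact (hbef x hx).1.le)
        (image_closure_subset_closure_image h.contV ⟨τ, hcl, rfl⟩)
    · exact isClosed_Iic.closure_subset_iff.2 (by rintro _ ⟨x, hx, rfl⟩; exact (hbef x hx).2.le)
        (image_closure_subset_closure_image h.contU ⟨τ, hcl, rfl⟩)
  have hl1 : 0 ≤ V τ := hlim.1
  rcases hl1.eq_or_lt with h0 | h0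
  · exact Or.inr ⟨τ, hτ0, hbef, h0.symm, hlim.2⟩
  · left
    have hb : U τ = b := by
      rcases hτC.2 with h2 | h2
      · linarith
      · exact le_antisymm hlim.2 h2
    have hS : {x | 0 < V x} ∈ 𝓝 τ := (isOpen_lt continuous_const h.contV).mem_nhds h0
    obtain ⟨y, hy1, hy2, hy3⟩ := neg_after (h.dU τ).neg (by linarith) hS
    refine ⟨y, by linarith, ?_, ?_⟩
    · simp only [Pi.neg_apply] at hy2
      linarith
    · intro x hx
      rcases lt_or_ge x τ with h1 | h1
      · exact (hbef x ⟨hx.1, h1⟩).1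
      · exact hy3 ⟨h1, hx.2⟩

lemma trich (hg : Half g a b K M) (h : Sol_s1 g c U V) (hU0 : U 0 = a) (hV0 : 0 < V 0) :
    Stay b U V ∨ EscA b U V ∨ EscB b U V := by
  rcases h.exit (b := b) (by rw [hU0]; exact hg.ab) hV0 with h1 | h1 | ⟨τ, hτ, h1, h2, h3⟩
  · exact Or.inl h1
  · exact Or.inr (Or.inl h1)
  right; right
  have hm := h.mono hτ (fun x hx => (h1 x hx).1)
  have ha : a < U τ := hU0 ▸ hm ⟨le_rfl, hτ.le⟩ ⟨hτ.le, le_rfl⟩ hτ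
  rcases h3.eq_or_lt with h3 | h3
  · exfalso
    have := (h.unique hg.lip (Sol_s1.const c hg.gb) (x₀ := τ) h3 h2).2
    rw [this] at hV0
    exact lt_irrefl _ hV0
  · have hS : {x | U x < b} ∈ 𝓝 τ := (isOpen_lt h.contU continuous_const).mem_nhds h3
    have hgp := hg.pos (U τ) ⟨ha, h3⟩
    obtain ⟨y, hy1, hy2, hy3⟩ := neg_after (h.dV τ) (by rw [h2]; linarith) hS
    refine ⟨y, by linarith, by linarith, ?_⟩
    intro x hx
    rcases lt_or_ge x τ with h4 | h4
    · exact (h1 x ⟨hx.1, h4⟩).2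
    · exact hy3 ⟨h4, hx.2⟩

lemma stay_lim (hg : Half g a b K M) (h : Sol_s1 g c U V) (hU0 : U 0 = a) (hs : Stay b U V) :
    Tendsto U atTop (𝓝 b) := by
  have hmono : ∀ x y, 0 ≤ x → x < y → U x < U y := fun x y hx hxy =>
    h.mono hxy (fun z hz => (hs z (hx.trans hz.1)).1) ⟨le_rfl, hxy.le⟩ ⟨hxy.le, le_rfl⟩ hxy
  have key : ∀ m < b, ∃ x ≥ 0, m < U x := by
    intro m hm
    by_contra hcon
    push Not at hcon
    have hU1 : a < U 1 := hU0 ▸ hmono 0 1 le_rfl one_pos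
    obtain ⟨z, hz, hzmin⟩ := (isCompact_Icc (a := U 1) (b := m)).exists_isMinOn
      ⟨U 1, le_rfl, hcon 1 zero_le_one⟩ hg.lip.continuous.continuousOn
    have hκ : 0 < g z := hg.pos z ⟨by linarith [hz.1], by linarith [hz.2]⟩
    have hanti : AntitoneOn (fun x => V x + c * U x + g z * x) (Ici 1) := by
      have hd : ∀ x, HasDerivAt (fun x => V x + c * U x + g z * x)
          (-c * V x - g (U x) + c * V x + g z * 1) x := fun x =>
        ((h.dV x).add ((h.dU x).const_mul c)).add ((hasDerivAt_id x).const_mul (g z))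
      apply antitoneOn_of_deriv_nonpos (convex_Ici 1)
      · exact fun x _ => (hd x).continuousAt.continuousWithinAt
      · exact fun x _ => (hd x).differentiableAt.differentiableWithinAt
      · intro x hx
        rw [interior_Ici] at hx
        rw [(hd x).deriv]
        have hx : 1 < x := hx
        have := hzmin (show U x ∈ Icc (U 1) m from
          ⟨(hmono 1 x zero_le_one hx).le, hcon x (by linarith)⟩)
        have : g z ≤ g (U x) := this
        linarith
    set R := |U 1| + |m| with hR
    set X := 1 + (V 1 + 2 * |c| * R) / g z + 1 with hX
    have hR0 : 0 ≤ R := by positivity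
    have hX1 : 1 < X := by
      have : 0 ≤ (V 1 + 2 * |c| * R) / g z := by
        have := (hs 1 zero_le_one).1
        positivity
      linarith
    have hA := hanti (mem_Ici.2 le_rfl) (mem_Ici.2 hX1.le) hX1.le
    simp only at hA
    have hVX := (hs X (by linarith)).1
    have hab : |U 1| ≤ R := by have := abs_nonneg m; linarith
    have hab2 : |U X| ≤ R := by
      have h1 := (hmono 1 X zero_le_one hX1).le
      have h2 := hcon X (by linarith)
      rw [abs_le]
      constructor
      · linarith [neg_abs_le (U 1), abs_nonneg m]
      · linarith [le_abs_self m, abs_nonneg (U 1)]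
    have e1 : |c * U 1| ≤ |c| * R := by rw [abs_mul]; gcongr
    have e2 : |c * U X| ≤ |c| * R := by rw [abs_mul]; gcongr
    have e3 : g z * X = g z * 2 + (V 1 + 2 * |c| * R) := by rw [hX]; field_simp; ring
    rw [abs_le] at e1 e2
    nlinarith
  rw [Metric.tendsto_atTop]
  intro ε hε
  obtain ⟨x, hx, hx2⟩ := key (b - ε) (by linarith)
  refine ⟨x, fun y hy => ?_⟩
  have h1 := (hs y (hx.le.trans hy)).2
  have h2 : U x ≤ U y := by
    rcases hy.lt_or_eq with h | h
    · exact (hmono x y hx h).le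
    · rw [h]
  rw [Real.dist_eq, abs_lt]
  constructor <;> linarith
end
end TW

end

section
open Set Filter Topology NNReal
namespace TW
section
variable {g : ℝ → ℝ} {a b : ℝ} {K : ℝ≥0} {M c c' : ℝ} {U V U₂ V₂ : ℝ → ℝ}

lemma exists_inv (h : Sol_s1 g c U V) {T : ℝ} (hT : 0 < T) (hV : ∀ x ∈ Icc 0 T, 0 < V x) :
    ∃ Y : ℝ → ℝ, (∀ y ∈ Icc 0 T, Y (U y) = y) ∧
      ∀ y ∈ Icc 0 T, HasDerivAt Y (V y)⁻¹ (U y) := by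
  set W : ℝ → ℝ := fun x => V (max 0 (min T x)) with hW
  have hWc : Continuous W := h.contV.comp (by fun_prop)
  have hmem : ∀ x, max 0 (min T x) ∈ Icc 0 T := fun x =>
    ⟨le_max_left _ _, max_le hT.le (min_le_left _ _)⟩
  have hWeq : ∀ x ∈ Icc 0 T, W x = V x := by
    intro x hx
    simp only [hW]
    rw [min_eq_right hx.2, max_eq_right hx.1]
  obtain ⟨z, hz, hzmin⟩ := (isCompact_Icc (a := (0:ℝ)) (b := T)).exists_isMinOn
      ⟨0, le_rfl, hT.le⟩ h.contV.continuousOn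
  have hκ : 0 < V z := hV z hz
  have hWk : ∀ x, V z ≤ W x := fun x => hzmin (hmem x)
  set F : ℝ → ℝ := fun x => U 0 + ∫ t in (0:ℝ)..x, W t with hF
  have hFd : ∀ x, HasDerivAt F (W x) x := fun x =>
    (intervalIntegral.integral_hasDerivAt_right (hWc.intervalIntegrable _ _)
      hWc.aestronglyMeasurable.stronglyMeasurableAtFilter hWc.continuousAt).const_add _
  have hFc : Continuous F := continuous_iff_continuousAt.2 fun x => (hFd x).continuousAt
  have hFm : StrictMono F := strictMono_of_deriv_pos fun x => by
    rw [(hFd x).deriv]; exact hκ.trans_le (hWk x)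
  have hlow : Monotone (fun x => F x - V z * x) := by
    have hd : ∀ x, HasDerivAt (fun x => F x - V z * x) (W x - V z * 1) x := fun x =>
      (hFd x).sub ((hasDerivAt_id x).const_mul _)
    apply monotone_of_deriv_nonneg (fun x => (hd x).differentiableAt)
    intro x
    rw [(hd x).deriv]
    linarith [hWk x]
  have hF0 : F 0 = U 0 := by simp [hF]
  have hsurj : Function.Surjective F := by
    apply hFc.surjective
    · apply tendsto_atTop_mono' _ (f₁ := fun x => U 0 + V z * x)
      · filter_upwards [eventually_ge_atTop 0] with x hx
        have := hlow hx
        simp only [hF0] at this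
        linarith
      · exact tendsto_atTop_add_const_left _ _ (tendsto_id.const_mul_atTop hκ)
    · apply tendsto_atBot_mono' _ (f₁ := fun x => U 0 + V z * x)
      · filter_upwards [eventually_le_atBot 0] with x hx
        have := hlow hx
        simp only [hF0] at this
        linarith
      · exact tendsto_atBot_add_const_left _ _ (tendsto_id.const_mul_atBot hκ)
  have hFU : ∀ x ∈ Icc 0 T, F x = U x := by
    intro x hx
    have h1 : ∫ t in (0:ℝ)..x, W t = ∫ t in (0:ℝ)..x, V t := by
      apply intervalIntegral.integral_congr
      intro t ht
      rw [uIcc_of_le hx.1] at ht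
      exact hWeq t ⟨ht.1, ht.2.trans hx.2⟩
    simp only [hF]
    rw [h1, intervalIntegral.integral_eq_sub_of_hasDerivAt (fun t _ => h.dU t)
      (h.contV.intervalIntegrable _ _)]
    ring
  set e := hFm.orderIsoOfSurjective F hsurj with he
  have heF : ∀ x, e x = F x := fun x => rfl
  refine ⟨fun u => e.symm u, ?_, ?_⟩
  · intro y hy
    rw [← hFU y hy, ← heF]; simp
  · intro y hy
    have hy2 : e.symm (U y) = y := by rw [← hFU y hy, ← heF]; simp
    apply HasDerivAt.of_local_left_inverse (f := F)
    · exact e.symm.continuous.continuousAt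
    · rw [hy2, ← hWeq y hy]; exact hFd y
    · exact (hV y hy).ne'
    · exact Eventually.of_forall fun u => by rw [← heF]; simp

lemma comp_core (hg : Half g a b K M) (h : Sol_s1 g c U V) (h₂ : Sol_s1 g c' U₂ V₂)
    (hU0 : U 0 = a) (hU0' : U₂ 0 = a) (hcc : c' ≤ c) (hpp : V 0 ≤ V₂ 0)
    (hne : c' < c ∨ V 0 < V₂ 0) {T X : ℝ} (hT : 0 < T) (hX : 0 < X)
    (hV : ∀ x ∈ Icc 0 T, 0 < V x) (hV₂ : ∀ x ∈ Icc 0 X, 0 < V₂ x)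
    (hle : U₂ X ≤ U T) (hb : U₂ X < b) :
    ∀ x ∈ Icc 0 X, ∀ x' ∈ Icc 0 X, x < x' → ∀ y ∈ Icc 0 T, ∀ y' ∈ Icc 0 T,
      U y = U₂ x → U y' = U₂ x' → V₂ x - V y < V₂ x' - V y' := by
  obtain ⟨Y, hY, hYd⟩ := exists_inv h hT hV
  have hm₂ := h₂.mono hX (fun x hx => hV₂ x ⟨hx.1, hx.2.le⟩)
  have hinv : ∀ x ∈ Icc 0 X, ∃ y ∈ Icc 0 T, U y = U₂ x := by
    intro x hx
    have h1 : a ≤ U₂ x := hU0' ▸ hm₂.monotoneOn ⟨le_rfl, hX.le⟩ hx hx.1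
    have h2 : U₂ x ≤ U₂ X := hm₂.monotoneOn hx ⟨hX.le, le_rfl⟩ hx.2
    have := intermediate_value_Icc hT.le h.contU.continuousOn
    rw [hU0] at this
    exact this ⟨h1, h2.trans hle⟩
  have hYm : ∀ x ∈ Icc 0 X, Y (U₂ x) ∈ Icc 0 T ∧ U (Y (U₂ x)) = U₂ x := by
    intro x hx
    obtain ⟨y, hy, hyx⟩ := hinv x hx
    rw [← hyx, hY y hy]
    exact ⟨hy, rfl⟩
  set D : ℝ → ℝ := fun x => V₂ x - V (Y (U₂ x)) with hD
  set D' : ℝ → ℝ := fun x => (c - c') * V₂ x + g (U₂ x) / V (Y (U₂ x)) * D x with hD'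
  have hDd : ∀ x ∈ Icc 0 X, HasDerivAt D (D' x) x := by
    intro x hx
    obtain ⟨hy, hyx⟩ := hYm x hx
    have h1 := hYd _ hy
    rw [hyx] at h1
    have h2 := (h₂.dV x).sub ((h.dV (Y (U₂ x))).comp x (h1.comp x (h₂.dU x)))
    convert! h2 using 1
    have hVp := (hV _ hy).ne'
    rw [hyx]
    simp only [hD', hD]
    field_simp
    ring
  have hDc : ContinuousOn D (Icc 0 X) := fun x hx => (hDd x hx).continuousAt.continuousWithinAt
  have hD0 : D 0 = V₂ 0 - V 0 := by
    simp only [hD]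
    rw [hU0', ← hU0, hY 0 ⟨le_rfl, hT.le⟩]
  have hgp : ∀ x ∈ Ioc 0 X, 0 < g (U₂ x) := by
    intro x hx
    apply hg.pos
    constructor
    · exact hU0' ▸ hm₂ ⟨le_rfl, hX.le⟩ ⟨hx.1.le, hx.2⟩ hx.1
    · exact (hm₂.monotoneOn ⟨hx.1.le, hx.2⟩ ⟨hX.le, le_rfl⟩ hx.2).trans_lt hb
  have hgn : ∀ x ∈ Icc 0 X, 0 ≤ g (U₂ x) := by
    intro x hx
    rcases hx.1.eq_or_lt with h0 | h0
    · rw [← h0, hU0', hg.ga]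
    · exact (hgp x ⟨h0, hx.2⟩).le
  set δ := (V₂ 0 - V 0) / 2 with hδ
  have hδ0 : 0 ≤ δ := by rw [hδ]; linarith
  have hDge : ∀ x ∈ Icc 0 X, δ ≤ D x := by
    have := image_le_of_deriv_right_lt_deriv_boundary' (f := fun x => - D x) (f' := fun x => - D' x)
      (a := 0) (b := X) hDc.neg (fun x hx => (hDd x ⟨hx.1, hx.2.le⟩).neg.hasDerivWithinAt)
      (B := fun _ => -δ) (B' := fun _ => 0) (by rw [hD0, hδ]; linarith) continuousOn_const
      (fun x _ => hasDerivWithinAt_const _ _ _) (fun x hx hxe => by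
        have hx' : x ∈ Icc 0 X := ⟨hx.1, hx.2.le⟩
        have hxe : D x = δ := by linarith
        have hVp := hV _ (hYm x hx').1
        have hV2p := hV₂ x hx'
        have hgx := hgn x hx'
        simp only [hD']
        rw [hxe]
        rcases hne with hne | hne
        · have h1 : 0 < (c - c') * V₂ x := mul_pos (by linarith) hV2p
          have h2 : 0 ≤ g (U₂ x) / V (Y (U₂ x)) * δ := by positivity
          linarith
        · have h1 : 0 ≤ (c - c') * V₂ x := mul_nonneg (by linarith) hV2p.le
          have hδp : 0 < δ := by rw [hδ]; linarith
          have hx0 : 0 < x := by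
            rcases hx.1.eq_or_lt with h0 | h0
            · rw [← h0, hD0] at hxe
              rw [hδ] at hxe hδp
              linarith
            · exact h0
          have := hgp x ⟨hx0, hx.2.le⟩
          have h2 : 0 < g (U₂ x) / V (Y (U₂ x)) * δ := by positivity
          linarith)
    intro x hx
    have := this hx
    linarith
  have hDm : StrictMonoOn D (Icc 0 X) := by
    apply strictMonoOn_of_deriv_pos (convex_Icc _ _) hDc
    intro x hx
    rw [interior_Icc] at hx
    have hx' : x ∈ Icc 0 X := ⟨hx.1.le, hx.2.le⟩
    rw [(hDd x hx').deriv]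
    have hVp := hV _ (hYm x hx').1
    have hV2p := hV₂ x hx'
    have hgx := hgp x ⟨hx.1, hx.2.le⟩
    have hDx := hDge x hx'
    simp only [hD']
    rcases hne with hne | hne
    · have h1 : 0 < (c - c') * V₂ x := mul_pos (by linarith) hV2p
      have h2 : 0 ≤ g (U₂ x) / V (Y (U₂ x)) * D x := mul_nonneg (by positivity) (by linarith)
      linarith
    · have h1 : 0 ≤ (c - c') * V₂ x := mul_nonneg (by linarith) hV2p.le
      have hδp : 0 < δ := by rw [hδ]; linarith
      have h2 : 0 < g (U₂ x) / V (Y (U₂ x)) * D x := mul_pos (by positivity) (by linarith)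
      linarith
  intro x hx x' hx' hxx y hy y' hy' e e'
  have := hDm hx hx' hxx
  simp only [hD] at this
  rwa [← e, ← e', hY y hy, hY y' hy'] at this

lemma comp (hg : Half g a b K M) (h : Sol_s1 g c U V) (h₂ : Sol_s1 g c' U₂ V₂)
    (hU0 : U 0 = a) (hU0' : U₂ 0 = a) (hcc : c' ≤ c) (hp : 0 < V 0) (hpp : V 0 ≤ V₂ 0)
    (hne : c' < c ∨ V 0 < V₂ 0) (hs : EscA b U V ∨ Stay b U V) : EscA b U₂ V₂ := by
  have hcov : ∀ m < b, ∃ T > 0, m < U T ∧ ∀ x ∈ Icc 0 T, 0 < V x := by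
    intro m hm
    rcases hs with ⟨T, hT, h1, h2⟩ | hs
    · exact ⟨T, hT, by linarith, h2⟩
    · have := stay_lim hg h hU0 hs
      obtain ⟨T, hT1, hT2⟩ := ((this.eventually_const_lt hm).and (eventually_gt_atTop 0)).exists
      exact ⟨T, hT2, hT1, fun x hx => (hs x hx.1).1⟩
  have main : ∀ x₀ > 0, (∀ x ∈ Icc 0 x₀, 0 < V₂ x ∧ U₂ x < b) → ∃ δ > 0, ∀ x > x₀,
      (∀ z ∈ Icc 0 x, 0 < V₂ z ∧ U₂ z < b) → δ < V₂ x := by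
    intro x₀ hx₀ hpos
    obtain ⟨T, hT, hT1, hT2⟩ := hcov (U₂ x₀) (hpos x₀ ⟨hx₀.le, le_rfl⟩).2
    have hm₂ := h₂.mono hx₀ (fun x hx => (hpos x ⟨hx.1, hx.2.le⟩).1)
    have h1 : a < U₂ x₀ := hU0' ▸ hm₂ ⟨le_rfl, hx₀.le⟩ ⟨hx₀.le, le_rfl⟩ hx₀
    have hiv := intermediate_value_Icc hT.le h.contU.continuousOn
    rw [hU0] at hiv
    obtain ⟨y₀, hy₀, hyx⟩ := hiv ⟨h1.le, hT1.le⟩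
    have hc0 := comp_core hg h h₂ hU0 hU0' hcc hpp hne hT hx₀ hT2 (fun x hx => (hpos x hx).1) hT1.le
      (hpos x₀ ⟨hx₀.le, le_rfl⟩).2 0 ⟨le_rfl, hx₀.le⟩ x₀ ⟨hx₀.le, le_rfl⟩ hx₀ 0 ⟨le_rfl, hT.le⟩
      y₀ hy₀ (by rw [hU0, hU0']) hyx
    refine ⟨V₂ x₀ - V y₀, by linarith, ?_⟩
    intro x hx hpos'
    have hx0 : 0 < x := by linarith
    have hxb := (hpos' x ⟨hx0.le, le_rfl⟩).2
    obtain ⟨S, hS, hS1, hS2⟩ := hcov (U₂ x) hxb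
    have hm₂' := h₂.mono hx0 (fun x hx => (hpos' x ⟨hx.1, hx.2.le⟩).1)
    have h3 : U₂ x₀ < U₂ x := hm₂' ⟨hx₀.le, hx.le⟩ ⟨hx0.le, le_rfl⟩ hx
    have hiv := intermediate_value_Icc hS.le h.contU.continuousOn
    rw [hU0] at hiv
    obtain ⟨y, hy, hyx'⟩ := hiv ⟨(h1.trans h3).le, hS1.le⟩
    have hyS : y₀ ≤ S := by
      by_contra hcon
      push Not at hcon
      have := h.mono (s := 0) (t := y₀) (hS.trans hcon)
        (fun z hz => hT2 z ⟨hz.1, hz.2.le.trans hy₀.2⟩)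
        ⟨hS.le, hcon.le⟩ ⟨hy₀.1, le_rfl⟩ hcon
      linarith
    have hc1 := comp_core hg h h₂ hU0 hU0' hcc hpp hne hS hx0 hS2 (fun x hx => (hpos' x hx).1) hS1.le
      hxb x₀ ⟨hx₀.le, hx.le⟩ x ⟨hx0.le, le_rfl⟩ hx y₀ ⟨hy₀.1, hyS⟩ y hy hyx hyx'
    have := hS2 y hy
    linarith
  rcases h₂.exit (b := b) (by rw [hU0']; exact hg.ab) (hp.trans_le hpp) with h1 | h1 | ⟨τ, hτ, h1, h2, h3⟩
  · exfalso
    obtain ⟨δ, hδ, hd⟩ := main 1 one_pos (fun x hx => h1 x hx.1)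
    have hm : MonotoneOn (fun x => U₂ x - δ * x) (Ici 1) := by
      have hd' : ∀ x, HasDerivAt (fun x => U₂ x - δ * x) (V₂ x - δ * 1) x := fun x =>
        (h₂.dU x).sub ((hasDerivAt_id x).const_mul _)
      apply monotoneOn_of_deriv_nonneg (convex_Ici 1)
      · exact fun x _ => (hd' x).continuousAt.continuousWithinAt
      · exact fun x _ => (hd' x).differentiableAt.differentiableWithinAt
      · intro x hx
        rw [interior_Ici] at hx
        rw [(hd' x).deriv]
        linarith [hd x hx (fun z hz => h1 z hz.1)]
    have hb1 := (h1 1 zero_le_one).2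
    set X := 1 + (b - U₂ 1) / δ with hX
    have hX1 : 1 ≤ X := by
      have : 0 ≤ (b - U₂ 1) / δ := div_nonneg (by linarith) hδ.le
      linarith
    have := hm (mem_Ici.2 le_rfl) (mem_Ici.2 hX1) hX1
    simp only at this
    have e : δ * X = δ + (b - U₂ 1) := by rw [hX]; field_simp
    linarith [(h1 X (by linarith)).2]
  · exact h1
  · exfalso
    obtain ⟨δ, hδ, hd⟩ := main (τ / 2) (by linarith)
      (fun x hx => h1 x ⟨hx.1, by linarith [hx.2]⟩)
    have hcl : τ ∈ closure (Ioo (τ / 2) τ) := by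
      rw [closure_Ioo (by linarith)]; constructor <;> linarith
    have : V₂ τ ∈ Ici δ := isClosed_Ici.closure_subset_iff.2 (by
        rintro _ ⟨x, hx, rfl⟩
        exact (hd x hx.1 (fun z hz => h1 z ⟨hz.1, hz.2.trans_lt hx.2⟩)).le)
        (image_closure_subset_closure_image h₂.contV ⟨τ, hcl, rfl⟩)
    have : δ ≤ V₂ τ := this
    linarith
end
end TW

end

section
open Set Filter Topology NNReal
namespace TW
def SA (g : ℝ → ℝ) (a b c p : ℝ) : Prop :=
  ∃ U V, Sol_s1 g c U V ∧ U 0 = a ∧ V 0 = p ∧ EscA b U V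
def SB (g : ℝ → ℝ) (a b c p : ℝ) : Prop :=
  ∃ U V, Sol_s1 g c U V ∧ U 0 = a ∧ V 0 = p ∧ EscB b U V
def SN (g : ℝ → ℝ) (a b c p : ℝ) : Prop :=
  ∃ U V, Sol_s1 g c U V ∧ U 0 = a ∧ V 0 = p ∧ Stay b U V
section
variable {g : ℝ → ℝ} {a b : ℝ} {K : ℝ≥0} {M c c' p p' : ℝ} {U V : ℝ → ℝ}

lemma SA.pos (h : SA g a b c p) : 0 < p := by
  obtain ⟨U, V, h, h0, h1, T, hT, h2, h3⟩ := h
  exact h1 ▸ h3 0 ⟨le_rfl, hT.le⟩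

lemma SN.pos (h : SN g a b c p) : 0 < p := by
  obtain ⟨U, V, h, h0, h1, h2⟩ := h
  exact h1 ▸ (h2 0 le_rfl).1

lemma tri (hg : Half g a b K M) (c : ℝ) (hp : 0 < p) :
    SN g a b c p ∨ SA g a b c p ∨ SB g a b c p := by
  obtain ⟨U, V, h, h0, h1⟩ := Sol_s1.exists hg.lip hg.bd c a p
  rcases trich hg h h0 (by rw [h1]; exact hp) with h2 | h2 | h2
  · exact Or.inl ⟨U, V, h, h0, h1, h2⟩
  · exact Or.inr (Or.inl ⟨U, V, h, h0, h1, h2⟩)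
  · exact Or.inr (Or.inr ⟨U, V, h, h0, h1, h2⟩)

lemma SA.notB (hg : Half g a b K M) (hA : SA g a b c p) (hB : SB g a b c p) : False := by
  obtain ⟨U, V, h, h0, h1, h2⟩ := hA
  obtain ⟨U', V', h', h0', h1', h2'⟩ := hB
  obtain ⟨rfl, rfl⟩ := h.unique hg.lip h' (x₀ := 0) (by rw [h0, h0']) (by rw [h1, h1'])
  exact h2.not_B h2'

lemma SA.notN (hg : Half g a b K M) (hA : SA g a b c p) (hB : SN g a b c p) : False := by
  obtain ⟨U, V, h, h0, h1, h2⟩ := hA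
  obtain ⟨U', V', h', h0', h1', h2'⟩ := hB
  obtain ⟨rfl, rfl⟩ := h.unique hg.lip h' (x₀ := 0) (by rw [h0, h0']) (by rw [h1, h1'])
  exact h2.not_stay h2'

lemma scomp (hg : Half g a b K M) (h : SA g a b c p ∨ SN g a b c p) (hc : c' ≤ c) (hp : p ≤ p')
    (hne : c' < c ∨ p < p') : SA g a b c' p' := by
  have hp0 : 0 < p := by rcases h with h | h <;> exact h.pos
  obtain ⟨U', V', h', h0', h1'⟩ := Sol_s1.exists hg.lip hg.bd c' a p'
  have : ∃ U V, Sol_s1 g c U V ∧ U 0 = a ∧ V 0 = p ∧ (EscA b U V ∨ Stay b U V) := by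
    rcases h with ⟨U, V, h, h0, h1, h2⟩ | ⟨U, V, h, h0, h1, h2⟩
    · exact ⟨U, V, h, h0, h1, Or.inl h2⟩
    · exact ⟨U, V, h, h0, h1, Or.inr h2⟩
  obtain ⟨U, V, hs, h0, h1, h2⟩ := this
  refine ⟨U', V', h', h0', h1', ?_⟩
  subst h1 h1'
  exact comp hg hs h' h0 h0' hc hp0 hp hne h2

lemma SA.open (hg : Half g a b K M) : IsOpen {q : ℝ × ℝ | SA g a b q.1 q.2} := by
  rw [Metric.isOpen_iff]
  rintro ⟨c, p⟩ ⟨U, V, h, h0, h1, T, hT, h2, h3⟩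
  simp only at h h1
  obtain ⟨z, hz, hzmin⟩ := (isCompact_Icc (a := (0:ℝ)) (b := T)).exists_isMinOn
      ⟨0, le_rfl, hT.le⟩ h.contV.continuousOn
  obtain ⟨δ, hδ, hd⟩ := h.dep hg.lip (T := T) (ε := min (V z) (U T - b)) hT.le
    (lt_min (h3 z hz) (by linarith))
  refine ⟨δ, hδ, ?_⟩
  rintro ⟨c', p'⟩ hq
  rw [Metric.mem_ball, Prod.dist_eq, max_lt_iff, Real.dist_eq, Real.dist_eq] at hq
  obtain ⟨U', V', h', h0', h1'⟩ := Sol_s1.exists hg.lip hg.bd c' a p'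
  have := hd c' U' V' h' (by rw [h0, h0']) hq.1 (by rw [h1, h1']; exact hq.2)
  refine ⟨U', V', h', h0', h1', T, hT, ?_, ?_⟩
  · have h5 := (this T ⟨hT.le, le_rfl⟩).1.trans_le (min_le_right _ _)
    rw [abs_lt] at h5
    linarith
  · intro x hx
    have h5 := (this x hx).2.trans_le (min_le_left _ _)
    have h6 : V z ≤ V x := hzmin hx
    rw [abs_lt] at h5
    linarith

lemma SB.open (hg : Half g a b K M) : IsOpen {q : ℝ × ℝ | SB g a b q.1 q.2} := by
  rw [Metric.isOpen_iff]
  rintro ⟨c, p⟩ ⟨U, V, h, h0, h1, T, hT, h2, h3⟩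
  simp only at h h1
  obtain ⟨z, hz, hzmax⟩ := (isCompact_Icc (a := (0:ℝ)) (b := T)).exists_isMaxOn
      ⟨0, le_rfl, hT.le⟩ h.contU.continuousOn
  obtain ⟨δ, hδ, hd⟩ := h.dep hg.lip (T := T) (ε := min (b - U z) (- V T)) hT.le
    (lt_min (by linarith [h3 z hz]) (by linarith))
  refine ⟨δ, hδ, ?_⟩
  rintro ⟨c', p'⟩ hq
  rw [Metric.mem_ball, Prod.dist_eq, max_lt_iff, Real.dist_eq, Real.dist_eq] at hq
  obtain ⟨U', V', h', h0', h1'⟩ := Sol_s1.exists hg.lip hg.bd c' a p'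
  have := hd c' U' V' h' (by rw [h0, h0']) hq.1 (by rw [h1, h1']; exact hq.2)
  refine ⟨U', V', h', h0', h1', T, hT, ?_, ?_⟩
  · have h5 := (this T ⟨hT.le, le_rfl⟩).2.trans_le (min_le_right _ _)
    rw [abs_lt] at h5
    linarith
  · intro x hx
    have h5 := (this x hx).1.trans_le (min_le_left _ _)
    have h6 : U x ≤ U z := hzmax hx
    rw [abs_lt] at h5
    linarith

lemma F1 (hg : Half g a b K M) (hp : 0 < p) : ∃ c, SA g a b c p := by
  have hM0 : 0 ≤ M := (abs_nonneg _).trans (hg.bd 0)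
  set k := (M + 1) / p with hk
  have hk0 : 0 < k := by positivity
  have hMk : M / k < p := by
    rw [div_lt_iff₀ hk0, hk]; field_simp; linarith
  obtain ⟨U, V, h, h0, h1⟩ := Sol_s1.exists hg.lip hg.bd (-k) a p
  have hmono : Monotone (fun x => Real.exp (-k * x) * (V x - M / k)) := by
    have hd : ∀ x, HasDerivAt (fun x => Real.exp (-k * x) * (V x - M / k))
        (Real.exp (-k * x) * (-k * 1) * (V x - M / k) + Real.exp (-k * x) * (- -k * V x - g (U x))) x :=
      fun x => (((hasDerivAt_id x).const_mul (-k)).exp).mul ((h.dV x).sub_const _)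
    apply monotone_of_deriv_nonneg (fun x => (hd x).differentiableAt)
    intro x
    rw [(hd x).deriv]
    have e : Real.exp (-k * x) * (-k * 1) * (V x - M / k) + Real.exp (-k * x) * (- -k * V x - g (U x))
      = Real.exp (-k * x) * (M - g (U x)) := by field_simp; ring
    rw [e]
    have := (abs_le.1 (hg.bd (U x))).2
    exact mul_nonneg (Real.exp_pos _).le (by linarith)
  have hV : ∀ x ≥ 0, p ≤ V x := by
    intro x hx
    have := hmono hx
    simp only [h1, mul_zero, Real.exp_zero, one_mul] at this
    have he : Real.exp (-k * x) ≤ 1 := by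
      apply Real.exp_le_one_iff.2; nlinarith
    by_contra hcon
    push Not at hcon
    have hep := Real.exp_pos (-k * x)
    nlinarith
  have hm : MonotoneOn (fun x => U x - p * x) (Ici 0) := by
    have hd' : ∀ x, HasDerivAt (fun x => U x - p * x) (V x - p * 1) x := fun x =>
      (h.dU x).sub ((hasDerivAt_id x).const_mul _)
    apply monotoneOn_of_deriv_nonneg (convex_Ici 0)
    · exact fun x _ => (hd' x).continuousAt.continuousWithinAt
    · exact fun x _ => (hd' x).differentiableAt.differentiableWithinAt
    · intro x hx
      rw [interior_Ici] at hx
      rw [(hd' x).deriv]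
      linarith [hV x (mem_Ioi.1 hx).le]
  have hab := hg.ab
  have hT : 0 < (b - a + 1) / p := div_pos (by linarith) hp
  refine ⟨-k, U, V, h, h0, h1, (b - a + 1) / p, hT, ?_, fun x hx => hp.trans_le (hV x hx.1)⟩
  have := hm (mem_Ici.2 le_rfl) (mem_Ici.2 hT.le) hT.le
  simp only [h0, mul_zero] at this
  have e : p * ((b - a + 1) / p) = b - a + 1 := by field_simp
  linarith

lemma F3 (hg : Half g a b K M) (hp : M + (b - a) + 1 ≤ p) : SA g a b 0 p := by
  obtain ⟨U, V, h, h0, h1⟩ := Sol_s1.exists hg.lip hg.bd 0 a p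
  have hM0 : 0 ≤ M := (abs_nonneg _).trans (hg.bd 0)
  have hab := hg.ab
  have hmono : Monotone (fun x => V x + M * x) := by
    have hd : ∀ x, HasDerivAt (fun x => V x + M * x) (-0 * V x - g (U x) + M * 1) x :=
      fun x => (h.dV x).add ((hasDerivAt_id x).const_mul _)
    apply monotone_of_deriv_nonneg (fun x => (hd x).differentiableAt)
    intro x
    rw [(hd x).deriv]
    have := (abs_le.1 (hg.bd (U x))).2
    linarith
  have hV : ∀ x ∈ Icc (0:ℝ) 1, p - M ≤ V x := by
    intro x hx
    have := hmono hx.1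
    simp only [h1, mul_zero] at this
    nlinarith [hx.2]
  have hm : MonotoneOn (fun x => U x - (p - M) * x) (Icc 0 1) := by
    have hd' : ∀ x, HasDerivAt (fun x => U x - (p - M) * x) (V x - (p - M) * 1) x := fun x =>
      (h.dU x).sub ((hasDerivAt_id x).const_mul _)
    apply monotoneOn_of_deriv_nonneg (convex_Icc 0 1)
    · exact fun x _ => (hd' x).continuousAt.continuousWithinAt
    · exact fun x _ => (hd' x).differentiableAt.differentiableWithinAt
    · intro x hx
      rw [interior_Icc] at hx
      rw [(hd' x).deriv]
      linarith [hV x ⟨hx.1.le, hx.2.le⟩]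
  refine ⟨U, V, h, h0, h1, 1, one_pos, ?_, fun x hx => by linarith [hV x hx]⟩
  have := hm (⟨le_rfl, zero_le_one⟩) (⟨zero_le_one, le_rfl⟩) zero_le_one
  simp only [h0] at this
  linarith

/-- Reaching: in cases A or N, `U` gets arbitrarily close to `b` with `V>0`. -/
lemma reach (hg : Half g a b K M) (h : Sol_s1 g c U V) (h0 : U 0 = a)
    (hs : EscA b U V ∨ Stay b U V) {m : ℝ} (hm : m < b) (ham : a < m) :
    ∃ T > 0, U T = m ∧ ∀ x ∈ Icc 0 T, 0 < V x := by
  have : ∃ T > 0, m < U T ∧ ∀ x ∈ Icc 0 T, 0 < V x := by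
    rcases hs with ⟨T, hT, h1, h2⟩ | hs
    · exact ⟨T, hT, by linarith, h2⟩
    · have := stay_lim hg h h0 hs
      obtain ⟨T, hT1, hT2⟩ := ((this.eventually_const_lt hm).and (eventually_gt_atTop 0)).exists
      exact ⟨T, hT2, hT1, fun x hx => (hs x hx.1).1⟩
  obtain ⟨T, hT, h1, h2⟩ := this
  have hiv := intermediate_value_Icc hT.le h.contU.continuousOn
  rw [h0] at hiv
  obtain ⟨S, hS, hSm⟩ := hiv ⟨ham.le, h1.le⟩
  refine ⟨S, ?_, hSm, fun x hx => h2 x ⟨hx.1, hx.2.trans hS.2⟩⟩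
  rcases hS.1.eq_or_lt with h3 | h3
  · rw [← h3, h0] at hSm; linarith
  · exact h3

lemma SB_of (hg : Half g a b K M) (hp : 0 < p)
    (hno : ∀ U V, Sol_s1 g c U V → U 0 = a → V 0 = p → (EscA b U V ∨ Stay b U V) → False) :
    SB g a b c p := by
  rcases tri hg c hp with ⟨U, V, h, h0, h1, h2⟩ | ⟨U, V, h, h0, h1, h2⟩ | h
  · exact (hno U V h h0 h1 (Or.inr h2)).elim
  · exact (hno U V h h0 h1 (Or.inl h2)).elim
  · exact h

lemma F2 (hg : Half g a b K M) (hp : 0 < p) : ∃ c, SB g a b c p := by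
  have hab := hg.ab
  have hba : 0 < b - a := by linarith
  refine ⟨2 * p / (b - a), SB_of hg hp ?_⟩
  intro U V h h0 h1 hs
  set c := 2 * p / (b - a) with hc
  obtain ⟨T, hT, hTm, hV⟩ := reach hg h h0 hs (m := (a + b) / 2) (by linarith) (by linarith)
  have hm := h.mono hT (fun x hx => hV x ⟨hx.1, hx.2.le⟩)
  have hanti : AntitoneOn (fun x => V x + c * U x) (Icc 0 T) := by
    have hd : ∀ x, HasDerivAt (fun x => V x + c * U x) (-c * V x - g (U x) + c * V x) x := fun x =>
      (h.dV x).add ((h.dU x).const_mul c)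
    apply antitoneOn_of_deriv_nonpos (convex_Icc 0 T)
    · exact fun x _ => (hd x).continuousAt.continuousWithinAt
    · exact fun x _ => (hd x).differentiableAt.differentiableWithinAt
    · intro x hx
      rw [interior_Icc] at hx
      rw [(hd x).deriv]
      have h2 := hm ⟨le_rfl, hT.le⟩ ⟨hx.1.le, hx.2.le⟩ hx.1
      have h3 := hm ⟨hx.1.le, hx.2.le⟩ ⟨hT.le, le_rfl⟩ hx.2
      have := hg.pos (U x) ⟨by linarith, by linarith⟩
      linarith
  have := hanti ⟨le_rfl, hT.le⟩ ⟨hT.le, le_rfl⟩ hT.le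
  simp only [h0, h1, hTm] at this
  have e : c * ((a + b) / 2) = c * a + p := by rw [hc]; field_simp; ring
  linarith [hV T ⟨hT.le, le_rfl⟩]

lemma F4 (hg : Half g a b K M) : ∃ p₁ > 0, ∀ p, 0 < p → p ≤ p₁ → SB g a b 0 p := by
  have hab := hg.ab
  have hgc := hg.lip.continuous
  set m := (a + b) / 2 with hm
  set G : ℝ → ℝ := fun u => ∫ t in a..u, g t with hG
  have hGd : ∀ u, HasDerivAt G (g u) u := fun u =>
    intervalIntegral.integral_hasDerivAt_right (hgc.intervalIntegrable _ _)
      hgc.aestronglyMeasurable.stronglyMeasurableAtFilter hgc.continuousAt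
  have hGa : G a = 0 := by simp [hG]
  have hGm : 0 < G m := by
    apply intervalIntegral.intervalIntegral_pos_of_pos_on (hgc.intervalIntegrable _ _)
    · intro x hx
      exact hg.pos x ⟨hx.1, by linarith [hx.2]⟩
    · linarith
  refine ⟨Real.sqrt (G m), Real.sqrt_pos.2 hGm, fun p hp hp1 => SB_of hg hp ?_⟩
  intro U V h h0 h1 hs
  obtain ⟨T, hT, hTm, hV⟩ := reach hg h h0 hs (m := m) (by linarith) (by linarith)
  have hd : ∀ x, HasDerivAt (fun x => V x ^ 2 + 2 * G (U x)) 0 x := by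
    intro x
    have h2 := ((h.dV x).pow 2).add (((hGd (U x)).comp x (h.dU x)).const_mul 2)
    convert! h2 using 1
    simp; ring
  have := is_const_of_deriv_eq_zero (fun x => (hd x).differentiableAt) (fun x => (hd x).deriv) T 0
  simp only [hTm, h0, h1, hGa] at this
  have hp2 : p ^ 2 ≤ G m := (Real.le_sqrt' hp).1 hp1
  nlinarith [sq_nonneg (V T)]

lemma exN (hg : Half g a b K M) (hp : 0 < p) : ∃ c, SN g a b c p := by
  by_contra hcon
  push Not at hcon
  have hc : Continuous (fun c : ℝ => (c, p)) := by fun_prop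
  have := isPreconnected_univ (α := ℝ) _ _ ((SA.open hg).preimage hc) ((SB.open hg).preimage hc)
    (by
      intro c _
      rcases tri hg c hp with h | h | h
      · exact (hcon c h).elim
      · exact Or.inl h
      · exact Or.inr h)
    (by obtain ⟨c, hc⟩ := F1 hg hp; exact ⟨c, trivial, hc⟩)
    (by obtain ⟨c, hc⟩ := F2 hg hp; exact ⟨c, trivial, hc⟩)
  obtain ⟨c, _, h1, h2⟩ := this
  exact SA.notB hg h1 h2

lemma matching {g₁ g₂ : ℝ → ℝ} {a₁ a₂ b₁ b₂ : ℝ} {K₁ K₂ : ℝ≥0} {M₁ M₂ : ℝ}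
    (H₁ : Half g₁ a₁ b₁ K₁ M₁) (H₂ : Half g₂ a₂ b₂ K₂ M₂) :
    ∃ c p, SN g₁ a₁ b₁ c p ∧ SN g₂ a₂ b₂ (-c) p := by
  by_contra hcon
  push Not at hcon
  have hc : Continuous (fun q : ℝ × ℝ => (-q.1, q.2)) := by fun_prop
  have hO1 := isOpenMap_snd _ ((SA.open H₁).inter ((SA.open H₂).preimage hc))
  have hO2 := isOpenMap_snd _ ((SB.open H₁).inter ((SB.open H₂).preimage hc))
  have := (isPreconnected_Ioi (a := (0:ℝ))) _ _ hO1 hO2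
    (by
      intro p hp
      have hp : 0 < p := hp
      obtain ⟨c₁, h1⟩ := exN H₁ hp
      obtain ⟨c₂, h2⟩ := exN H₂ hp
      rcases lt_trichotomy c₁ (-c₂) with h | h | h
      · right
        obtain ⟨c, hc1, hc2⟩ := exists_between h
        refine ⟨(c, p), ⟨?_, ?_⟩, rfl⟩
        · rcases tri H₁ c hp with h | h | h
          · exact (SA.notN H₁ (scomp H₁ (Or.inr h) hc1.le le_rfl (Or.inl hc1)) h1).elim
          · exact (SA.notN H₁ (scomp H₁ (Or.inl h) hc1.le le_rfl (Or.inl hc1)) h1).elim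
          · exact h
        · have hc1 : c₂ < -c := by linarith
          rcases tri H₂ (-c) hp with h | h | h
          · exact (SA.notN H₂ (scomp H₂ (Or.inr h) hc1.le le_rfl (Or.inl hc1)) h2).elim
          · exact (SA.notN H₂ (scomp H₂ (Or.inl h) hc1.le le_rfl (Or.inl hc1)) h2).elim
          · exact h
      · exact (hcon c₁ p h1 (by rw [h, neg_neg]; exact h2)).elim
      · left
        obtain ⟨c, hc1, hc2⟩ := exists_between h
        have hc3 : -c < c₂ := by linarith
        exact ⟨(c, p), ⟨scomp H₁ (Or.inr h1) hc2.le le_rfl (Or.inl hc2),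
          scomp H₂ (Or.inr h2) hc3.le le_rfl (Or.inl hc3)⟩, rfl⟩)
    (by
      set p := max (M₁ + (b₁ - a₁) + 1) (M₂ + (b₂ - a₂) + 1) with hp
      have h1 : SA g₁ a₁ b₁ 0 p := F3 H₁ (le_max_left _ _)
      have h2 : SA g₂ a₂ b₂ 0 p := F3 H₂ (le_max_right _ _)
      exact ⟨p, h1.pos, (0, p), ⟨h1, by simpa using h2⟩, rfl⟩)
    (by
      obtain ⟨p₁, hp1, h1⟩ := F4 H₁
      obtain ⟨p₂, hp2, h2⟩ := F4 H₂
      have hp : 0 < min p₁ p₂ := lt_min hp1 hp2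
      exact ⟨min p₁ p₂, hp, (0, min p₁ p₂), ⟨h1 _ hp (min_le_left _ _),
        by simpa using h2 _ hp (min_le_right _ _)⟩, rfl⟩)
  obtain ⟨p, hp, ⟨⟨c, _⟩, ⟨hA1, hA2⟩, rfl⟩, ⟨⟨c', p⟩, ⟨hB1, hB2⟩, hpe⟩⟩ := this
  simp only at hpe
  subst hpe
  simp only [mem_ofPred_eq, mem_preimage] at hA1 hA2 hB1 hB2
  rcases lt_trichotomy c c' with h | h | h
  · exact SA.notB H₂ (scomp H₂ (Or.inl hA2) (by linarith) le_rfl (Or.inl (by linarith))) hB2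
  · subst h; exact SA.notB H₁ hA1 hB1
  · exact SA.notB H₁ (scomp H₁ (Or.inl hA1) h.le le_rfl (Or.inl h)) hB1

lemma SN_unique {g₁ g₂ : ℝ → ℝ} {a₁ a₂ b₁ b₂ : ℝ} {K₁ K₂ : ℝ≥0} {M₁ M₂ : ℝ}
    (H₁ : Half g₁ a₁ b₁ K₁ M₁) (H₂ : Half g₂ a₂ b₂ K₂ M₂)
    (h1 : SN g₁ a₁ b₁ c p) (h2 : SN g₂ a₂ b₂ (-c) p)
    (h1' : SN g₁ a₁ b₁ c' p') (h2' : SN g₂ a₂ b₂ (-c') p') : c = c' ∧ p = p' := by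
  have aux : ∀ {c c' p p'}, SN g₁ a₁ b₁ c p → SN g₂ a₂ b₂ (-c) p → SN g₁ a₁ b₁ c' p' →
      SN g₂ a₂ b₂ (-c') p' → ¬ c < c' := by
    intro c c' p p' h1 h2 h1' h2' h
    rcases le_total p p' with hp | hp
    · exact SA.notN H₂ (scomp H₂ (Or.inr h2) (by linarith) hp (Or.inl (by linarith))) h2'
    · exact SA.notN H₁ (scomp H₁ (Or.inr h1') h.le hp (Or.inl h)) h1
  have hcc : c = c' := le_antisymm (not_lt.1 (aux h1' h2' h1 h2)) (not_lt.1 (aux h1 h2 h1' h2'))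
  subst hcc
  refine ⟨rfl, ?_⟩
  rcases lt_trichotomy p p' with h | h | h
  · exact (SA.notN H₁ (scomp H₁ (Or.inr h1) le_rfl h.le (Or.inr h)) h1').elim
  · exact h
  · exact (SA.notN H₁ (scomp H₁ (Or.inr h1') le_rfl h.le (Or.inr h)) h1).elim
end
end TW

end

section
open Set Filter Topology NNReal
namespace TW
section
variable {g : ℝ → ℝ} {a b : ℝ} {K K' : ℝ≥0} {M M' c c' p p' : ℝ} {U V : ℝ → ℝ}

lemma last_cross (hg : Half g a b K M) (h : Sol_s1 g c U V) (hlt : ∀ x, U x < b)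
    (htop : Tendsto U atTop (𝓝 b)) (hbot : ∃ x, U x < a) :
    ∃ X, U X = a ∧ (∀ x > X, a < U x) ∧ Stay b (fun x => U (x + X)) (fun x => V (x + X)) := by
  set C : Set ℝ := {x | U x ≤ a} with hC
  have hCc : IsClosed C := isClosed_le h.contU continuous_const
  have hCne : C.Nonempty := by obtain ⟨x, hx⟩ := hbot; exact ⟨x, hx.le⟩
  have hCb : BddAbove C := by
    obtain ⟨X, hX⟩ := eventually_atTop.1 (htop.eventually_const_lt hg.ab)
    refine ⟨X, fun x hx => ?_⟩
    by_contra hcon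
    push Not at hcon
    have hx : U x ≤ a := hx
    linarith [hX x hcon.le]
  set X := sSup C with hX
  have hXC : U X ≤ a := hCc.csSup_mem hCne hCb
  have haft : ∀ x > X, a < U x := by
    intro x hx
    by_contra hcon
    push Not at hcon
    linarith [le_csSup hCb (show x ∈ C from hcon)]
  have hUX : U X = a := by
    apply le_antisymm hXC
    have hcl : X ∈ closure (Ioi X) := by rw [closure_Ioi]; exact mem_Ici.2 le_rfl
    exact isClosed_Ici.closure_subset_iff.2 (by rintro _ ⟨x, hx, rfl⟩; exact (haft x hx).le)
        (image_closure_subset_closure_image h.contU ⟨X, hcl, rfl⟩)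
  have hV0 : 0 < V X := by
    rcases lt_trichotomy (V X) 0 with h1 | h1 | h1
    · obtain ⟨y, hy1, hy2, _⟩ := neg_after (h.dU X) h1 univ_mem
      linarith [haft y hy1]
    · exfalso
      have := (h.unique hg.lip (Sol_s1.const c hg.ga) hUX h1).1
      obtain ⟨x, hx⟩ := hbot
      rw [this] at hx
      exact lt_irrefl _ hx
    · exact h1
  refine ⟨X, hUX, haft, ?_⟩
  rcases trich hg (h.shift_s1 X) (by simpa using hUX) (by simpa using hV0) with h1 | h1 | h1
  · exact h1
  · obtain ⟨T, _, h2, _⟩ := h1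
    linarith [hlt (T + X)]
  · exfalso
    obtain ⟨T, hT, h2, _⟩ := h1
    have hneg : ∀ x ≥ T + X, V x ≤ 0 := by
      intro x hx
      have := image_le_of_deriv_right_lt_deriv_boundary' (f := V)
        (f' := fun x => -c * V x - g (U x)) (a := T + X) (b := x) h.contV.continuousOn
        (fun y _ => (h.dV y).hasDerivWithinAt) (B := fun _ => 0) (B' := fun _ => 0) h2.le
        continuousOn_const (fun x _ => hasDerivWithinAt_const _ _ _) (fun y hy hy0 => by
          have := hg.pos (U y) ⟨haft y (by linarith [hy.1]), hlt y⟩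
          rw [hy0]; linarith)
      exact this ⟨hx, le_rfl⟩
    have hanti : AntitoneOn U (Ici (T + X)) := by
      apply antitoneOn_of_deriv_nonpos (convex_Ici _) h.contU.continuousOn
        (fun x _ => (h.dU x).differentiableAt.differentiableWithinAt)
      intro x hx
      rw [interior_Ici] at hx
      rw [(h.dU x).deriv]
      exact hneg x (mem_Ioi.1 hx).le
    obtain ⟨x, hx1, hx2⟩ := ((htop.eventually_const_lt (hlt (T + X))).and
      (eventually_ge_atTop (T + X))).exists
    linarith [hanti (mem_Ici.2 le_rfl) (mem_Ici.2 hx2) hx2]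

lemma prof (H₁ : Half g a 1 K M) (H₂ : Half (fun w => -g (1 - w)) (1 - a) 1 K' M')
    (h : Sol_s1 g c U V) (hU : ∀ x, 0 < U x ∧ U x < 1)
    (hbot : Tendsto U atBot (𝓝 0)) (htop : Tendsto U atTop (𝓝 1)) :
    ∃ X p, U X = a ∧ V X = p ∧ SN g a 1 c p ∧ SN (fun w => -g (1 - w)) (1 - a) 1 (-c) p ∧
      ∀ x, 0 < V x := by
  have ha1 := H₁.ab
  have ha0 : 0 < a := by linarith [H₂.ab]
  obtain ⟨X₂, hX2, haft, hs2⟩ := last_cross H₁ h (fun x => (hU x).2) htop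
    (hbot.eventually_lt_const ha0).exists
  obtain ⟨Z, hZ, hbef, hs1⟩ := last_cross H₂ h.reflect (fun x => by linarith [(hU (-x)).1])
    (by simpa using (hbot.comp tendsto_neg_atTop_atBot).const_sub 1)
    (by
      obtain ⟨x, hx⟩ := (htop.eventually_const_lt ha1).exists
      exact ⟨-x, by simp only [neg_neg]; linarith⟩)
  obtain ⟨X₁, rfl⟩ : ∃ X₁, Z = -X₁ := ⟨-Z, by simp⟩
  simp only [neg_neg] at hZ
  have hX1 : U X₁ = a := by linarith
  have hbef' : ∀ x < X₁, U x < a := by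
    intro x hx
    have := hbef (-x) (by linarith)
    simp only [neg_neg] at this
    linarith
  have hN1 : SN g a 1 c (V X₂) := ⟨_, _, h.shift_s1 X₂, by simpa using hX2, by simp, hs2⟩
  have hN2 : SN (fun w => -g (1 - w)) (1 - a) 1 (-c) (V X₁) :=
    ⟨_, _, h.reflect.shift_s1 (-X₁), by simpa using hX1, by simp, hs1⟩
  have hpp : V X₁ = V X₂ := by
    rcases lt_trichotomy (V X₁) (V X₂) with hlt | hlt | hlt
    · exfalso
      obtain ⟨U', V', h', h0, h1, T, _, h2, _⟩ := scomp H₂ (Or.inr hN2) le_rfl hlt.le (Or.inr hlt)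
      have := (h'.unique H₂.lip (h.reflect.shift_s1 (-X₂)) (x₀ := 0) (by simp [h0, hX2])
        (by simp [h1])).1
      rw [this] at h2
      linarith [(hU (-(T + -X₂))).1]
    · exact hlt
    · exfalso
      obtain ⟨U', V', h', h0, h1, T, _, h2, _⟩ := scomp H₁ (Or.inr hN1) le_rfl hlt.le (Or.inr hlt)
      have := (h'.unique H₁.lip (h.shift_s1 X₁) (x₀ := 0) (by simp [h0, hX1])
        (by simp [h1])).1
      rw [this] at h2
      linarith [(hU (T + X₁)).2]
  have hXX : X₁ = X₂ := by
    rcases lt_trichotomy X₁ X₂ with hlt | hlt | hlt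
    · exfalso
      have := ((h.shift_s1 X₁).unique H₁.lip (h.shift_s1 X₂) (x₀ := 0) (by simp [hX1, hX2])
        (by simp [hpp])).1
      have := congrFun this (X₂ - X₁)
      simp only [sub_add_cancel] at this
      have h2 := haft (X₂ - X₁ + X₂) (by linarith)
      linarith
    · exact hlt
    · linarith [hbef' X₂ hlt]
  subst hXX
  refine ⟨X₁, V X₁, hX1, rfl, hN1, hN2, ?_⟩
  intro x
  rcases le_total X₁ x with hx | hx
  · have := (hs2 (x - X₁) (by linarith)).1
    simpa using this
  · have := (hs1 (X₁ - x) (by linarith)).1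
    simpa using this

/-- existence from matching data -/
lemma exists_prof (H₁ : Half g a 1 K M) (H₂ : Half (fun w => -g (1 - w)) (1 - a) 1 K' M')
    (h1 : SN g a 1 c p) (h2 : SN (fun w => -g (1 - w)) (1 - a) 1 (-c) p) :
    ∃ U V, Sol_s1 g c U V ∧ (∀ x, U x ∈ Icc (0:ℝ) 1) ∧
      Tendsto U atBot (𝓝 0) ∧ Tendsto U atTop (𝓝 1) := by
  obtain ⟨U, V, h, h0, hp, hs⟩ := h1
  obtain ⟨U', V', h', h0', hp', hs'⟩ := h2
  obtain ⟨rfl, rfl⟩ := h'.unique H₂.lip h.reflect (x₀ := 0) (by simp [h0, h0']) (by simp [hp, hp'])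
  have ht := stay_lim H₁ h h0 hs
  have ht' := stay_lim H₂ h' h0' hs'
  have ha1 := H₁.ab
  have ha0 : 0 < a := by linarith [H₂.ab]
  have hpos : ∀ x, 0 < V x := by
    intro x
    rcases le_total 0 x with hx | hx
    · exact (hs x hx).1
    · have := (hs' (-x) (by linarith)).1
      simpa using this
  have hm : StrictMono U := strictMono_of_deriv_pos fun x => by
    rw [(h.dU x).deriv]; exact hpos x
  refine ⟨U, V, h, ?_, ?_, ht⟩
  · intro x
    rcases le_total 0 x with hx | hx
    · refine ⟨?_, (hs x hx).2.le⟩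
      have := hm.monotone hx
      linarith
    · have := (hs' (-x) (by linarith)).2
      simp only [neg_neg] at this
      have := hm.monotone hx
      constructor <;> linarith
  · have := (ht'.comp tendsto_neg_atBot_atTop).const_sub 1
    convert! this using 2
    · simp
    · simp
end

section
variable {f : ℝ → ℝ} 

lemma exists_halves (hf : ContDiff ℝ 2 f)
    (hf0 : f 0 = 0) (hf1 : f 1 = 0)
    (hf'0 : deriv f 0 < 0) (hf'1 : deriv f 1 < 0)
    (ustar : ℝ) (hustar : ustar ∈ Ioo (0:ℝ) 1)
    (hfz : ∀ u ∈ Ioo (0:ℝ) 1, f u = 0 ↔ u = ustar) :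
    ∃ (g : ℝ → ℝ) (K : ℝ≥0) (M : ℝ), (∀ u ∈ Icc (0:ℝ) 1, g u = f u) ∧
      Half g ustar 1 K M ∧ Half (fun w => -g (1 - w)) (1 - ustar) 1 K M := by
  obtain ⟨hu0, hu1⟩ := hustar
  have hfd : ∀ x, HasDerivAt f (deriv f x) x := fun x =>
    (hf.differentiable (by norm_num) x).hasDerivAt
  have hneg : ∀ u ∈ Ioo 0 ustar, f u < 0 := by
    intro u hu
    by_contra hcon
    push Not at hcon
    obtain ⟨y, hy1, hy2, hy3⟩ := neg_after (hfd 0) hf'0 (S := Iio u) (Iio_mem_nhds hu.1)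
    rw [hf0] at hy2
    have hyu : y < u := hy3 ⟨hy1.le, le_rfl⟩
    obtain ⟨z, hz, hz0⟩ := intermediate_value_Icc hyu.le hf.continuous.continuousOn
      (show (0:ℝ) ∈ Icc (f y) (f u) from ⟨hy2.le, hcon⟩)
    have := (hfz z ⟨by linarith [hz.1], by linarith [hz.2, hu.2]⟩).1 hz0
    linarith [hz.2, hu.2]
  have hpos : ∀ u ∈ Ioo ustar 1, 0 < f u := by
    intro u hu
    by_contra hcon
    push Not at hcon
    have hd : HasDerivAt (fun x => - f (1 - x)) (deriv f 1) 0 := by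
      have h1 : HasDerivAt f (deriv f 1) (1 - 0) := by simpa using hfd 1
      have h2 := (h1.comp_const_sub 1 0).neg
      rw [neg_neg] at h2
      exact h2
    obtain ⟨y, hy1, hy2, hy3⟩ := neg_after hd hf'1 (S := Iio (1 - u)) (Iio_mem_nhds (by linarith [hu.2]))
    simp only [sub_zero, hf1] at hy2
    have hyu : y < 1 - u := hy3 ⟨hy1.le, le_rfl⟩
    obtain ⟨z, hz, hz0⟩ := intermediate_value_Icc (show u ≤ 1 - y by linarith)
      hf.continuous.continuousOn
      (show (0:ℝ) ∈ Icc (f u) (f (1 - y)) from ⟨hcon, by linarith⟩)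
    have := (hfz z ⟨by linarith [hz.1, hu.1], by linarith [hz.2]⟩).1 hz0
    linarith [hz.1, hu.1]
  have hus : f ustar = 0 := (hfz ustar ⟨hu0, hu1⟩).2 rfl
  obtain ⟨M, hM⟩ := (isCompact_Icc (a := (0:ℝ)) (b := 1)).exists_bound_of_continuousOn
    hf.continuous.continuousOn
  obtain ⟨C, hC⟩ := (isCompact_Icc (a := (0:ℝ)) (b := 1)).exists_bound_of_continuousOn
    (hf.continuous_deriv (by norm_num)).continuousOn
  have hC0 : 0 ≤ C := (norm_nonneg _).trans (hC 0 ⟨le_rfl, zero_le_one⟩)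
  set g : ℝ → ℝ := fun u => f (max 0 (min 1 u)) with hg
  have hmem : ∀ u : ℝ, max 0 (min 1 u) ∈ Icc (0:ℝ) 1 := fun u =>
    ⟨le_max_left _ _, max_le zero_le_one (min_le_left _ _)⟩
  have hgf : ∀ u ∈ Icc (0:ℝ) 1, g u = f u := by
    intro u hu
    simp only [hg]
    rw [min_eq_right hu.2, max_eq_right hu.1]
  have hlip : LipschitzWith ⟨C, hC0⟩ g := by
    apply LipschitzWith.of_dist_le_mul
    intro x y
    have := (convex_Icc (0:ℝ) 1).norm_image_sub_le_of_norm_hasDerivWithin_le (f := f)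
      (fun x _ => (hfd x).hasDerivWithinAt) hC (hmem y) (hmem x)
    rw [Real.dist_eq, Real.dist_eq]
    refine this.trans ?_
    change _ ≤ C * |x - y|
    gcongr
    have h1 := abs_max_sub_max_le_abs (min 1 x) (min 1 y) 0
    have h2 := abs_min_sub_min_le_max 1 x 1 y
    rw [max_comm 0, max_comm 0, Real.norm_eq_abs]
    refine h1.trans (h2.trans ?_)
    simp
  have hbd : ∀ u, |g u| ≤ M := fun u => hM _ (hmem u)
  refine ⟨g, ⟨C, hC0⟩, M, hgf, ⟨hlip, hbd, hu1, ?_, ?_, ?_⟩, ⟨?_, ?_, by linarith, ?_, ?_, ?_⟩⟩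
  · rw [hgf _ ⟨hu0.le, hu1.le⟩, hus]
  · rw [hgf _ ⟨zero_le_one, le_rfl⟩, hf1]
  · intro u hu
    rw [hgf _ ⟨by linarith [hu.1], hu.2.le⟩]
    exact hpos u hu
  · apply LipschitzWith.of_dist_le_mul
    intro x y
    have := hlip.dist_le_mul (1 - x) (1 - y)
    simp only [dist_neg_neg, dist_sub_left] at this ⊢
    exact this
  · intro u
    rw [abs_neg]; exact hbd _
  · rw [sub_sub_cancel, hgf _ ⟨hu0.le, hu1.le⟩, hus, neg_zero]
  · rw [sub_self, hgf _ ⟨le_rfl, zero_le_one⟩, hf0, neg_zero]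
  · intro u hu
    rw [hgf _ ⟨by linarith [hu.2], by linarith [hu.1]⟩]
    have := hneg (1 - u) ⟨by linarith [hu.2], by linarith [hu.1]⟩
    linarith
end
end TW

end

namespace TW

lemma profile_sol {f g : ℝ → ℝ} {c : ℝ} {U : ℝ → ℝ} (hgf : ∀ u ∈ Icc (0:ℝ) 1, g u = f u)
    (h : IsTravelingProfile f c U) : Sol_s1 g c U (deriv U) := by
  obtain ⟨h1, h2, h3, _, _⟩ := h
  refine ⟨fun x => (h1.differentiable (by norm_num) x).hasDerivAt, fun x => ?_⟩
  have hd : ContDiff ℝ 1 (deriv U) := by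
    have : ContDiff ℝ (1 + 1) U := by simpa [one_add_one_eq_two] using h1
    exact (contDiff_succ_iff_deriv.1 this).2.2
  have := (hd.differentiable (by norm_num) x).hasDerivAt
  have e : -c * deriv U x - g (U x) = deriv (deriv U) x := by
    rw [hgf _ (h2 x)]
    linarith [h3 x]
  rw [e]
  exact this

lemma sol_profile {f g : ℝ → ℝ} {c : ℝ} {U V : ℝ → ℝ} (hgf : ∀ u ∈ Icc (0:ℝ) 1, g u = f u)
    (hgc : Continuous g)
    (h : Sol_s1 g c U V) (hU : ∀ x, U x ∈ Icc (0:ℝ) 1)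
    (hb : Tendsto U atBot (nhds 0)) (ht : Tendsto U atTop (nhds 1)) : IsTravelingProfile f c U := by
  have e1 : deriv U = V := funext fun x => (h.dU x).deriv
  have e2 : deriv V = fun x => -c * V x - g (U x) := funext fun x => (h.dV x).deriv
  refine ⟨?_, hU, ?_, hb, ht⟩
  · have hV : ContDiff ℝ 1 V := by
      rw [contDiff_one_iff_deriv]
      refine ⟨fun x => (h.dV x).differentiableAt, ?_⟩
      rw [e2]
      exact (continuous_const.mul h.contV).sub (hgc.comp h.contU)
    have : ContDiff ℝ (1 + 1) U := by
      rw [contDiff_succ_iff_deriv]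
      refine ⟨fun x => (h.dU x).differentiableAt, by simp, ?_⟩
      rw [e1]; exact hV
    simpa [one_add_one_eq_two] using this
  · intro x
    rw [e1, e2, ← hgf _ (hU x)]
    ring

lemma profile_data {f g : ℝ → ℝ} {a c : ℝ} {K : NNReal} {M : ℝ} {U : ℝ → ℝ}
    (hgf : ∀ u ∈ Icc (0:ℝ) 1, g u = f u) (hf0 : f 0 = 0)
    (H₁ : Half g a 1 K M) (H₂ : Half (fun w => -g (1 - w)) (1 - a) 1 K M)
    (h : IsTravelingProfile f c U) :
    ∃ X p, U X = a ∧ deriv U X = p ∧ SN g a 1 c p ∧ SN (fun w => -g (1 - w)) (1 - a) 1 (-c) p ∧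
      ∀ x, 0 < deriv U x := by
  have hs := profile_sol hgf h
  obtain ⟨h1, h2, h3, hb, ht⟩ := h
  refine prof H₁ H₂ hs ?_ hb ht
  intro x
  constructor
  · rcases (h2 x).1.eq_or_lt with h0 | h0
    · exfalso
      have hmin : IsLocalMin U x := Eventually.of_forall fun y => by rw [← h0]; exact (h2 y).1
      have hg0 : g 0 = 0 := by rw [hgf 0 ⟨le_rfl, zero_le_one⟩, hf0]
      have := (hs.unique H₁.lip (Sol_s1.const c hg0) h0.symm hmin.deriv_eq_zero).1
      rw [this] at ht
      have := tendsto_nhds_unique ht tendsto_const_nhds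
      norm_num at this
    · exact h0
  · rcases (h2 x).2.eq_or_lt with h0 | h0
    · exfalso
      have hmax : IsLocalMax U x := Eventually.of_forall fun y => by rw [h0]; exact (h2 y).2
      have := (hs.unique H₁.lip (Sol_s1.const c H₁.gb) h0 hmax.deriv_eq_zero).1
      rw [this] at hb
      have := tendsto_nhds_unique hb tendsto_const_nhds
      norm_num at this
    · exact h0

end TW

/-- In the bistable case (A2) there is a unique speed `c*` admitting a
traveling profile; the profile is monotone increasing, unique up to translation,
and no other speed admits a profile. -/
theorem bistable_unique_speed_traveling_profile
    (f : ℝ → ℝ) (hf : ContDiff ℝ 2 f)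
    (hf0 : f 0 = 0) (hf1 : f 1 = 0)
    (hf'0 : deriv f 0 < 0) (hf'1 : deriv f 1 < 0)
    (ustar : ℝ) (hustar : ustar ∈ Ioo (0:ℝ) 1)
    (hfz : ∀ u ∈ Ioo (0:ℝ) 1, f u = 0 ↔ u = ustar)
    (hf'u : 0 < deriv f ustar) :
    ∃ cstar : ℝ,
      (∃ U, IsTravelingProfile f cstar U) ∧
      (∀ U, IsTravelingProfile f cstar U → StrictMono U) ∧
      (∀ U V, IsTravelingProfile f cstar U → IsTravelingProfile f cstar V →
        ∃ τ : ℝ, ∀ x, V x = U (x + τ)) ∧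
      (∀ c, c ≠ cstar → ¬ ∃ U, IsTravelingProfile f c U) := by
  obtain ⟨g, K, M, hgf, H₁, H₂⟩ := TW.exists_halves hf hf0 hf1 hf'0 hf'1 ustar hustar hfz
  obtain ⟨c, p, hN1, hN2⟩ := TW.matching H₁ H₂
  refine ⟨c, ?_, ?_, ?_, ?_⟩
  · obtain ⟨U, V, hs, hU, hb, ht⟩ := TW.exists_prof H₁ H₂ hN1 hN2
    exact ⟨U, TW.sol_profile hgf H₁.lip.continuous hs hU hb ht⟩
  · intro U h
    obtain ⟨X, q, _, _, _, _, hpos⟩ := TW.profile_data hgf hf0 H₁ H₂ h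
    exact strictMono_of_deriv_pos hpos
  · intro U V hU hV
    obtain ⟨X, q, h1, h2, h3, h4, _⟩ := TW.profile_data hgf hf0 H₁ H₂ hU
    obtain ⟨X', q', h1', h2', h3', h4', _⟩ := TW.profile_data hgf hf0 H₁ H₂ hV
    obtain ⟨_, hq⟩ := TW.SN_unique H₁ H₂ h3 h4 h3' h4'
    refine ⟨X - X', ?_⟩
    have := ((TW.profile_sol hgf hV).unique H₁.lip ((TW.profile_sol hgf hU).shift_s1 (X - X'))
      (x₀ := X') (by simp [h1, h1']) (by simp [h2, h2', hq])).1
    exact fun x => congrFun this x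
  · rintro c' hc ⟨U, hU⟩
    obtain ⟨X, q, h1, h2, h3, h4, _⟩ := TW.profile_data hgf hf0 H₁ H₂ hU
    exact hc (TW.SN_unique H₁ H₂ h3 h4 hN1 hN2).1
end

section
/- Let f ∈ C²([0,1]) with f(0) = f(1) = 0, and let U : ℝ → (0,1) be a C², strictly increasing solution of U''(x) + c·U'(x) + f(U(x)) = 0 for all x ∈ ℝ, with U(x) → 0 and U'(x) → 0 as x → −∞, U(x) → 1 and U'(x) → 0 as x → +∞, and with (U')² integrable on ℝ. Then c · ∫_ℝ (U'(x))² dx = − ∫_0^1 f(u) du. In particular, the sign of the wave speed c is the opposite of the sign of ∫_0^1 f(u) du. -/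
open Set Filter MeasureTheory

/-- For a strictly increasing traveling profile `U` of speed `c`,
`c ∫_ℝ (U')² dx = -∫_0^1 f(u) du`; in particular `sign c = - sign ∫_0^1 f`. -/
theorem wave_speed_sign
    (f : ℝ → ℝ) (hf : ContDiff ℝ 2 f) (hf0 : f 0 = 0) (hf1 : f 1 = 0)
    (c : ℝ) (U : ℝ → ℝ) (hU : ContDiff ℝ 2 U)
    (hrange : ∀ x, U x ∈ Ioo (0:ℝ) 1) (hmono : StrictMono U)
    (hode : ∀ x, deriv (deriv U) x + c * deriv U x + f (U x) = 0)
    (hUbot : Tendsto U atBot (nhds 0))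
    (hU'bot : Tendsto (deriv U) atBot (nhds 0))
    (hUtop : Tendsto U atTop (nhds 1))
    (hU'top : Tendsto (deriv U) atTop (nhds 0))
    (hint : Integrable (fun x => (deriv U x) ^ 2)) :
    c * ∫ x, (deriv U x) ^ 2 = -∫ u in (0:ℝ)..1, f u ∧
    Real.sign c = -Real.sign (∫ u in (0:ℝ)..1, f u) := by
  have hfc : Continuous f := hf.continuous
  have hUd : Differentiable ℝ U := hU.differentiable (by norm_num)
  have hU' : ContDiff ℝ 1 (deriv U) := by
    have h : ContDiff ℝ (1 + 1) U := by
      convert hU using 1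
      norm_num
    exact (contDiff_succ_iff_deriv.mp h).2.2
  have hU'd : Differentiable ℝ (deriv U) := hU'.differentiable (by norm_num)
  have hF : ∀ y, HasDerivAt (fun y => ∫ u in (0:ℝ)..y, f u) (f y) y := fun y =>
    intervalIntegral.integral_hasDerivAt_right (hfc.intervalIntegrable _ _)
      hfc.aestronglyMeasurable.stronglyMeasurableAtFilter hfc.continuousAt
  have hFc : Continuous (fun y => ∫ u in (0:ℝ)..y, f u) :=
    continuous_iff_continuousAt.mpr fun y => (hF y).continuousAt
  have hE : ∀ x, HasDerivAt (fun x => -((deriv U x) ^ 2 / 2 + ∫ u in (0:ℝ)..(U x), f u))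
      (c * (deriv U x) ^ 2) x := by
    intro x
    have h1 := (((hU'd x).hasDerivAt.pow 2).div_const 2).add
      ((hF (U x)).comp x (hUd x).hasDerivAt)
    refine h1.neg.congr_deriv ?_
    have := hode x
    simp only [Nat.cast_ofNat, Nat.add_one_sub_one, pow_one]
    linear_combination (-deriv U x) * this
  have hb : Tendsto (fun x => -((deriv U x) ^ 2 / 2 + ∫ u in (0:ℝ)..(U x), f u)) atBot
      (nhds (-((0:ℝ) ^ 2 / 2 + ∫ u in (0:ℝ)..0, f u))) :=
    (((hU'bot.pow 2).div_const 2).add ((hFc.tendsto 0).comp hUbot)).neg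
  have ht : Tendsto (fun x => -((deriv U x) ^ 2 / 2 + ∫ u in (0:ℝ)..(U x), f u)) atTop
      (nhds (-((0:ℝ) ^ 2 / 2 + ∫ u in (0:ℝ)..1, f u))) :=
    (((hU'top.pow 2).div_const 2).add ((hFc.tendsto 1).comp hUtop)).neg
  have key : c * ∫ x, (deriv U x) ^ 2 = -∫ u in (0:ℝ)..1, f u := by
    have h := integral_of_hasDerivAt_of_tendsto hE (hint.const_mul c) hb ht
    rw [integral_const_mul] at h
    simpa using h
  refine ⟨key, ?_⟩
  have hpos : 0 < ∫ x, (deriv U x) ^ 2 := by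
    refine lt_of_le_of_ne (integral_nonneg fun x => sq_nonneg _) fun h0 => ?_
    have h1 := (integral_eq_zero_iff_of_nonneg (fun x => sq_nonneg (deriv U x)) hint).mp h0.symm
    have h2 := (Continuous.ae_eq_iff_eq volume (hU'.continuous.pow 2) continuous_const).mp h1
    have h3 : ∀ x, deriv U x = 0 := fun x => by
      have : deriv U x ^ 2 = 0 := congrFun h2 x
      simpa using this
    have := is_const_of_deriv_eq_zero hUd h3 0 1
    exact absurd this (hmono zero_lt_one).ne
  have hI : ∫ u in (0:ℝ)..1, f u = -(c * ∫ x, (deriv U x) ^ 2) := by rw [key, neg_neg]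
  rw [hI]
  rcases lt_trichotomy c 0 with h | h | h
  · rw [Real.sign_of_neg h, Real.sign_of_pos (by nlinarith)]
  · simp [h]
  · rw [Real.sign_of_pos h, Real.sign_of_neg (by nlinarith)]
    norm_num
end

section
/- Let f be monostable (assumption (A1)), and let c* < 0 be the threshold speed such that (uncontrolled) traveling profiles exist exactly for speeds ≤ c*. Then for every c > c* there exists a unique continuous, nondecreasing function U : ℝ → [0,1] such that: U(x) = 0 for all x ≤ 0; U is C² on (0,∞) and satisfies U''(x) + c·U'(x) + f(U(x)) = 0 for all x > 0; and U(x) → 1 as x → +∞. Moreover the right derivative U'(0+) exists and is strictly positive. -/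
open Set Filter

/-- The optimal controlled profile of problem (P1): continuous, nondecreasing,
vanishing for `x ≤ 0`, solving the traveling wave ODE on `(0,∞)`, tending to `1`. -/
def IsOptimalP1Profile (f : ℝ → ℝ) (c : ℝ) (U : ℝ → ℝ) : Prop :=
  Continuous U ∧ Monotone U ∧ (∀ x, U x ∈ Icc (0:ℝ) 1) ∧
  (∀ x ≤ (0:ℝ), U x = 0) ∧ ContDiffOn ℝ 2 U (Ioi 0) ∧
  (∀ x > (0:ℝ), deriv (deriv U) x + c * deriv U x + f (U x) = 0) ∧
  Tendsto U atTop (nhds 1)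


theorem aux_global_flow (v : ℝ × ℝ → ℝ × ℝ) (hv : ContDiff ℝ 1 v) (K : NNReal)
    (hK : LipschitzWith K v) (x : ℝ × ℝ) :
    ∃ γ : ℝ → ℝ × ℝ, γ 0 = x ∧ ∀ t, HasDerivAt γ (v (γ t)) t := by
  have hpos : (0:ℝ) < 1 / (2 * (K + 1)) := by positivity
  have h := exists_isMIntegralCurve_of_isMIntegralCurveOn (I := modelWithCornersSelf ℝ (ℝ × ℝ))
    (M := ℝ × ℝ) (v := v) (contMDiff_vectorSpace_iff_contDiff.2 hv) hpos ?_ x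
  · obtain ⟨γ, h0, h1⟩ := h
    refine ⟨γ, h0, fun t => ?_⟩
    have h2 : HasFDerivAt γ ((1 : ℝ →L[ℝ] ℝ).smulRight (v (γ t)) : ℝ →L[ℝ] ℝ × ℝ) t :=
      hasMFDerivAt_iff_hasFDerivAt.1 (h1 t)
    have h2 := h2.hasDerivAt
    simpa using h2
  · intro y
    set ε : ℝ := 1 / (2 * (K + 1)) with hε
    have hpl : IsPicardLindelof (fun _ : ℝ => v) (tmin := -ε) (tmax := ε)
        ⟨0, by constructor <;> linarith⟩ y (‖v y‖₊) 0 (‖v y‖₊ + K * ‖v y‖₊) K := by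
      apply IsPicardLindelof.of_time_independent
      · intro z hz
        have h1 := hK.dist_le_mul z y
        rw [Metric.mem_closedBall] at hz
        rw [dist_eq_norm] at h1
        have h2 : ‖v z‖ ≤ ‖v z - v y‖ + ‖v y‖ := by
          simpa using norm_add_le (v z - v y) (v y)
        push_cast at hz ⊢
        have h3 : (K:ℝ) * dist z y ≤ K * ‖v y‖ := by gcongr
        linarith
      · exact hK.lipschitzOnWith
      · simp only [sub_zero, zero_sub, neg_neg, max_self]
        push_cast
        have : (‖v y‖ + K * ‖v y‖) * ε = ‖v y‖ / 2 := by
          rw [hε]; field_simp; ring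
        rw [this]; simp
    obtain ⟨α, h0, h1⟩ := hpl.exists_eq_forall_mem_Icc_hasDerivWithinAt₀
    refine ⟨α, h0, fun t ht => ?_⟩
    have h2 := (h1 t (Ioo_subset_Icc_self ht)).mono Ioo_subset_Icc_self
    have h3 : HasFDerivWithinAt α ((1 : ℝ →L[ℝ] ℝ).smulRight (v (α t)) : ℝ →L[ℝ] ℝ × ℝ)
        (Ioo (-ε) ε) t := by
      convert! h2.hasFDerivWithinAt using 1
    exact hasMFDerivWithinAt_iff_hasFDerivWithinAt.2 h3

/-- If the derivative is negative, values just to the right are smaller. -/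
theorem aux_neg_right (g : ℝ → ℝ) (g' a : ℝ) (h : HasDerivAt g g' a) (hn : g' < 0) :
    ∀ᶠ t in nhdsWithin a (Ioi a), g t < g a := by
  have h1 := (hasDerivAt_iff_tendsto_slope.1 h).eventually (gt_mem_nhds hn)
  have h2 : ∀ᶠ t in nhdsWithin a (Ioi a), slope g a t < 0 :=
    h1.filter_mono (nhdsWithin_mono _ (fun x hx => ne_of_gt hx))
  filter_upwards [h2, self_mem_nhdsWithin] with t ht hta
  have hta : a < t := hta
  rw [slope_def_field] at ht
  by_contra hcon
  push Not at hcon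
  have : 0 ≤ (g t - g a) / (t - a) := div_nonneg (by linarith) (by linarith)
  linarith

/-- If `g` converges at infinity and `g'` converges, then `g' → 0`. -/
theorem aux_deriv_lim (g g' : ℝ → ℝ) (a l m : ℝ) (hd : ∀ x > a, HasDerivAt g (g' x) x)
    (hg : Tendsto g atTop (nhds l)) (hm : Tendsto g' atTop (nhds m)) : m = 0 := by
  have hdiff : Tendsto (fun x => g (x + 1) - g x) atTop (nhds 0) := by
    have := (hg.comp (tendsto_atTop_add_const_right atTop (1:ℝ) tendsto_id)).sub hg
    simpa using this
  have hex : ∀ x, ∃ y, x > a → (x < y ∧ g' y = g (x + 1) - g x) := by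
    intro x
    by_cases hx : x > a
    · obtain ⟨y, hy, h⟩ := exists_hasDerivAt_eq_slope g g' (show x < x + 1 by linarith)
        (fun z hz => (hd z (lt_of_lt_of_le hx hz.1)).continuousAt.continuousWithinAt)
        (fun z hz => hd z (lt_trans hx hz.1))
      exact ⟨y, fun _ => ⟨hy.1, by simpa using h⟩⟩
    · exact ⟨0, fun h => absurd h hx⟩
  choose y hy using hex
  have hya : Tendsto y atTop atTop := by
    refine tendsto_atTop_mono' _ ?_ tendsto_id
    filter_upwards [eventually_gt_atTop a] with x hx using (hy x hx).1.le
  have h1 := hm.comp hya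
  refine tendsto_nhds_unique h1 (hdiff.congr' ?_)
  filter_upwards [eventually_gt_atTop a] with x hx using (hy x hx).2.symm

theorem aux_lim (f : ℝ → ℝ) (hf : Continuous f) (hpos : ∀ u ∈ Icc (0:ℝ) 1, 0 ≤ f u)
    (U P : ℝ → ℝ) (a c L : ℝ) (hU : ∀ x > a, HasDerivAt U (P x) x)
    (hP : ∀ x > a, HasDerivAt P (-c * P x - f (U x)) x)
    (hmem : ∀ x > a, U x ∈ Icc (0:ℝ) 1) (hL : Tendsto U atTop (nhds L)) :
    Tendsto P atTop (nhds 0) ∧ f L = 0 := by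
  set Q : ℝ → ℝ := fun x => P x + c * U x with hQ
  have hQd : ∀ x > a, HasDerivAt Q (-f (U x)) x := by
    intro x hx
    have := (hP x hx).add ((hU x hx).const_mul c)
    convert! this using 1; ring
  have hanti : AntitoneOn Q (Ioi a) := by
    apply antitoneOn_of_deriv_nonpos (convex_Ioi a)
    · exact fun x hx => (hQd x hx).continuousAt.continuousWithinAt
    · rw [interior_Ioi]; exact fun x hx => (hQd x hx).differentiableAt.differentiableWithinAt
    · rw [interior_Ioi]; intro x hx
      rw [(hQd x hx).deriv]; linarith [hpos _ (hmem x hx)]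
  have hanti' : Antitone (fun x => Q (max x (a + 1))) := by
    intro x y hxy
    apply hanti
    · exact lt_of_lt_of_le (lt_add_one a) (le_max_right _ _)
    · exact lt_of_lt_of_le (lt_add_one a) (le_max_right _ _)
    · exact max_le_max hxy le_rfl
  have heq : (fun x => Q (max x (a + 1))) =ᶠ[atTop] Q := by
    filter_upwards [eventually_ge_atTop (a+1)] with x hx
    rw [max_eq_left hx]
  have hfU : Tendsto (fun x => -f (U x)) atTop (nhds (-f L)) :=
    ((hf.tendsto L).comp hL).neg
  rcases tendsto_atTop_of_antitone hanti' with hbot | ⟨l, hl⟩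
  · exfalso
    have hQb := hbot.congr' heq
    have h1 : ∀ᶠ x in atTop, Q x ≤ -|c| - 2 := hQb.eventually_le_atBot _
    obtain ⟨N, hN⟩ := eventually_atTop.1 (h1.and (eventually_gt_atTop a))
    obtain ⟨y, hy, h⟩ := exists_hasDerivAt_eq_slope U P (show N < N + 1 by linarith)
        (fun z hz => (hU z (hN z hz.1).2).continuousAt.continuousWithinAt)
        (fun z hz => hU z (hN z hz.1.le).2)
    have h2 := (hN y hy.1.le)
    have h3 := hmem y h2.2
    have h4 := hmem N (hN N le_rfl).2
    have h5 := hmem (N+1) (hN (N+1) (by linarith)).2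
    have h6 : -(c * U y) ≤ |c| := by
      have : |c * U y| ≤ |c| := by
        rw [abs_mul, abs_of_nonneg h3.1]; nlinarith [abs_nonneg c, h3.2]
      exact (neg_le_abs _).trans this
    have h7 : P y + c * U y ≤ -|c| - 2 := h2.1
    simp at h
    linarith [h4.2, h5.1]
  · have hQl := hl.congr' heq
    have hPl : Tendsto P atTop (nhds (l - c * L)) := by
      have := hQl.sub (hL.const_mul c)
      refine this.congr (fun x => ?_)
      simp [hQ]
    have h0 := aux_deriv_lim U P a L _ hU hL hPl
    rw [h0] at hPl
    have h1 := aux_deriv_lim Q _ a l _ hQd hQl hfU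
    exact ⟨hPl, by linarith⟩

theorem aux_lip (F : ℝ → ℝ) (KF : NNReal) (hL : LipschitzWith KF F) (c : ℝ) :
    ∃ K : NNReal, LipschitzWith K (fun z : ℝ × ℝ => (z.2, -c * z.2 - F z.1)) := by
  have h1 : LipschitzWith _ (fun z : ℝ × ℝ => -c * z.2) :=
    ((-c) • ContinuousLinearMap.snd ℝ ℝ ℝ).lipschitz
  have h2 := hL.comp (LipschitzWith.prod_fst (α := ℝ) (β := ℝ))
  exact ⟨_, LipschitzWith.prod_snd.prodMk (h1.sub h2)⟩

theorem aux_unique (F : ℝ → ℝ) (KF : NNReal) (hL : LipschitzWith KF F) (c : ℝ)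
    (e : ℝ) (he : F e = 0) (a b t₀ : ℝ) (ht : t₀ ∈ Ioo a b) (u p : ℝ → ℝ)
    (hu : ∀ t ∈ Ioo a b, HasDerivAt u (p t) t)
    (hp : ∀ t ∈ Ioo a b, HasDerivAt p (-c * p t - F (u t)) t)
    (h1 : u t₀ = e) (h2 : p t₀ = 0) : ∀ t ∈ Ioo a b, u t = e := by
  obtain ⟨K, hK⟩ := aux_lip F KF hL c
  have := ODE_solution_unique_of_mem_Ioo (v := fun _ z => ((z.2, -c * z.2 - F z.1) : ℝ × ℝ))
    (s := fun _ => univ) (K := K) (f := fun t => (u t, p t)) (g := fun _ => (e, 0))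
    (a := a) (b := b) (t₀ := t₀)
    (fun t _ => hK.lipschitzOnWith) ht
    (fun t ht => ⟨(hu t ht).prodMk (hp t ht), trivial⟩)
    (fun t ht => ⟨by simpa [he] using! hasDerivAt_const t ((e, 0) : ℝ × ℝ), trivial⟩)
    (by simp [h1, h2])
  intro t ht
  have h3 := this ht
  exact congrArg Prod.fst h3

/-- uniform positivity is an open condition -/
theorem aux_open (g : ℝ → ℝ → ℝ) (hg : ∀ d, Continuous (g d)) (C : ℝ)
    (d t : ℝ) (ht : 0 ≤ t) (hC : ∀ d' d, ∀ s ∈ Icc 0 t, |g d' s - g d s| ≤ |d' - d| * C)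
    (h : ∀ s ∈ Icc 0 t, 0 < g d s) :
    ∀ᶠ d' in nhds d, ∀ s ∈ Icc 0 t, 0 < g d' s := by
  obtain ⟨s₀, hs₀, hmin⟩ := isCompact_Icc.exists_isMinOn (nonempty_Icc.2 ht)
    (hg d).continuousOn
  have h0 := h s₀ hs₀
  have hev : ∀ᶠ d' in nhds d, |d' - d| * C < g d s₀ := by
    have : Continuous (fun d' : ℝ => |d' - d| * C) := by fun_prop
    have h1 := this.tendsto d
    simp only [sub_self, abs_zero, zero_mul] at h1
    exact h1.eventually (gt_mem_nhds h0)
  filter_upwards [hev] with d' hd' s hs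
  have h1 := hC d' d s hs
  have h2 : g d s₀ ≤ g d s := hmin hs
  have h3 := neg_abs_le (g d' s - g d s)
  linarith

theorem aux_shoot (F : ℝ → ℝ) (hF : ContDiff ℝ 1 F) (KF : NNReal) (hL : LipschitzWith KF F)
    (M : ℝ) (hM : ∀ u, |F u| ≤ M) (hF1 : F 1 = 0)
    (hpos : ∀ u ∈ Ioo (0:ℝ) 1, 0 < F u) (c : ℝ) :
    ∃ u p : ℝ → ℝ, (∀ t, HasDerivAt u (p t) t) ∧ (∀ t, HasDerivAt p (-c * p t - F (u t)) t) ∧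
      u 0 = 1 / 2 ∧ ∀ t ≥ 0, 0 < p t ∧ u t < 1 := by
  obtain ⟨K, hK⟩ := aux_lip F KF hL c
  have hv : ContDiff ℝ 1 (fun z : ℝ × ℝ => ((z.2, -c * z.2 - F z.1) : ℝ × ℝ)) := by fun_prop
  choose γ hγ0 hγ using fun d : ℝ => aux_global_flow _ hv K hK ((1/2, d) : ℝ × ℝ)
  set u : ℝ → ℝ → ℝ := fun d t => (γ d t).1 with hudef
  set p : ℝ → ℝ → ℝ := fun d t => (γ d t).2 with hpdef
  have hu : ∀ d t, HasDerivAt (u d) (p d t) t := fun d t => (hγ d t).fst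
  have hp : ∀ d t, HasDerivAt (p d) (-c * p d t - F (u d t)) t := fun d t => (hγ d t).snd
  have huc : ∀ d, Continuous (u d) := fun d =>
    continuous_iff_continuousAt.2 fun t => (hu d t).continuousAt
  have hpc : ∀ d, Continuous (p d) := fun d =>
    continuous_iff_continuousAt.2 fun t => (hp d t).continuousAt
  have hu0 : ∀ d, u d 0 = 1/2 := fun d => by simp [hudef, hγ0]
  have hp0 : ∀ d, p d 0 = d := fun d => by simp [hpdef, hγ0]
  have hγc : ∀ d, Continuous (γ d) := fun d =>
    continuous_iff_continuousAt.2 fun t => (hγ d t).continuousAt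
  have hG : ∀ T d' d, ∀ s ∈ Icc 0 T, dist (γ d' s) (γ d s) ≤ |d' - d| * Real.exp (K * T) := by
    intro T d' d s hs
    have := dist_le_of_trajectories_ODE (v := fun _ z => ((z.2, -c * z.2 - F z.1) : ℝ × ℝ))
      (fun _ => hK) (f := γ d') (g := γ d) (a := 0) (b := T) (δ := |d' - d|)
      (hγc d').continuousOn (fun t _ => (hγ d' t).hasDerivWithinAt)
      (hγc d).continuousOn (fun t _ => (hγ d t).hasDerivWithinAt)
      (by rw [hγ0, hγ0, Prod.dist_eq]; simp [Real.dist_eq]) s hs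
    refine this.trans ?_
    gcongr
    linarith [hs.2]
  have hGu : ∀ T d' d, ∀ s ∈ Icc 0 T, |u d' s - u d s| ≤ |d' - d| * Real.exp (K * T) := by
    intro T d' d s hs
    refine le_trans ?_ (hG T d' d s hs)
    rw [Prod.dist_eq, Real.dist_eq]; exact le_max_left _ _
  have hGp : ∀ T d' d, ∀ s ∈ Icc 0 T, |p d' s - p d s| ≤ |d' - d| * Real.exp (K * T) := by
    intro T d' d s hs
    refine le_trans ?_ (hG T d' d s hs)
    rw [Prod.dist_eq, Real.dist_eq (γ d' s).2]; exact le_max_right _ _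
  let A : Set ℝ := {d | ∃ t ≥ 0, 1 < u d t ∧ ∀ s ∈ Icc 0 t, 0 < p d s}
  let B : Set ℝ := {d | ∃ t ≥ 0, p d t < 0 ∧ ∀ s ∈ Icc 0 t, 0 < 1 - u d s}
  have hcont_u : ∀ t ≥ 0, Continuous (fun d => u d t) := by
    intro t ht
    have : LipschitzWith (Real.exp (K * t)).toNNReal (fun d => u d t) := by
      apply LipschitzWith.of_dist_le_mul
      intro x y
      rw [Real.dist_eq, Real.dist_eq, Real.coe_toNNReal _ (Real.exp_pos _).le, mul_comm]
      exact hGu t x y t ⟨ht, le_rfl⟩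
    exact this.continuous
  have hcont_p : ∀ t ≥ 0, Continuous (fun d => p d t) := by
    intro t ht
    have : LipschitzWith (Real.exp (K * t)).toNNReal (fun d => p d t) := by
      apply LipschitzWith.of_dist_le_mul
      intro x y
      rw [Real.dist_eq, Real.dist_eq, Real.coe_toNNReal _ (Real.exp_pos _).le, mul_comm]
      exact hGp t x y t ⟨ht, le_rfl⟩
    exact this.continuous
  have hA : IsOpen A := by
    rw [isOpen_iff_eventually]
    rintro d ⟨t, ht, h1, h2⟩
    filter_upwards [(hcont_u t ht).tendsto d |>.eventually (lt_mem_nhds h1),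
      aux_open p hpc _ d t ht (hGp t) h2] with d' h3 h4
    exact ⟨t, ht, h3, h4⟩
  have hB : IsOpen B := by
    rw [isOpen_iff_eventually]
    rintro d ⟨t, ht, h1, h2⟩
    filter_upwards [(hcont_p t ht).tendsto d |>.eventually (gt_mem_nhds h1),
      aux_open (fun d s => 1 - u d s) (fun d => continuous_const.sub (huc d)) _ d t ht
        (fun d' d s hs => by
          have := hGu t d' d s hs
          rw [← abs_neg] at this
          convert! this using 2
          ring) h2] with d' h3 h4
    exact ⟨t, ht, h3, h4⟩
  have hAB : ∀ d, d ∈ A → d ∈ B → False := by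
    rintro d ⟨t, ht, h1, h2⟩ ⟨t', ht', h1', h2'⟩
    rcases le_total t t' with h | h
    · linarith [h2' t ⟨ht, h⟩]
    · linarith [h2 t' ⟨ht', h⟩]
  have h0B : (0:ℝ) ∈ B := by
    have hd := hp 0 0
    have hlt : -c * p 0 0 - F (u 0 0) < 0 := by
      rw [hp0, hu0]; linarith [hpos (1/2) ⟨by norm_num, by norm_num⟩]
    have h1 := aux_neg_right _ _ _ hd hlt
    have h2 : ∀ᶠ t in nhds (0:ℝ), u 0 t < 1 :=
      (huc 0).tendsto 0 |>.eventually (gt_mem_nhds (by rw [hu0]; norm_num))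
    obtain ⟨ε, hε, h3⟩ := Metric.eventually_nhds_iff.1 h2
    have h4 : ∀ᶠ t in nhdsWithin (0:ℝ) (Ioi 0), t < ε :=
      (gt_mem_nhds hε).filter_mono nhdsWithin_le_nhds
    obtain ⟨t, h5, h6, h7⟩ := (h1.and (h4.and self_mem_nhdsWithin)).exists
    have h7 : 0 < t := h7
    refine ⟨t, h7.le, by simpa [hp0] using h5, fun s hs => ?_⟩
    have := h3 (y := s) (by rw [Real.dist_eq, sub_zero, abs_of_nonneg hs.1]; linarith [hs.2])
    linarith
  have hMnn : 0 ≤ M := (abs_nonneg _).trans (hM 0)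
  set D : ℝ := Real.exp |c| * M + Real.exp |c| with hD
  have hDpos : 0 < D := by positivity
  have hDA : D ∈ A := by
    have hE : ∀ t, HasDerivAt (fun t => Real.exp (c * t) * p D t)
        (- (Real.exp (c * t) * F (u D t))) t := by
      intro t
      have h1 : HasDerivAt (fun t => Real.exp (c * t)) (Real.exp (c * t) * c) t := by
        have := ((hasDerivAt_id t).const_mul c).exp
        simpa using! this
      have := h1.mul (hp D t)
      convert! this using 1
      ring
    have hcs : ∀ s ∈ Icc (0:ℝ) 1, |c * s| ≤ |c| := by
      intro s hs
      rw [abs_mul, abs_of_nonneg hs.1]; nlinarith [abs_nonneg c, hs.2]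
    have hbd : ∀ s ∈ Icc (0:ℝ) 1, 1 ≤ p D s := by
      intro s hs
      have h1 := Convex.norm_image_sub_le_of_norm_hasDerivWithin_le
        (f := fun t => Real.exp (c * t) * p D t) (s := Icc (0:ℝ) 1)
        (C := Real.exp |c| * M)
        (fun t _ => (hE t).hasDerivWithinAt) (fun t ht => by
          rw [norm_neg, Real.norm_eq_abs, abs_mul, Real.abs_exp]
          gcongr
          · exact (le_abs_self _).trans (hcs t ht)
          · exact hM _) (convex_Icc 0 1) (left_mem_Icc.2 zero_le_one) hs
      simp only [mul_zero, Real.exp_zero, one_mul, hp0, sub_zero, Real.norm_eq_abs] at h1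
      have h2 := neg_abs_le (Real.exp (c * s) * p D s - D)
      have h3 : Real.exp |c| * M * |s| ≤ Real.exp |c| * M := by
        rw [abs_of_nonneg hs.1]
        have : 0 ≤ Real.exp |c| * M := by positivity
        nlinarith [hs.2]
      have h4 : Real.exp |c| ≤ Real.exp (c * s) * p D s := by linarith
      have h5 : Real.exp (c * s) ≤ Real.exp |c| :=
        Real.exp_le_exp.2 ((le_abs_self _).trans (hcs s hs))
      have h6 := Real.exp_pos (c * s)
      by_contra hcon
      push Not at hcon
      nlinarith
    refine ⟨1, zero_le_one, ?_, fun s hs => by linarith [hbd s hs]⟩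
    obtain ⟨y, hy, h⟩ := exists_hasDerivAt_eq_slope (u D) (p D) (zero_lt_one)
        (huc D).continuousOn (fun z _ => hu D z)
    have h1 := hbd y (Ioo_subset_Icc_self hy)
    rw [hu0] at h
    simp at h
    linarith
  obtain ⟨d, hd, hdA, hdB⟩ : ∃ d ∈ Icc 0 D, d ∉ A ∧ d ∉ B := by
    by_contra hcon
    push Not at hcon
    have := isPreconnected_Icc (a := (0:ℝ)) (b := D) A B hA hB
      (fun d hd => by
        by_cases h : d ∈ A
        · exact Or.inl h
        · exact Or.inr (hcon d hd h))
      ⟨D, right_mem_Icc.2 hDpos.le, hDA⟩ ⟨0, left_mem_Icc.2 hDpos.le, h0B⟩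
    obtain ⟨x, _, h1, h2⟩ := this
    exact hAB x h1 h2
  have hdpos : 0 < d := by
    rcases hd.1.lt_or_eq with h | h
    · exact h
    · exact absurd (h ▸ h0B) hdB
  have hnn : ∀ t ≥ 0, (∀ s ∈ Icc 0 t, u d s < 1) → ∀ s ∈ Icc 0 t, 0 ≤ p d s := by
    intro t ht h s hs
    by_contra hcon
    push Not at hcon
    exact hdB ⟨s, hs.1, hcon, fun r hr => by linarith [h r ⟨hr.1, hr.2.trans hs.2⟩]⟩
  have hhalf : ∀ t ≥ 0, (∀ s ∈ Icc 0 t, u d s < 1) → ∀ s ∈ Icc 0 t, 1 / 2 ≤ u d s := by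
    intro t ht h s hs
    have hm : MonotoneOn (u d) (Icc 0 t) := by
      apply monotoneOn_of_deriv_nonneg (convex_Icc _ _) (huc d).continuousOn
      · exact fun x _ => (hu d x).differentiableAt.differentiableWithinAt
      · intro x hx
        rw [interior_Icc] at hx
        rw [(hu d x).deriv]
        exact hnn t ht h x (Ioo_subset_Icc_self hx)
    rw [← hu0 d]
    exact hm (left_mem_Icc.2 ht) hs hs.1
  have hps : ∀ t ≥ 0, (∀ s ∈ Icc 0 t, u d s < 1) → 0 < p d t := by
    intro t ht h
    rcases (hnn t ht h t ⟨ht, le_rfl⟩).lt_or_eq with h1 | h1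
    · exact h1
    exfalso
    have hlt : -c * p d t - F (u d t) < 0 := by
      rw [← h1]
      have := hpos (u d t) ⟨by linarith [hhalf t ht h t ⟨ht, le_rfl⟩], h t ⟨ht, le_rfl⟩⟩
      linarith
    have h2 := aux_neg_right _ _ _ (hp d t) hlt
    have h3 : ∀ᶠ r in nhds t, u d r < 1 :=
      (huc d).tendsto t |>.eventually (gt_mem_nhds (h t ⟨ht, le_rfl⟩))
    obtain ⟨ε, hε, h3⟩ := Metric.eventually_nhds_iff.1 h3
    have h4 : ∀ᶠ r in nhdsWithin t (Ioi t), r < t + ε :=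
      (gt_mem_nhds (by linarith)).filter_mono nhdsWithin_le_nhds
    obtain ⟨r, h5, h6, h7⟩ := (h2.and (h4.and self_mem_nhdsWithin)).exists
    have h7 : t < r := h7
    refine hdB ⟨r, by linarith, by linarith, fun s hs => ?_⟩
    rcases le_total s t with h8 | h8
    · linarith [h s ⟨hs.1, h8⟩]
    · have := h3 (y := s) (by rw [Real.dist_eq, abs_of_nonneg (by linarith)]; linarith [hs.2])
      linarith
  have hlt1 : ∀ t ≥ 0, u d t < 1 := by
    by_contra hcon
    push Not at hcon
    obtain ⟨T, hT, hT1⟩ := hcon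
    have hcomp : IsCompact (Icc 0 T ∩ {s | 1 ≤ u d s}) :=
      isCompact_Icc.inter_right (isClosed_le continuous_const (huc d))
    obtain ⟨t, ⟨ht, ht1⟩, hleast⟩ := hcomp.exists_isLeast ⟨T, ⟨hT, le_rfl⟩, hT1⟩
    have ht1 : 1 ≤ u d t := ht1
    have hbefore : ∀ s, 0 ≤ s → s < t → u d s < 1 := by
      intro s hs hst
      by_contra hc
      push Not at hc
      have := hleast ⟨⟨hs, by linarith [ht.2]⟩, hc⟩
      linarith
    have htpos : 0 < t := by
      rcases ht.1.lt_or_eq with h | h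
      · exact h
      · rw [← h, hu0] at ht1; norm_num at ht1
    have hpb : ∀ s, 0 ≤ s → s < t → 0 < p d s := fun s hs hst =>
      hps s hs (fun r hr => hbefore r hr.1 (by linarith [hr.2]))
    have hev : ∀ᶠ s in nhdsWithin t (Iio t), 0 ≤ s ∧ s < t := by
      filter_upwards [self_mem_nhdsWithin, (lt_mem_nhds htpos).filter_mono nhdsWithin_le_nhds]
        with s h1 h2 using ⟨h2.le, h1⟩
    have hle : u d t ≤ 1 := le_of_tendsto ((huc d).tendsto t |>.mono_left nhdsWithin_le_nhds)
      (hev.mono fun s hs => (hbefore s hs.1 hs.2).le)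
    have hpt : 0 ≤ p d t := ge_of_tendsto ((hpc d).tendsto t |>.mono_left nhdsWithin_le_nhds)
      (hev.mono fun s hs => (hpb s hs.1 hs.2).le)
    rcases hpt.lt_or_eq with h | h
    · have h2 := aux_neg_right (fun s => - u d s) (- p d t) t (hu d t).neg (by linarith)
      have h3 : ∀ᶠ r in nhds t, 0 < p d r :=
        (hpc d).tendsto t |>.eventually (lt_mem_nhds h)
      obtain ⟨ε, hε, h3⟩ := Metric.eventually_nhds_iff.1 h3
      have h4 : ∀ᶠ r in nhdsWithin t (Ioi t), r < t + ε :=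
        (gt_mem_nhds (by linarith)).filter_mono nhdsWithin_le_nhds
      obtain ⟨r, h5, h6, h7⟩ := (h2.and (h4.and self_mem_nhdsWithin)).exists
      have h7 : t < r := h7
      refine hdA ⟨r, by linarith, by linarith, fun s hs => ?_⟩
      rcases lt_or_ge s t with h8 | h8
      · exact hpb s hs.1 h8
      · exact h3 (y := s) (by rw [Real.dist_eq, abs_of_nonneg (by linarith)]; linarith [hs.2])
    · have := aux_unique F KF hL c 1 hF1 (-1) (t + 1) t ⟨by linarith, by linarith⟩ (u d) (p d)
        (fun t _ => hu d t) (fun t _ => hp d t) (by linarith) h.symm 0 ⟨by linarith, by linarith⟩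
      rw [hu0] at this; norm_num at this
  exact ⟨u d, p d, hu d, hp d, hu0 d, fun t ht =>
    ⟨hps t ht fun s hs => hlt1 s hs.1, hlt1 t ht⟩⟩

theorem aux_c2 (s : Set ℝ) (hs : IsOpen s) (u p q : ℝ → ℝ)
    (hu : ∀ x ∈ s, HasDerivAt u (p x) x) (hp : ∀ x ∈ s, HasDerivAt p (q x) x)
    (hq : ContinuousOn q s) : ContDiffOn ℝ 2 u s := by
  have h1 : ContDiffOn ℝ 1 p s := by
    rw [show (1 : WithTop ℕ∞) = 0 + 1 by norm_num, contDiffOn_succ_iff_deriv_of_isOpen hs]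
    refine ⟨fun x hx => (hp x hx).differentiableAt.differentiableWithinAt, by simp, ?_⟩
    rw [contDiffOn_zero]
    exact hq.congr fun x hx => (hp x hx).deriv
  rw [show (2 : WithTop ℕ∞) = 1 + 1 by norm_num, contDiffOn_succ_iff_deriv_of_isOpen hs]
  refine ⟨fun x hx => (hu x hx).differentiableAt.differentiableWithinAt, by simp, ?_⟩
  exact h1.congr fun x hx => (hu x hx).deriv

theorem aux_deriv2 (s : Set ℝ) (hs : IsOpen s) (u p : ℝ → ℝ) (q : ℝ)
    (hu : ∀ x ∈ s, HasDerivAt u (p x) x) (x : ℝ) (hx : x ∈ s) (hp : HasDerivAt p q x) :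
    deriv (deriv u) x = q := by
  have : deriv u =ᶠ[nhds x] p := by
    filter_upwards [hs.mem_nhds hx] with y hy using (hu y hy).deriv
  rw [this.deriv_eq, hp.deriv]

theorem aux_exist (f F : ℝ → ℝ) (hF : ContDiff ℝ 1 F) (KF : NNReal) (hL : LipschitzWith KF F)
    (M : ℝ) (hM : ∀ u, |F u| ≤ M) (hF0 : F 0 = 0) (hF1 : F 1 = 0)
    (hpos : ∀ u ∈ Ioo (0:ℝ) 1, 0 < F u) (hfF : ∀ u ∈ Icc (0:ℝ) 1, F u = f u) (c : ℝ)
    (hno : ¬ ∃ U, IsTravelingProfile f c U) :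
    ∃ U : ℝ → ℝ, IsOptimalP1Profile f c U ∧ (∃ d > (0:ℝ), HasDerivWithinAt U d (Ioi 0) 0) := by
  have hnn : ∀ u ∈ Icc (0:ℝ) 1, 0 ≤ F u := by
    intro u hu
    rcases hu.1.lt_or_eq with h | h
    · rcases hu.2.lt_or_eq with h' | h'
      · exact (hpos u ⟨h, h'⟩).le
      · rw [h', hF1]
    · rw [← h, hF0]
  have hzero : ∀ u ∈ Icc (0:ℝ) 1, F u = 0 → u = 0 ∨ u = 1 := by
    intro u hu h0
    by_contra hcon
    push Not at hcon
    have := hpos u ⟨lt_of_le_of_ne hu.1 (Ne.symm hcon.1), lt_of_le_of_ne hu.2 hcon.2⟩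
    linarith
  obtain ⟨u, p, hu, hp, hu0, hfwd⟩ := aux_shoot F hF KF hL M hM hF1 hpos c
  have huc : Continuous u := continuous_iff_continuousAt.2 fun t => (hu t).continuousAt
  have hpc : Continuous p := continuous_iff_continuousAt.2 fun t => (hp t).continuousAt
  have hmono : ∀ a b, (∀ s ∈ Ioo a b, 0 < p s) → StrictMonoOn u (Icc a b) := by
    intro a b h
    apply strictMonoOn_of_deriv_pos (convex_Icc _ _) huc.continuousOn
    intro x hx
    rw [interior_Icc] at hx
    rw [(hu x).deriv]; exact h x hx
  have hback : ∀ t ≤ 0, (∀ s ∈ Icc t 0, 0 < u s) → ∀ s ∈ Icc t 0, 0 < p s := by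
    intro t ht h s hs
    by_contra hcon
    push Not at hcon
    have hcomp : IsCompact (Icc t 0 ∩ {s | p s ≤ 0}) :=
      isCompact_Icc.inter_right (isClosed_le hpc continuous_const)
    obtain ⟨r, ⟨hr, hr1⟩, hgr⟩ := hcomp.exists_isGreatest ⟨s, hs, hcon⟩
    have hr1 : p r ≤ 0 := hr1
    have hafter : ∀ s, r < s → s ≤ 0 → 0 < p s := by
      intro s h1 h2
      by_contra hc
      push Not at hc
      have := hgr ⟨⟨by linarith [hr.1], h2⟩, hc⟩
      linarith
    have hr0 : r < 0 := by
      rcases hr.2.lt_or_eq with h | h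
      · exact h
      · rw [h] at hr1; linarith [(hfwd 0 le_rfl).1]
    have hev : ∀ᶠ s in nhdsWithin r (Ioi r), r < s ∧ s ≤ 0 := by
      filter_upwards [self_mem_nhdsWithin, (gt_mem_nhds hr0).filter_mono nhdsWithin_le_nhds]
        with s h1 h2 using ⟨h1, h2.le⟩
    have hpr : 0 ≤ p r := ge_of_tendsto (hpc.tendsto r |>.mono_left nhdsWithin_le_nhds)
      (hev.mono fun s hs => (hafter s hs.1 hs.2).le)
    have hp0 : p r = 0 := le_antisymm hr1 hpr
    have hul := hmono r 0 (fun s hs => hafter s hs.1 hs.2.le) ⟨le_rfl, hr0.le⟩ ⟨hr0.le, le_rfl⟩ hr0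
    have hFr := hpos (u r) ⟨h r hr, by linarith⟩
    have h2 := aux_neg_right p _ r (hp r) (by rw [hp0]; linarith)
    obtain ⟨s, h3, h4, h5⟩ := (h2.and hev).exists
    linarith [hafter s h4 h5]
  by_cases hcase : ∀ t ≤ 0, 0 < u t
  · -- traveling profile, contradiction
    exfalso
    apply hno
    have hpp : ∀ t, 0 < p t := by
      intro t
      rcases le_total t 0 with h | h
      · exact hback t h (fun s hs => hcase s hs.2) t ⟨le_rfl, h⟩
      · exact (hfwd t h).1
    have hsm : StrictMono u := by
      apply strictMono_of_deriv_pos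
      intro x; rw [(hu x).deriv]; exact hpp x
    have hup : ∀ t, 0 < u t := by
      intro t
      rcases le_total t 0 with h | h
      · exact hcase t h
      · exact lt_of_lt_of_le (hcase 0 le_rfl) (hsm.monotone h)
    have hu1 : ∀ t, u t < 1 := by
      intro t
      rcases le_total t 0 with h | h
      · exact lt_of_le_of_lt (hsm.monotone h) (hfwd 0 le_rfl).2
      · exact (hfwd t h).2
    have hmem : ∀ t, u t ∈ Icc (0:ℝ) 1 := fun t => ⟨(hup t).le, (hu1 t).le⟩
    refine ⟨u, ?_, hmem, ?_, ?_, ?_⟩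
    · rw [← contDiffOn_univ]
      exact aux_c2 univ isOpen_univ u p _ (fun x _ => hu x) (fun x _ => hp x)
        (by have := hF.continuous; fun_prop)
    · intro x
      rw [aux_deriv2 univ isOpen_univ u p _ (fun x _ => hu x) x trivial (hp x), (hu x).deriv,
        ← hfF _ (hmem x)]
      ring
    · obtain ⟨L, hLim⟩ : ∃ L, Tendsto u atBot (nhds L) :=
        ⟨_, tendsto_atBot_ciInf hsm.monotone ⟨0, by rintro _ ⟨x, rfl⟩; exact (hup x).le⟩⟩
      have h1 : Tendsto (fun x => u (-x)) atTop (nhds L) := hLim.comp tendsto_neg_atTop_atBot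
      have hu' : ∀ x, HasDerivAt (fun x => u (-x)) (-p (-x)) x := by
        intro x
        have := (hu (-x)).comp x (hasDerivAt_neg x)
        simpa using! this
      have hp' : ∀ x, HasDerivAt (fun x => -p (-x)) (-(-c) * (-p (-x)) - F (u (-x))) x := by
        intro x
        have := ((hp (-x)).comp x (hasDerivAt_neg x)).neg
        convert! this using 1
        ring
      have h2 := aux_lim F hF.continuous hnn (fun x => u (-x)) (fun x => -p (-x)) 0 (-c) L
        (fun x _ => hu' x) (fun x _ => hp' x) (fun x _ => hmem _) h1
      have hLmem : L ∈ Icc (0:ℝ) 1 := isClosed_Icc.mem_of_tendsto hLim (Eventually.of_forall hmem)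
      have hLle : L ≤ u 0 := hsm.monotone.le_of_tendsto hLim 0
      rcases hzero L hLmem h2.2 with h | h
      · rwa [h] at hLim
      · rw [h, hu0] at hLle; norm_num at hLle
    · obtain ⟨L, hLim⟩ : ∃ L, Tendsto u atTop (nhds L) :=
        ⟨_, tendsto_atTop_ciSup hsm.monotone ⟨1, by rintro _ ⟨x, rfl⟩; exact (hu1 x).le⟩⟩
      have h2 := aux_lim F hF.continuous hnn u p 0 c L
        (fun x _ => hu x) (fun x _ => hp x) (fun x _ => hmem _) hLim
      have hLmem : L ∈ Icc (0:ℝ) 1 := isClosed_Icc.mem_of_tendsto hLim (Eventually.of_forall hmem)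
      have hLle : u 0 ≤ L := hsm.monotone.ge_of_tendsto hLim 0
      rcases hzero L hLmem h2.2 with h | h
      · rw [h, hu0] at hLle; norm_num at hLle
      · rwa [h] at hLim
  · push Not at hcase
    obtain ⟨T, hT, hT1⟩ := hcase
    have hcomp : IsCompact (Icc T 0 ∩ {s | u s ≤ 0}) :=
      isCompact_Icc.inter_right (isClosed_le huc continuous_const)
    obtain ⟨r, ⟨hr, hr1⟩, hgr⟩ := hcomp.exists_isGreatest ⟨T, ⟨le_rfl, hT⟩, hT1⟩
    have hr1 : u r ≤ 0 := hr1
    have hafter : ∀ s, r < s → s ≤ 0 → 0 < u s := by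
      intro s h1 h2
      by_contra hc
      push Not at hc
      have := hgr ⟨⟨by linarith [hr.1], h2⟩, hc⟩
      linarith
    have hr0 : r < 0 := by
      rcases hr.2.lt_or_eq with h | h
      · exact h
      · rw [h, hu0] at hr1; norm_num at hr1
    have hev : ∀ᶠ s in nhdsWithin r (Ioi r), r < s ∧ s ≤ 0 := by
      filter_upwards [self_mem_nhdsWithin, (gt_mem_nhds hr0).filter_mono nhdsWithin_le_nhds]
        with s h1 h2 using ⟨h1, h2.le⟩
    have hpafter : ∀ s, r < s → 0 < p s := by
      intro s h1
      rcases le_total s 0 with h | h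
      · exact hback s h (fun x hx => hafter x (by linarith [hx.1]) hx.2) s ⟨le_rfl, h⟩
      · exact (hfwd s h).1
    have hur : u r = 0 := le_antisymm hr1
      (ge_of_tendsto (huc.tendsto r |>.mono_left nhdsWithin_le_nhds)
        (hev.mono fun s hs => (hafter s hs.1 hs.2).le))
    have hpr0 : 0 ≤ p r := ge_of_tendsto (hpc.tendsto r |>.mono_left nhdsWithin_le_nhds)
      (hev.mono fun s hs => (hpafter s hs.1).le)
    have hpr : 0 < p r := by
      rcases hpr0.lt_or_eq with h | h
      · exact h
      have := aux_unique F KF hL c 0 hF0 (r - 1) 1 r ⟨by linarith, by linarith⟩ u p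
        (fun t _ => hu t) (fun t _ => hp t) hur h.symm 0 ⟨by linarith, by linarith⟩
      rw [hu0] at this; norm_num at this
    have hsm : StrictMonoOn u (Ici r) := by
      apply strictMonoOn_of_deriv_pos (convex_Ici _) huc.continuousOn
      intro x hx
      rw [interior_Ici] at hx
      rw [(hu x).deriv]; exact hpafter x hx
    have hu1 : ∀ t, r ≤ t → u t < 1 := by
      intro t ht
      rcases le_total t 0 with h | h
      · exact lt_of_le_of_lt (hsm.monotoneOn ht hr0.le h) (hfwd 0 le_rfl).2
      · exact (hfwd t h).2
    have hmem : ∀ t, r ≤ t → u t ∈ Icc (0:ℝ) 1 := fun t ht =>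
      ⟨hur ▸ hsm.monotoneOn (mem_Ici.2 le_rfl) ht ht, (hu1 t ht).le⟩
    set U : ℝ → ℝ := fun x => u (r + max x 0) with hU
    have hge : ∀ x, r ≤ r + max x 0 := fun x => by linarith [le_max_right x 0]
    have hUc : Continuous U := by fun_prop
    have hUm : Monotone U := by
      intro x y hxy
      apply hsm.monotoneOn (hge x) (hge y)
      gcongr
    have hd : ∀ x ∈ Ioi (0:ℝ), HasDerivAt U (p (r + x)) x := by
      intro x hx
      have h1 : HasDerivAt (fun x => u (r + x)) (p (r + x)) x := (hu (r+x)).comp_const_add r x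
      refine h1.congr_of_eventuallyEq ?_
      filter_upwards [isOpen_Ioi.mem_nhds hx] with y hy
      simp [hU, max_eq_left (le_of_lt (show (0:ℝ) < y from hy))]
    have hd2 : ∀ x ∈ Ioi (0:ℝ), HasDerivAt (fun x => p (r + x))
        (-c * p (r + x) - F (u (r + x))) x := fun x _ => (hp (r+x)).comp_const_add r x
    have hUx : ∀ x > (0:ℝ), U x = u (r + x) := fun x hx => by simp [hU, max_eq_left hx.le]
    have hUmem : ∀ x, U x ∈ Icc (0:ℝ) 1 := fun x => hmem _ (hge x)
    refine ⟨U, ⟨hUc, hUm, hUmem, ?_, ?_, ?_, ?_⟩, p r, hpr, ?_⟩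
    · intro x hx; simp [hU, max_eq_right hx, hur]
    · exact aux_c2 _ isOpen_Ioi U _ _ hd hd2 (by have := hF.continuous; fun_prop)
    · intro x hx
      rw [aux_deriv2 _ isOpen_Ioi U _ _ hd x hx (hd2 x hx), (hd x hx).deriv,
        ← hfF _ (hUmem x), hUx x hx]
      ring
    · obtain ⟨L, hLim⟩ : ∃ L, Tendsto U atTop (nhds L) :=
        ⟨_, tendsto_atTop_ciSup hUm ⟨1, by rintro _ ⟨x, rfl⟩; exact (hUmem x).2⟩⟩
      have h2 := aux_lim F hF.continuous hnn U (fun x => p (r + x)) 0 c L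
        hd (fun x hx => by rw [hUx x hx]; exact hd2 x hx) (fun x _ => hUmem _) hLim
      have hLmem : L ∈ Icc (0:ℝ) 1 := isClosed_Icc.mem_of_tendsto hLim (Eventually.of_forall hUmem)
      have hLle : U (-r) ≤ L := hUm.ge_of_tendsto hLim (-r)
      rw [hUx _ (by linarith)] at hLle
      rcases hzero L hLmem h2.2 with h | h
      · rw [h] at hLle; simp [hu0] at hLle; norm_num at hLle
      · rwa [h] at hLim
    · have h1 : HasDerivAt (fun x => u (r + x)) (p r) 0 := by
        have := (hu (r+0)).comp_const_add r 0
        simpa using this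
      refine h1.hasDerivWithinAt.congr (fun x hx => hUx x hx) (by simp [hU])

theorem aux_facts (f F : ℝ → ℝ) (KF : NNReal) (hL : LipschitzWith KF F)
    (hF0 : F 0 = 0) (hF1 : F 1 = 0)
    (hpos : ∀ u ∈ Ioo (0:ℝ) 1, 0 < F u) (hfF : ∀ u ∈ Icc (0:ℝ) 1, F u = f u) (c : ℝ)
    (V : ℝ → ℝ) (hV : IsOptimalP1Profile f c V) :
    ∀ x > 0, HasDerivAt V (deriv V x) x ∧
      HasDerivAt (deriv V) (-c * deriv V x - F (V x)) x ∧ 0 < V x ∧ V x < 1 ∧ 0 < deriv V x := by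
  obtain ⟨hc, hm, hmem, h0, h2, hode, hlim⟩ := hV
  have hd1 : ∀ x > 0, HasDerivAt V (deriv V x) x := fun x hx =>
    ((h2.contDiffAt (isOpen_Ioi.mem_nhds hx)).differentiableAt (by norm_num)).hasDerivAt
  have hd2 : ∀ x > 0, HasDerivAt (deriv V) (-c * deriv V x - F (V x)) x := by
    intro x hx
    have h3 : ContDiffOn ℝ 1 (deriv V) (Ioi 0) := by
      have h2' := h2
      rw [show (2 : WithTop ℕ∞) = 1 + 1 by norm_num,
        contDiffOn_succ_iff_deriv_of_isOpen isOpen_Ioi] at h2'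
      exact h2'.2.2
    have h4 := ((h3.contDiffAt (isOpen_Ioi.mem_nhds hx)).differentiableAt
      (by norm_num)).hasDerivAt
    have h5 := hode x hx
    rw [← hfF _ (hmem x)] at h5
    have h6 : deriv (deriv V) x = -c * deriv V x - F (V x) := by linarith
    rw [h6] at h4
    exact h4
  have hconst : ∀ e, F e = 0 → ∀ x > 0, V x = e → deriv V x = 0 → ∀ y > 0, V y = e := by
    intro e he x hx h1 h2 y hy
    exact aux_unique F KF hL c e he 0 (x + y) x ⟨hx, by linarith⟩ V (deriv V)
      (fun t ht => hd1 t ht.1) (fun t ht => hd2 t ht.1) h1 h2 y ⟨hy, by linarith⟩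
  have hV0 : ∀ x > 0, 0 < V x := by
    intro x hx
    rcases (hmem x).1.lt_or_eq with h | h
    · exact h
    exfalso
    have hmin : IsLocalMin V x := Eventually.of_forall fun y => by rw [← h]; exact (hmem y).1
    have h3 := hconst 0 hF0 x hx h.symm hmin.deriv_eq_zero
    have h4 : Tendsto V atTop (nhds 0) := by
      refine tendsto_const_nhds.congr' ?_
      filter_upwards [eventually_gt_atTop 0] with y hy using (h3 y hy).symm
    exact zero_ne_one (tendsto_nhds_unique h4 hlim)
  have hV1 : ∀ x > 0, V x < 1 := by
    intro x hx
    rcases (hmem x).2.lt_or_eq with h | h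
    · exact h
    exfalso
    have hmax : IsLocalMax V x := Eventually.of_forall fun y => by rw [h]; exact (hmem y).2
    have h3 := hconst 1 hF1 x hx h hmax.deriv_eq_zero
    have h4 : Tendsto V (nhdsWithin 0 (Ioi 0)) (nhds 1) := by
      refine tendsto_const_nhds.congr' ?_
      filter_upwards [self_mem_nhdsWithin] with y hy using (h3 y hy).symm
    have h5 : Tendsto V (nhdsWithin 0 (Ioi 0)) (nhds (V 0)) :=
      (hc.tendsto 0).mono_left nhdsWithin_le_nhds
    have := tendsto_nhds_unique h4 h5
    rw [h0 0 le_rfl] at this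
    norm_num at this
  intro x hx
  refine ⟨hd1 x hx, hd2 x hx, hV0 x hx, hV1 x hx, ?_⟩
  rcases (hm.deriv_nonneg (x := x)).lt_or_eq with h | h
  · exact h
  exfalso
  have hmin : IsLocalMin (deriv V) x :=
    Eventually.of_forall fun y => by rw [← h]; exact hm.deriv_nonneg
  have h3 := hmin.hasDerivAt_eq_zero (hd2 x hx)
  rw [← h] at h3
  linarith [hpos (V x) ⟨hV0 x hx, hV1 x hx⟩]

theorem aux_sm (V : ℝ → ℝ) (hc : Continuous V)
    (h : ∀ x > 0, 0 < deriv V x) : StrictMonoOn V (Ici 0) := by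
  apply strictMonoOn_of_deriv_pos (convex_Ici _) hc.continuousOn
  intro x hx
  rw [interior_Ici] at hx
  exact h x hx

theorem aux_surj (V : ℝ → ℝ) (hc : Continuous V) (h0 : V 0 = 0) (hlim : Tendsto V atTop (nhds 1))
    (w : ℝ) (hw : 0 < w) (hw1 : w < 1) : ∃ y > 0, V y = w := by
  obtain ⟨N, hN, hN0⟩ := ((hlim.eventually (lt_mem_nhds hw1)).and (eventually_gt_atTop 0)).exists
  obtain ⟨y, hy, h⟩ := intermediate_value_Icc hN0.le hc.continuousOn
    (show w ∈ Icc (V 0) (V N) from ⟨by rw [h0]; exact hw.le, hN.le⟩)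
  refine ⟨y, lt_of_le_of_ne hy.1 ?_, h⟩
  rintro rfl
  linarith

theorem aux_uniq (f F : ℝ → ℝ) (hF : Continuous F) (KF : NNReal) (hL : LipschitzWith KF F)
    (hF0 : F 0 = 0) (hF1 : F 1 = 0) (hnn : ∀ u ∈ Icc (0:ℝ) 1, 0 ≤ F u)
    (hpos : ∀ u ∈ Ioo (0:ℝ) 1, 0 < F u) (hfF : ∀ u ∈ Icc (0:ℝ) 1, F u = f u) (c : ℝ)
    (U V : ℝ → ℝ) (hU : IsOptimalP1Profile f c U) (hV : IsOptimalP1Profile f c V) : V = U := by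
  have fU := aux_facts f F KF hL hF0 hF1 hpos hfF c U hU
  have fV := aux_facts f F KF hL hF0 hF1 hpos hfF c V hV
  obtain ⟨hUc, hUm, hUmem, hU0, -, -, hUlim⟩ := hU
  obtain ⟨hVc, hVm, hVmem, hV0, -, -, hVlim⟩ := hV
  have sU := aux_sm U hUc (fun x hx => (fU x hx).2.2.2.2)
  have sV := aux_sm V hVc (fun x hx => (fV x hx).2.2.2.2)
  have hex : ∀ x, ∃ y, x > 0 → (0 < y ∧ V y = U x) := by
    intro x
    by_cases hx : x > 0
    · obtain ⟨y, hy, h⟩ := aux_surj V hVc (hV0 0 le_rfl) hVlim (U x) (fU x hx).2.2.1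
        (fU x hx).2.2.2.1
      exact ⟨y, fun _ => ⟨hy, h⟩⟩
    · exact ⟨0, fun h => absurd h hx⟩
  choose σ hσ using hex
  have hσm : StrictMonoOn σ (Ioi 0) := by
    intro x hx y hy hxy
    have h1 := sU (le_of_lt (show (0:ℝ) < x from hx)) (le_of_lt (show (0:ℝ) < y from hy)) hxy
    rw [← (hσ x hx).2, ← (hσ y hy).2] at h1
    exact (sV.lt_iff_lt (hσ x hx).1.le (hσ y hy).1.le).1 h1
  have hσs : ∀ y > 0, ∃ x > 0, σ x = y := by
    intro y hy
    obtain ⟨x, hx, h⟩ := aux_surj U hUc (hU0 0 le_rfl) hUlim (V y) (fV y hy).2.2.1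
        (fV y hy).2.2.2.1
    refine ⟨x, hx, ?_⟩
    exact sV.injOn (hσ x hx).1.le (le_of_lt hy) ((hσ x hx).2.trans h)
  have hσc : ∀ x > 0, ContinuousAt σ x := by
    intro x hx
    apply continuousAt_of_monotoneOn_of_image_mem_nhds hσm.monotoneOn (isOpen_Ioi.mem_nhds hx)
    refine mem_of_superset (isOpen_Ioi.mem_nhds (hσ x hx).1) ?_
    intro y hy
    obtain ⟨x, hx, h⟩ := hσs y hy
    exact ⟨x, hx, h⟩
  have hσd : ∀ x > 0, HasDerivAt σ (deriv U x / deriv V (σ x)) x := by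
    intro x hx
    have hV' := fV _ (hσ x hx).1
    have hu := (fU x hx).1
    -- slope computation
    rw [hasDerivAt_iff_tendsto_slope]
    have hs1 : Tendsto (slope U x) (nhdsWithin x {x}ᶜ) (nhds (deriv U x)) :=
      hasDerivAt_iff_tendsto_slope.1 hu
    have hs2 : Tendsto (slope V (σ x)) (nhdsWithin (σ x) {σ x}ᶜ) (nhds (deriv V (σ x))) :=
      hasDerivAt_iff_tendsto_slope.1 hV'.1
    have hpos' : ∀ᶠ y in nhdsWithin x {x}ᶜ, 0 < y :=
      (lt_mem_nhds hx).filter_mono nhdsWithin_le_nhds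
    have hne : ∀ᶠ y in nhdsWithin x {x}ᶜ, σ y ≠ σ x := by
      filter_upwards [hpos', self_mem_nhdsWithin] with y hy hyx h
      exact hyx (hσm.injOn hy hx h)
    have hs3 : Tendsto σ (nhdsWithin x {x}ᶜ) (nhdsWithin (σ x) {σ x}ᶜ) :=
      tendsto_nhdsWithin_iff.2 ⟨(hσc x hx).tendsto.mono_left nhdsWithin_le_nhds, hne⟩
    have h4 := hs1.div (hs2.comp hs3) hV'.2.2.2.2.ne'
    refine h4.congr' ?_
    filter_upwards [hpos', hne, self_mem_nhdsWithin] with y hy hyne hyx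
    have h6 : σ y - σ x ≠ 0 := sub_ne_zero.2 hyne
    have h7 : y - x ≠ 0 := sub_ne_zero.2 hyx
    have h5 : U y - U x ≠ 0 := by
      rw [sub_ne_zero]
      intro h
      exact hyx (sU.injOn (le_of_lt hy) (le_of_lt hx) h)
    simp only [Pi.div_apply, Function.comp, slope_def_field, (hσ y hy).2, (hσ x hx).2]
    field_simp
  set w : ℝ → ℝ := fun x => deriv U x - deriv V (σ x) with hw
  have hwd : ∀ x > 0, HasDerivAt w (F (U x) / deriv V (σ x) * w x) x := by
    intro x hx
    have hV' := fV _ (hσ x hx).1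
    have h1 := (fU x hx).2.1.sub (hV'.2.1.comp x (hσd x hx))
    convert! h1 using 1
    rw [(hσ x hx).2]
    have := hV'.2.2.2.2.ne'
    simp only [hw]
    field_simp
    ring
  have hw2 : MonotoneOn (fun x => w x ^ 2) (Ioi 0) := by
    have hd : ∀ x > 0, HasDerivAt (fun x => w x ^ 2)
        (2 * w x * (F (U x) / deriv V (σ x) * w x)) x := by
      intro x hx
      have := (hwd x hx).pow 2
      simpa using! this
    apply monotoneOn_of_deriv_nonneg (convex_Ioi 0)
    · exact fun x hx => (hd x hx).continuousAt.continuousWithinAt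
    · rw [interior_Ioi]; exact fun x hx => (hd x hx).differentiableAt.differentiableWithinAt
    · rw [interior_Ioi]; intro x hx
      rw [(hd x hx).deriv]
      have h1 : 0 ≤ F (U x) / deriv V (σ x) :=
        div_nonneg (hnn _ (hUmem x)) (fV _ (hσ x hx).1).2.2.2.2.le
      have := mul_nonneg h1 (sq_nonneg (w x))
      linarith
  have hσt : Tendsto σ atTop atTop := by
    rw [tendsto_atTop]
    intro b
    obtain ⟨x, hx, h⟩ := hσs (max b 1) (by positivity)
    filter_upwards [eventually_ge_atTop x] with y hy
    have := hσm.monotoneOn hx (lt_of_lt_of_le hx hy) hy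
    exact (le_max_left b 1).trans (h ▸ this)
  have hPU := (aux_lim F hF hnn U (deriv U) 0 c 1 (fun x hx => (fU x hx).1)
    (fun x hx => (fU x hx).2.1) (fun x _ => hUmem x) hUlim).1
  have hPV := (aux_lim F hF hnn V (deriv V) 0 c 1 (fun x hx => (fV x hx).1)
    (fun x hx => (fV x hx).2.1) (fun x _ => hVmem x) hVlim).1
  have hwlim : Tendsto (fun x => w x ^ 2) atTop (nhds 0) := by
    have := (hPU.sub (hPV.comp hσt)).pow 2
    simpa using this
  have hw0 : ∀ x > 0, w x = 0 := by
    intro x hx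
    have h1 : w x ^ 2 ≤ 0 := by
      refine ge_of_tendsto hwlim ?_
      filter_upwards [eventually_ge_atTop x] with y hy
      exact hw2 hx (lt_of_lt_of_le hx hy) hy
    exact pow_eq_zero_iff two_ne_zero |>.1 (le_antisymm h1 (sq_nonneg _))
  have hσ1 : ∀ x > 0, HasDerivAt σ 1 x := by
    intro x hx
    have h1 := hσd x hx
    have h2 := hw0 x hx
    simp only [hw] at h2
    rw [show deriv U x = deriv V (σ x) by linarith,
      div_self (fV _ (hσ x hx).1).2.2.2.2.ne'] at h1
    exact h1
  have hσlin : ∀ x > 0, ∀ y > 0, x < y → σ y - σ x = y - x := by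
    intro x hx y hy hxy
    obtain ⟨z, hz, h⟩ := exists_hasDerivAt_eq_slope σ (fun _ => 1) hxy
      (fun z hz => (hσ1 z (lt_of_lt_of_le hx hz.1)).continuousAt.continuousWithinAt)
      (fun z hz => hσ1 z (lt_trans hx hz.1))
    rw [eq_div_iff (by linarith)] at h
    linarith
  have hσid : ∀ x > 0, σ x = x := by
    intro x hx
    rcases lt_trichotomy (σ x) x with h | h | h
    · exfalso
      have h1 := hσlin ((x - σ x) / 2) (by linarith) x hx (by linarith [(hσ x hx).1])
      have h2 := (hσ ((x - σ x) / 2) (by linarith)).1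
      have h3 := hσlin ((x - σ x) / 2) (by linarith) x hx (by linarith [(hσ x hx).1])
      linarith
    · exact h
    · exfalso
      obtain ⟨y, hy, h1⟩ := hσs ((σ x - x) / 2) (by linarith)
      have hyx : y < x := by
        by_contra hcon
        push Not at hcon
        have := hσm.monotoneOn hx hy hcon
        linarith
      have h3 := hσlin y hy x hx hyx
      linarith
  funext x
  rcases le_or_gt x 0 with h | h
  · rw [hU0 x h, hV0 x h]
  · have := (hσ x h).2
    rwa [hσid x h] at this

/-- In the monostable case, for each `c > c*` there is a unique
continuous nondecreasing `U` vanishing on `(-∞,0]`, solving `U'' + cU' + f(U) = 0`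
on `(0,∞)` with `U(+∞) = 1`; moreover `U'(0+)` exists and is strictly positive. -/
theorem optimal_controlled_profile_P1_monostable
    (f : ℝ → ℝ) (hf : ContDiff ℝ 2 f) (hf0 : f 0 = 0) (hf1 : f 1 = 0)
    (hf'' : ∀ u ∈ Icc (0:ℝ) 1, deriv (deriv f) u < 0)
    (cstar : ℝ) (hcstar : cstar < 0)
    (hchar : ∀ c, (∃ U, IsTravelingProfile f c U) ↔ c ≤ cstar)
    (c : ℝ) (hc : cstar < c) :
    ∃ U : ℝ → ℝ,
      IsOptimalP1Profile f c U ∧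
      (∃ d > (0:ℝ), HasDerivWithinAt U d (Ioi 0) 0) ∧
      (∀ V : ℝ → ℝ, IsOptimalP1Profile f c V → V = U) := by
  -- cut-off nonlinearity
  let b : ContDiffBump (1/2 : ℝ) := ⟨1, 2, by norm_num, by norm_num⟩
  set F : ℝ → ℝ := fun x => b x * f x with hFdef
  have hF1 : ContDiff ℝ 1 F := b.contDiff.mul (hf.of_le (by norm_num))
  have hFs : HasCompactSupport F := b.hasCompactSupport.mul_right
  obtain ⟨KF, hKF⟩ := ContDiff.lipschitzWith_of_hasCompactSupport hFs hF1 (by simp)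
  obtain ⟨M, hM⟩ := hFs.exists_bound_of_continuous hF1.continuous
  have hfF : ∀ u ∈ Icc (0:ℝ) 1, F u = f u := by
    intro u hu
    have : b u = 1 := b.one_of_mem_closedBall (by
      rw [Metric.mem_closedBall, Real.dist_eq, abs_le]
      constructor
      · show -(1:ℝ) ≤ u - 1/2
        linarith [hu.1]
      · show u - 1/2 ≤ (1:ℝ)
        linarith [hu.2])
    simp [hFdef, this]
  have hF0' : F 0 = 0 := by simp [hFdef, hf0]
  have hF1' : F 1 = 0 := by simp [hFdef, hf1]
  have hconc : StrictConcaveOn ℝ (Icc (0:ℝ) 1) f :=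
    strictConcaveOn_of_deriv2_neg' (convex_Icc 0 1) hf.continuous.continuousOn
      (fun x hx => hf'' x hx)
  have hpos : ∀ u ∈ Ioo (0:ℝ) 1, 0 < F u := by
    intro u hu
    rw [hfF u (Ioo_subset_Icc_self hu)]
    have := hconc.2 (left_mem_Icc.2 zero_le_one) (right_mem_Icc.2 zero_le_one)
      (zero_ne_one' ℝ) (show 0 < 1 - u by linarith [hu.2]) hu.1 (by ring)
    simpa [hf0, hf1] using this
  have hnn : ∀ u ∈ Icc (0:ℝ) 1, 0 ≤ F u := by
    intro u hu
    rcases hu.1.lt_or_eq with h | h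
    · rcases hu.2.lt_or_eq with h' | h'
      · exact (hpos u ⟨h, h'⟩).le
      · rw [h', hF1']
    · rw [← h, hF0']
  have hno : ¬ ∃ U, IsTravelingProfile f c U := fun h => absurd ((hchar c).1 h) (not_le.2 hc)
  obtain ⟨U, hU, hd⟩ := aux_exist f F hF1 KF hKF M hM hF0' hF1' hpos hfF c hno
  exact ⟨U, hU, hd, fun V hV =>
    aux_uniq f F hF1.continuous KF hKF hF0' hF1' hnn hpos hfF c U V hU hV⟩
end

section
/- Let f be bistable (assumption (A2)) with interior zero u*, and assume additionally (A4): (4 − 2√3)·f'(u) + 2u·f''(u) ≤ 0 for all u ∈ [u*, 1]. Then for every u ∈ (u*, 1) one has −3·f(u)² − u²·f'(u)² + 4u·f(u)·f'(u) + 2u²·f(u)·f''(u) ≤ 0; equivalently, the function g(u) = (3f(u) + u·f'(u)) / (2·√(u·f(u))) is monotone nonincreasing on (u*, 1). -/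
open Set Filter

/-- under (A2) and (A4), the key inequality
`-3f² - u²(f')² + 4u f f' + 2u² f f'' ≤ 0` holds on `(u*,1)`; equivalently the
function `g(u) = (3f(u) + u f'(u)) / (2√(u f(u)))` is nonincreasing on `(u*,1)`. -/
theorem key_inequality_A4
    (f : ℝ → ℝ) (hf : ContDiff ℝ 2 f) (hf0 : f 0 = 0) (hf1 : f 1 = 0)
    (hf'0 : deriv f 0 < 0) (hf'1 : deriv f 1 < 0)
    (ustar : ℝ) (hustar : ustar ∈ Ioo (0:ℝ) 1)
    (hfz : ∀ u ∈ Ioo (0:ℝ) 1, f u = 0 ↔ u = ustar)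
    (hf'u : 0 < deriv f ustar)
    (hA4 : ∀ u ∈ Icc ustar (1:ℝ),
      (4 - 2 * Real.sqrt 3) * deriv f u + 2 * u * deriv (deriv f) u ≤ 0) :
    (∀ u ∈ Ioo ustar (1:ℝ),
      -3 * (f u) ^ 2 - u ^ 2 * (deriv f u) ^ 2 + 4 * u * f u * deriv f u
        + 2 * u ^ 2 * f u * deriv (deriv f) u ≤ 0) ∧
    AntitoneOn (fun u => (3 * f u + u * deriv f u) / (2 * Real.sqrt (u * f u)))
      (Ioo ustar (1:ℝ)) := by
  have hd : ∀ x, HasDerivAt f (deriv f x) x := fun x =>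
    (hf.differentiable (by norm_num) x).hasDerivAt
  have hc1 : ContDiff ℝ 1 (deriv f) := by
    have h : ContDiff ℝ (1 + 1) f := by
      convert hf using 1
      norm_num
    exact (contDiff_succ_iff_deriv.1 h).2.2
  have hdd : ∀ x, HasDerivAt (deriv f) (deriv (deriv f) x) x := fun x =>
    (hc1.differentiable (by norm_num) x).hasDerivAt
  obtain ⟨hu0, hu1⟩ := hustar
  have hfs : f ustar = 0 := (hfz ustar ⟨hu0, hu1⟩).2 rfl
  have hpos : ∀ u ∈ Ioo ustar (1:ℝ), 0 < f u := by
    intro u hu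
    by_contra hneg
    have hneg : f u ≤ 0 := not_lt.1 hneg
    have ht := (hasDerivAt_iff_tendsto_slope.1 (hd ustar)).mono_left
      (nhdsWithin_mono ustar (fun x (hx : x ∈ Ioi ustar) => ne_of_gt hx))
    have he := ht.eventually (lt_mem_nhds hf'u)
    have he2 : ∀ᶠ x in nhdsWithin ustar (Ioi ustar), x ∈ Ioo ustar u :=
      Ioo_mem_nhdsGT hu.1
    obtain ⟨v, hv, hvu⟩ := (he.and he2).exists
    rw [slope_def_field, hfs, sub_zero] at hv
    have hfv : 0 < f v := by
      have h2 : 0 < v - ustar := sub_pos.2 hvu.1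
      have := mul_pos hv h2
      rwa [div_mul_cancel₀ _ h2.ne'] at this
    obtain ⟨w, hw, hw0⟩ := intermediate_value_Icc' hvu.2.le hf.continuous.continuousOn
      (show (0:ℝ) ∈ Icc (f u) (f v) from ⟨hneg, hfv.le⟩)
    have := (hfz w ⟨by linarith [hvu.1, hw.1], by linarith [hw.2, hu.2]⟩).1 hw0
    linarith [hvu.1, hw.1]
  have key : ∀ u ∈ Ioo ustar (1:ℝ),
      -3 * (f u) ^ 2 - u ^ 2 * (deriv f u) ^ 2 + 4 * u * f u * deriv f u
        + 2 * u ^ 2 * f u * deriv (deriv f) u ≤ 0 := by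
    intro u hu
    have h1 := hA4 u ⟨hu.1.le, hu.2.le⟩
    have h2 : 0 < u * f u := mul_pos (hu0.trans hu.1) (hpos u hu)
    have h3 := mul_nonpos_of_nonneg_of_nonpos h2.le h1
    have h4 : Real.sqrt 3 ^ 2 = 3 := Real.sq_sqrt (by norm_num)
    have h5 := sq_nonneg (Real.sqrt 3 * f u - u * deriv f u)
    have h6 : (Real.sqrt 3 * f u - u * deriv f u) ^ 2 = 3 * f u ^ 2
        - 2 * Real.sqrt 3 * (u * f u * deriv f u) + u ^ 2 * deriv f u ^ 2 := by
      rw [← h4]; simp only [Real.sqrt_sq (Real.sqrt_nonneg 3)]; ring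
    rw [h6] at h5
    linarith
  refine ⟨key, ?_⟩
  have hg : ∀ u ∈ Ioo ustar (1:ℝ), HasDerivAt
      (fun u => (3 * f u + u * deriv f u) / (2 * Real.sqrt (u * f u)))
      ((-3 * (f u) ^ 2 - u ^ 2 * (deriv f u) ^ 2 + 4 * u * f u * deriv f u
        + 2 * u ^ 2 * f u * deriv (deriv f) u) / (4 * Real.sqrt (u * f u) ^ 3)) u := by
    intro u hu
    have h2 : 0 < u * f u := mul_pos (hu0.trans hu.1) (hpos u hu)
    have hs : 0 < Real.sqrt (u * f u) := Real.sqrt_pos.2 h2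
    have hN := ((hd u).const_mul 3).add ((hasDerivAt_id' u).mul (hdd u))
    have hD := ((((hasDerivAt_id' u).mul (hd u))).sqrt h2.ne').const_mul 2
    have hq := hN.div hD (mul_pos two_pos hs).ne'
    refine hq.congr_deriv ?_
    simp only [Pi.add_apply, Pi.mul_apply]
    have hS : Real.sqrt (u * f u) ^ 2 = u * f u := Real.sq_sqrt h2.le
    generalize Real.sqrt (u * f u) = S at hs hS
    field_simp
    rw [hS]
    ring
  refine antitoneOn_of_deriv_nonpos (convex_Ioo _ _)
    (fun u hu => (hg u hu).continuousAt.continuousWithinAt) ?_ ?_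
  · rw [interior_Ioo]
    exact fun u hu => (hg u hu).differentiableAt.differentiableWithinAt
  · rw [interior_Ioo]
    intro u hu
    rw [(hg u hu).deriv]
    exact div_nonpos_of_nonpos_of_nonneg (key u hu) (by positivity)
end

section
/- Let f be bistable (assumption (A2)) with interior zero u*. Define h(u) = −(3f(u) + u·f'(u)) / (2·√(u·f(u))) for u ∈ (u*, 1). Then h(u) → −∞ as u → u*+ and h(u) → +∞ as u → 1−. If moreover f satisfies (A4), then h is strictly increasing on (u*, 1); consequently, for every c ∈ ℝ there exists a unique point ū ∈ (u*, 1) with h(ū) = c, and the function z*(u) = (3f(u) + u·f'(u)) / (2·√(u·f(u))) + c is strictly positive on (u*, ū) and strictly negative on (ū, 1). -/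
open Set Filter

/-- for bistable `f`, the function
`h(u) = -(3f(u) + u f'(u)) / (2√(u f(u)))` tends to `-∞` at `u*+` and to `+∞` at `1-`;
under (A4) it is strictly increasing, so for each `c` there is a unique `ū ∈ (u*,1)`
with `h(ū) = c`, and `z*(u) = (3f(u) + u f'(u)) / (2√(u f(u))) + c` is positive on
`(u*, ū)` and negative on `(ū, 1)`. -/
theorem switching_function_monotone
    (f : ℝ → ℝ) (hf : ContDiff ℝ 2 f) (hf0 : f 0 = 0) (hf1 : f 1 = 0)
    (hf'0 : deriv f 0 < 0) (hf'1 : deriv f 1 < 0)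
    (ustar : ℝ) (hustar : ustar ∈ Ioo (0:ℝ) 1)
    (hfz : ∀ u ∈ Ioo (0:ℝ) 1, f u = 0 ↔ u = ustar)
    (hf'u : 0 < deriv f ustar) :
    Tendsto (fun u => -(3 * f u + u * deriv f u) / (2 * Real.sqrt (u * f u)))
      (nhdsWithin ustar (Ioi ustar)) atBot ∧
    Tendsto (fun u => -(3 * f u + u * deriv f u) / (2 * Real.sqrt (u * f u)))
      (nhdsWithin 1 (Iio 1)) atTop ∧
    ((∀ u ∈ Icc ustar (1:ℝ),
        (4 - 2 * Real.sqrt 3) * deriv f u + 2 * u * deriv (deriv f) u ≤ 0) →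
      StrictMonoOn (fun u => -(3 * f u + u * deriv f u) / (2 * Real.sqrt (u * f u)))
        (Ioo ustar (1:ℝ)) ∧
      ∀ c : ℝ, ∃ ubar ∈ Ioo ustar (1:ℝ),
        -(3 * f ubar + ubar * deriv f ubar) / (2 * Real.sqrt (ubar * f ubar)) = c ∧
        (∀ v ∈ Ioo ustar (1:ℝ),
          -(3 * f v + v * deriv f v) / (2 * Real.sqrt (v * f v)) = c → v = ubar) ∧
        (∀ u ∈ Ioo ustar ubar,
          0 < (3 * f u + u * deriv f u) / (2 * Real.sqrt (u * f u)) + c) ∧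
        (∀ u ∈ Ioo ubar (1:ℝ),
          (3 * f u + u * deriv f u) / (2 * Real.sqrt (u * f u)) + c < 0)) := by
  have hfd : Differentiable ℝ f := hf.differentiable (by norm_num)
  have hf'c1 : ContDiff ℝ 1 (deriv f) := by
    have : ContDiff ℝ (1 + 1) f := by simpa [one_add_one_eq_two] using hf
    exact (contDiff_succ_iff_deriv.mp this).2.2
  have hfd' : Differentiable ℝ (deriv f) := hf'c1.differentiable (by norm_num)
  have hfc := hfd.continuous
  have hfc' := hfd'.continuous
  obtain ⟨h0, h1⟩ := hustar
  -- positivity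
  have hpos : ∀ u ∈ Ioo ustar (1:ℝ), 0 < f u := by
    intro u hu
    have hne : ∀ v ∈ Ioo ustar (1:ℝ), f v ≠ 0 := fun v hv h =>
      hv.1.ne' ((hfz v ⟨h0.trans hv.1, hv.2⟩).1 h)
    have hst : f ustar = 0 := (hfz ustar ⟨h0, h1⟩).2 rfl
    have hsl := (hasDerivAt_iff_tendsto_slope.1 (hfd ustar).hasDerivAt)
    have hev := (hsl.mono_left (nhdsWithin_mono ustar
      (fun x (hx : x ∈ Ioi ustar) => (ne_of_gt hx : x ≠ ustar)))).eventually (lt_mem_nhds hf'u)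
    obtain ⟨w, hw, hw2⟩ := (hev.and (Ioo_mem_nhdsGT h1)).exists
    have hwp : 0 < f w := by
      rw [slope_def_field, hst, sub_zero] at hw
      have h3 : 0 < w - ustar := sub_pos.2 hw2.1
      exact (div_pos_iff_of_pos_right h3).1 hw
    by_contra hcon
    obtain ⟨v, hv, hv0⟩ := isPreconnected_Ioo.intermediate_value hu hw2 hfc.continuousOn
      (show (0:ℝ) ∈ Icc (f u) (f w) from ⟨not_lt.1 hcon, hwp.le⟩)
    exact hne v hv hv0
  have hst : f ustar = 0 := (hfz ustar ⟨h0, h1⟩).2 rfl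
  have hDc : Continuous (fun u => 2 * Real.sqrt (u * f u)) := by fun_prop
  have hNc : Continuous (fun u => -(3 * f u + u * deriv f u)) := by fun_prop
  have hDpos : ∀ u ∈ Ioo ustar (1:ℝ), 0 < 2 * Real.sqrt (u * f u) := fun u hu =>
    mul_pos two_pos (Real.sqrt_pos.2 (mul_pos (h0.trans hu.1) (hpos u hu)))
  have hT1 : Tendsto (fun u => -(3 * f u + u * deriv f u) / (2 * Real.sqrt (u * f u)))
      (nhdsWithin ustar (Ioi ustar)) atBot := by
    simp only [div_eq_mul_inv]
    refine Tendsto.neg_mul_atTop (C := -(3 * f ustar + ustar * deriv f ustar)) ?_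
      ((hNc.tendsto ustar).mono_left nhdsWithin_le_nhds) ?_
    · rw [hst]; have := mul_pos h0 hf'u; linarith
    · refine tendsto_inv_nhdsGT_zero.comp (tendsto_nhdsWithin_iff.2 ⟨?_, ?_⟩)
      · have := (hDc.tendsto ustar).mono_left (nhdsWithin_le_nhds (s := Ioi ustar))
        simpa [hst] using this
      · filter_upwards [Ioo_mem_nhdsGT h1] with u hu using hDpos u hu
  have hT2 : Tendsto (fun u => -(3 * f u + u * deriv f u) / (2 * Real.sqrt (u * f u)))
      (nhdsWithin 1 (Iio 1)) atTop := by
    simp only [div_eq_mul_inv]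
    refine Tendsto.pos_mul_atTop (C := -(3 * f 1 + 1 * deriv f 1)) ?_
      ((hNc.tendsto 1).mono_left nhdsWithin_le_nhds) ?_
    · rw [hf1]; linarith
    · refine tendsto_inv_nhdsGT_zero.comp (tendsto_nhdsWithin_iff.2 ⟨?_, ?_⟩)
      · have := (hDc.tendsto 1).mono_left (nhdsWithin_le_nhds (s := Iio 1))
        simpa [hf1] using this
      · filter_upwards [Ioo_mem_nhdsLT h1] with u hu using hDpos u hu
  refine ⟨hT1, hT2, fun hA => ?_⟩
  set h : ℝ → ℝ := fun u => -(3 * f u + u * deriv f u) / (2 * Real.sqrt (u * f u)) with hh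
  have hhc : ContinuousOn h (Ioo ustar 1) :=
    hNc.continuousOn.div hDc.continuousOn (fun u hu => (hDpos u hu).ne')
  have hs3 : Real.sqrt 3 * Real.sqrt 3 = 3 := Real.mul_self_sqrt (by norm_num)
  -- derivative
  have hder : ∀ u ∈ Ioo ustar (1:ℝ), ∃ d, HasDerivAt h d u ∧
      (Real.sqrt 3 * f u - u * deriv f u) ^ 2 ≤
        d * (4 * (u * f u) * Real.sqrt (u * f u)) := by
    intro u hu
    have hup : 0 < u := h0.trans hu.1
    have hp : 0 < u * f u := mul_pos hup (hpos u hu)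
    have hsp := Real.sqrt_pos.2 hp
    have hsq := Real.mul_self_sqrt hp.le
    have d1 := (hfd u).hasDerivAt
    have d2 := (hfd' u).hasDerivAt
    have dN := ((d1.const_mul 3).add ((hasDerivAt_id u).mul d2)).neg
    have dD := ((((hasDerivAt_id u).mul d1).sqrt hp.ne').const_mul 2)
    have dh := dN.div dD (hDpos u hu).ne'
    refine ⟨_, dh, ?_⟩
    have key := mul_nonneg hp.le (sub_nonneg.2 (hA u ⟨hu.1.le, hu.2.le⟩))
    simp only [id, Pi.mul_apply, Pi.add_apply, Pi.neg_apply] at *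
    set s := Real.sqrt (u * f u) with hs
    have e : ∀ A B C : ℝ, (A * (2 * s) - B * (2 * (C / (2 * s)))) / (2 * s) ^ 2
        * (4 * (u * f u) * s) = 2 * A * (u * f u) - B * C := by
      intro A B C
      rw [← hsq]
      field_simp
      ring
    rw [e]
    have e2 : (Real.sqrt 3 * f u - u * deriv f u) ^ 2 = 3 * f u ^ 2
        - 2 * Real.sqrt 3 * f u * (u * deriv f u) + (u * deriv f u) ^ 2 := by
      linear_combination (f u) ^ 2 * hs3
    rw [e2]
    linarith [key]
  have hmono : MonotoneOn h (Ioo ustar 1) := by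
    refine monotoneOn_of_deriv_nonneg (convex_Ioo _ _) hhc ?_ ?_
    · rw [interior_Ioo]
      intro u hu
      obtain ⟨d, hd, _⟩ := hder u hu
      exact hd.differentiableAt.differentiableWithinAt
    · rw [interior_Ioo]
      intro u hu
      obtain ⟨d, hd, hd2⟩ := hder u hu
      rw [hd.deriv]
      have hp : 0 < u * f u := mul_pos (h0.trans hu.1) (hpos u hu)
      have hsp := Real.sqrt_pos.2 hp
      exact nonneg_of_mul_nonneg_left ((sq_nonneg _).trans hd2) (by positivity)
  have hstrict : StrictMonoOn h (Ioo ustar 1) := by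
    intro a ha b hb hab
    refine lt_of_le_of_ne (hmono ha hb hab.le) fun heq => ?_
    have hsub : ∀ x ∈ Ioo a b, x ∈ Ioo ustar 1 := fun x hx =>
      ⟨ha.1.trans hx.1, hx.2.trans hb.2⟩
    have hconst : ∀ x ∈ Ioo a b, h x = h a := fun x hx =>
      le_antisymm ((hmono (hsub x hx) hb hx.2.le).trans heq.ge) (hmono ha (hsub x hx) hx.1.le)
    have hphi : ∀ x ∈ Ioo a b, Real.sqrt 3 * f x - x * deriv f x = 0 := by
      intro x hx
      obtain ⟨d, hd, hd2⟩ := hder x (hsub x hx)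
      have hev : h =ᶠ[nhds x] fun _ => h a := by
        filter_upwards [Ioo_mem_nhds hx.1 hx.2] with y hy using hconst y hy
      have : d = 0 := by rw [← hd.deriv, hev.deriv_eq, deriv_const]
      rw [this, zero_mul] at hd2
      exact pow_eq_zero_iff (two_ne_zero) |>.1 (le_antisymm hd2 (sq_nonneg _))
    obtain ⟨x, hx⟩ := exists_between hab
    have hx' := hsub x hx
    have hxp : 0 < x := h0.trans hx'.1
    have dphi := (((hfd x).hasDerivAt.const_mul (Real.sqrt 3)).sub
      ((hasDerivAt_id x).mul (hfd' x).hasDerivAt))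
    have hev : (fun y => Real.sqrt 3 * f y) - (id * deriv f) =ᶠ[nhds x] fun _ => (0:ℝ) := by
      filter_upwards [Ioo_mem_nhds hx.1 hx.2] with y hy using hphi y hy
    have hd0 := dphi.deriv
    rw [hev.deriv_eq, deriv_const] at hd0
    simp only [id] at hd0
    have hAx := hA x ⟨hx'.1.le, hx'.2.le⟩
    have hfx : 0 < x * deriv f x := by
      have := mul_pos (Real.sqrt_pos.2 (show (0:ℝ) < 3 by norm_num)) (hpos x hx')
      linarith [hphi x hx]
    have hfx' : 0 < deriv f x := (pos_iff_pos_of_mul_pos hfx).1 hxp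
    nlinarith
  refine ⟨hstrict, fun c => ?_⟩
  obtain ⟨a, ha, ha'⟩ := ((hT1.eventually (eventually_le_atBot c)).and (Ioo_mem_nhdsGT h1)).exists
  obtain ⟨b, hb, hb'⟩ := ((hT2.eventually (eventually_ge_atTop c)).and (Ioo_mem_nhdsLT h1)).exists
  obtain ⟨w, hw, hwc⟩ := isPreconnected_Ioo.intermediate_value ha' hb' hhc
    (show c ∈ Icc (h a) (h b) from ⟨ha, hb⟩)
  have hz : ∀ u, (3 * f u + u * deriv f u) / (2 * Real.sqrt (u * f u)) = - h u := by
    intro u; simp only [hh]; rw [neg_div, neg_neg]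
  refine ⟨w, hw, hwc, fun v hv hvc => hstrict.injOn hv hw (Eq.trans hvc hwc.symm), ?_, ?_⟩
  · intro u hu
    have := hstrict ⟨hu.1, hu.2.trans hw.2⟩ hw hu.2
    rw [hz]; linarith
  · intro u hu
    have := hstrict hw ⟨hw.1.trans hu.1, hu.2⟩ hu.1
    rw [hz]; linarith
end

section
/- Let f ∈ C²([0,1]) with f(0) = f(1) = 0, let f_min = min_{u∈[0,1]} f(u) ≤ 0, and let c > 0. Suppose P : [0, ū] → [0,∞) (with 0 < ū ≤ 1) is continuous, strictly positive and C¹ on (0, ū), satisfies P(0) = 0, and solves P'(U) = −c − f(U)/P(U) for all U ∈ (0, ū). Then P(U) ≤ −f_min / c for every U ∈ [0, ū]. -/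
open Set Filter

/-- a priori bound on trajectories of `dP/dU = -c - f(U)/P` emanating
from the origin: `P(U) ≤ -f_min / c` on `[0, ū]`. -/
theorem trajectory_upper_bound
    (f : ℝ → ℝ) (hf : ContDiff ℝ 2 f) (hf0 : f 0 = 0) (hf1 : f 1 = 0)
    (fmin : ℝ) (hfmin : IsLeast (f '' Icc (0:ℝ) 1) fmin)
    (c : ℝ) (hc : 0 < c)
    (ubar : ℝ) (hubar0 : 0 < ubar) (hubar1 : ubar ≤ 1)
    (P : ℝ → ℝ) (hPcont : ContinuousOn P (Icc 0 ubar)) (hP0 : P 0 = 0)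
    (hPnonneg : ∀ u ∈ Icc (0:ℝ) ubar, 0 ≤ P u)
    (hPpos : ∀ u ∈ Ioo (0:ℝ) ubar, 0 < P u)
    (hPode : ∀ u ∈ Ioo (0:ℝ) ubar, HasDerivAt P (-c - f u / P u) u) :
    ∀ u ∈ Icc (0:ℝ) ubar, P u ≤ -fmin / c := by
  intro u hu
  have hfm0 : fmin ≤ 0 := hfmin.2 ⟨0, ⟨le_refl _, zero_le_one⟩, hf0⟩
  have hM : 0 ≤ -fmin / c := div_nonneg (by linarith) hc.le
  by_contra! hcon
  have hcu : ContinuousOn P (Icc 0 u) := hPcont.mono (Icc_subset_Icc_right hu.2)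
  have hclosed : IsClosed (Icc (0:ℝ) u ∩ P ⁻¹' Iic (-fmin / c)) :=
    hcu.preimage_isClosed_of_isClosed isClosed_Icc isClosed_Iic
  have hcomp : IsCompact (Icc (0:ℝ) u ∩ P ⁻¹' Iic (-fmin / c)) :=
    isCompact_Icc.of_isClosed_subset hclosed inter_subset_left
  obtain ⟨s, ⟨hs, hsP⟩, hmax⟩ := hcomp.exists_isGreatest
    ⟨0, ⟨le_refl _, hu.1⟩, by simpa [hP0] using hM⟩
  have hsP' : P s ≤ -fmin / c := hsP
  have hanti : AntitoneOn P (Icc s u) := by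
    apply antitoneOn_of_deriv_nonpos (convex_Icc s u)
      (hcu.mono (Icc_subset_Icc_left hs.1))
    · intro x hx
      rw [interior_Icc] at hx
      exact (hPode x ⟨hs.1.trans_lt hx.1,
        hx.2.trans_le hu.2⟩).differentiableAt.differentiableWithinAt
    · intro x hx
      rw [interior_Icc] at hx
      have hx' : x ∈ Ioo (0:ℝ) ubar := ⟨hs.1.trans_lt hx.1, hx.2.trans_le hu.2⟩
      rw [(hPode x hx').deriv]
      have hgt : -fmin / c < P x := by
        by_contra! h
        exact absurd (hmax ⟨⟨hx'.1.le, hx.2.le⟩, h⟩) (not_le.mpr hx.1)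
      have hfx : fmin ≤ f x := hfmin.2 ⟨x, ⟨hx'.1.le, hx'.2.le.trans hubar1⟩, rfl⟩
      have hp := hPpos x hx'
      rw [div_lt_iff₀ hc] at hgt
      have : -c ≤ f x / P x := by
        rw [le_div_iff₀ hp]
        nlinarith
      linarith
  have := hanti ⟨le_refl _, hs.2⟩ ⟨hs.2, le_refl _⟩ hs.2
  linarith
end
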